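/- arXiv:1207.0232 — 5 statements merged into one kernel-verified Lean document; each statement's English description precedes it below -/
import Mathlib

section
/- M(x) = x^{1/√e + o(1)} as x → ∞; that is, log M(x)/log x → 1/√e as x → ∞. -/
open Filter Real MeasureTheory
open scoped Classical

/-- The largest prime factor of `n`, with the convention `P 1 = 1`. -/
noncomputable def largestPrimeFactor (n : ℕ) : ℕ :=
  if n ≤ 1 then 1 else n.primeFactors.sup id

/-- `medianLPF x` is the median largest prime factor of the integers in `[1, x]`:
the `⌈N/2⌉`-th smallest element of the multiset `{P(n) : 1 ≤ n ≤ N}` where `N = ⌊x⌋`. -/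
noncomputable def medianLPF (x : ℝ) : ℕ :=
  (((Finset.Icc 1 ⌊x⌋₊).val.map largestPrimeFactor).sort (· ≤ ·)).getD
    ((⌊x⌋₊ + 1) / 2 - 1) 0

/-- `lif x = ∫₂^x {x/t}/log t dt`. -/
noncomputable def lif (x : ℝ) : ℝ := ∫ t in (2:ℝ)..x, Int.fract (x / t) / Real.log t

/-!
An integer `n ≤ x` has at most one prime factor above `x ^ α` once `1 / 2 ≤ α`. Hence the proportion
of integers `n ≤ x` with a prime factor above `x ^ α` is the sum of `1 / p` over the primes
`x ^ α < p ≤ x`, up to an error `O(π(x) / x)`, and by Mertens' second theorem it tends to `-log α`.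
This limit crosses `1 / 2` exactly at `α = exp (-1 / 2) = 1 / √e`.
-/

lemma primeFactors_factorial (N : ℕ) : N.factorial.primeFactors = N.primesLE := by
  ext p
  simp only [Nat.mem_primeFactors, Nat.mem_primesLE]
  exact ⟨fun ⟨hp, hdvd, _⟩ ↦ ⟨hp.dvd_factorial.1 hdvd, hp⟩,
    fun ⟨hpN, hp⟩ ↦ ⟨hp, hp.dvd_factorial.2 hpN, N.factorial_ne_zero⟩⟩

lemma log_factorial_eq_sum_primesLE (N : ℕ) :
    log N.factorial = ∑ p ∈ N.primesLE, (N.factorial.factorization p : ℝ) * log p := by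
  rw [log_nat_eq_sum_factorization, Finsupp.sum, Nat.support_factorization,
    primeFactors_factorial]

lemma log_factorial_le_mul_log (N : ℕ) : log N.factorial ≤ N * log N := by
  rw [← log_pow]
  exact log_le_log (by positivity) (mod_cast N.factorial_le_pow)

lemma mul_log_sub_self_le_log_factorial (N : ℕ) : N * log N - N ≤ log N.factorial := by
  rcases eq_or_ne N 0 with rfl | hN
  · simp
  have hstirling := Stirling.le_log_factorial_stirling hN
  have hlogN : 0 ≤ log N := log_natCast_nonneg N
  have hlogpi : 0 ≤ log (2 * π) := log_nonneg (by linarith [pi_gt_three])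
  linarith

lemma div_sub_one_lt_natCast_div (m n : ℕ) : (m : ℝ) / n - 1 < (m / n : ℕ) := by
  rw [← Nat.floor_div_eq_div (K := ℝ)]
  exact Nat.sub_one_lt_floor _

lemma div_le_factorization_factorial {p : ℕ} (hp : p.Prime) (N : ℕ) :
    N / p ≤ N.factorial.factorization p := by
  calc N / p = N / p ^ 1 := by rw [pow_one]
    _ ≤ ∑ i ∈ Finset.Ico 1 (Nat.log p N + 2), N / p ^ i :=
      Finset.single_le_sum (f := fun i ↦ N / p ^ i) (fun _ _ ↦ Nat.zero_le _) (by simp)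
    _ = N.factorial.factorization p := (Nat.factorization_factorial hp (by lia)).symm

lemma factorization_factorial_le_div_sub_one {p : ℕ} (hp : p.Prime) (N : ℕ) :
    (N.factorial.factorization p : ℝ) ≤ N / (p - 1) :=
  calc (N.factorial.factorization p : ℝ) ≤ (N / (p - 1) : ℕ) :=
        mod_cast Nat.factorization_factorial_le_div_pred hp N
    _ ≤ N / (p - 1 : ℕ) := Nat.cast_div_le
    _ = N / (p - 1) := by rw [Nat.cast_pred hp.pos]

lemma sum_primesLE_log_div_le {N : ℕ} (hN : N ≠ 0) :
    ∑ p ∈ N.primesLE, log p / p ≤ log N + log 4 := by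
  have hN_pos : (0 : ℝ) < N := by positivity
  have htheta : ∑ p ∈ N.primesLE, log p ≤ log 4 * N := by
    rw [← Chebyshev.theta_eq_sum_primesLE_log]
    exact Chebyshev.theta_le_log4_mul_x N.cast_nonneg
  have hfactorial : N * ∑ p ∈ N.primesLE, log p / p - ∑ p ∈ N.primesLE, log p ≤ N * log N := by
    calc N * ∑ p ∈ N.primesLE, log p / p - ∑ p ∈ N.primesLE, log p
        = ∑ p ∈ N.primesLE, ((N : ℝ) / p - 1) * log p := by
          rw [Finset.mul_sum, ← Finset.sum_sub_distrib]
          exact Finset.sum_congr rfl fun p _ ↦ by ring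
      _ ≤ ∑ p ∈ N.primesLE, (N.factorial.factorization p : ℝ) * log p := by
          refine Finset.sum_le_sum fun p hp ↦ ?_
          have hdiv : ((N / p : ℕ) : ℝ) ≤ N.factorial.factorization p :=
            mod_cast div_le_factorization_factorial (Nat.prime_of_mem_primesLE hp) N
          gcongr
          exact (div_sub_one_lt_natCast_div N p).le.trans hdiv
      _ = log N.factorial := (log_factorial_eq_sum_primesLE N).symm
      _ ≤ N * log N := log_factorial_le_mul_log N
  refine le_of_mul_le_mul_left ?_ hN_pos
  linarith

lemma summable_log_div_mul_sub_one : Summable fun n : ℕ ↦ log n / (n * (n - 1)) := by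
  have hmajorant : Summable fun n : ℕ ↦ 4 * (n : ℝ) ^ (-(3 / 2) : ℝ) :=
    (summable_nat_rpow.2 (by norm_num)).mul_left 4
  refine hmajorant.of_norm_bounded fun n ↦ ?_
  rcases lt_or_ge n 2 with hn | hn
  · interval_cases n <;> simp
  have hn' : (2 : ℝ) ≤ n := mod_cast hn
  have hlog : log n ≤ 2 * (n : ℝ) ^ (1 / 2 : ℝ) :=
    (log_le_rpow_div n.cast_nonneg one_half_pos).trans_eq (by ring)
  have hprod : (n : ℝ) ^ 2 / 2 ≤ n * (n - 1) := by nlinarith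
  rw [norm_of_nonneg (div_nonneg (log_natCast_nonneg n) (by nlinarith))]
  calc log n / (n * (n - 1)) ≤ 2 * (n : ℝ) ^ (1 / 2 : ℝ) / ((n : ℝ) ^ 2 / 2) := by gcongr
    _ = 4 * ((n : ℝ) ^ (1 / 2 : ℝ) / (n : ℝ) ^ (2 : ℝ)) := by rw [rpow_two]; ring
    _ = 4 * (n : ℝ) ^ (-(3 / 2) : ℝ) := by rw [← rpow_sub (by positivity)]; norm_num

lemma log_le_sum_primesLE_log_div {N : ℕ} (hN : N ≠ 0) :
    log N ≤ ∑ p ∈ N.primesLE, log p / p + 1 + ∑' n : ℕ, log n / (n * (n - 1)) := by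
  have hN_pos : (0 : ℝ) < N := by positivity
  have hnonneg (n : ℕ) : 0 ≤ log n / (n * ((n : ℝ) - 1)) := by
    rcases n.eq_zero_or_pos with rfl | hn
    · simp
    · have : (1 : ℝ) ≤ n := mod_cast hn
      exact div_nonneg (log_nonneg this) (by nlinarith)
  have hfactorial : N * log N - N ≤
      N * (∑ p ∈ N.primesLE, log p / p + ∑ p ∈ N.primesLE, log p / (p * (p - 1))) := by
    calc N * log N - N ≤ log N.factorial := mul_log_sub_self_le_log_factorial N
      _ = ∑ p ∈ N.primesLE, (N.factorial.factorization p : ℝ) * log p :=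
          log_factorial_eq_sum_primesLE N
      _ ≤ ∑ p ∈ N.primesLE, (N / (p - 1) : ℝ) * log p := by
          gcongr with p hp
          exact factorization_factorial_le_div_sub_one (Nat.prime_of_mem_primesLE hp) N
      _ = N * (∑ p ∈ N.primesLE, log p / p + ∑ p ∈ N.primesLE, log p / (p * (p - 1))) := by
          rw [← Finset.sum_add_distrib, Finset.mul_sum]
          refine Finset.sum_congr rfl fun p hp ↦ ?_
          have hp1 : (1 : ℝ) < p := mod_cast Nat.one_lt_of_mem_primesLE hp
          have : (p : ℝ) - 1 ≠ 0 := by linarith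
          field_simp
          ring
  have htail := summable_log_div_mul_sub_one.sum_le_tsum N.primesLE fun n _ ↦ hnonneg n
  refine le_of_mul_le_mul_left ?_ hN_pos
  nlinarith

lemma log_sub_log_two_le_log_floor {t : ℝ} (ht : 1 ≤ t) : log t - log 2 ≤ log ⌊t⌋₊ := by
  have hfloor : (1 : ℝ) ≤ ⌊t⌋₊ := mod_cast Nat.le_floor (by simpa using ht)
  rw [← log_div (by positivity) two_ne_zero]
  refine log_le_log (by positivity) ?_
  linarith [Nat.lt_floor_add_one t]

/-- Mertens' first theorem. -/
theorem exists_abs_sum_primesLE_log_div_sub_log_le :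
    ∃ C, ∀ t : ℝ, 1 ≤ t → |∑ p ∈ Nat.primesLE ⌊t⌋₊, log p / p - log t| ≤ C := by
  refine ⟨max (log 4) (1 + ∑' n : ℕ, log n / (n * ((n : ℝ) - 1)) + log 2), fun t ht ↦ ?_⟩
  have hfloor : ⌊t⌋₊ ≠ 0 := by simpa using ht
  have hlog : log ⌊t⌋₊ ≤ log t :=
    log_le_log (by positivity) (Nat.floor_le (by linarith))
  have hupper := sum_primesLE_log_div_le hfloor
  have hlower := log_le_sum_primesLE_log_div hfloor
  have hlog_two := log_sub_log_two_le_log_floor ht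
  rw [abs_sub_le_iff]
  exact ⟨le_max_of_le_left (by linarith), le_max_of_le_right (by linarith)⟩

section PartialSummation

variable {c : ℕ → ℝ} {f f' G g : ℝ → ℝ} {a b : ℝ}

-- Abel summation for the sum and integration by parts for the integral have the same shape, so in
-- their difference only the error `∑ k ≤ t, c k - G t` survives.
lemma sum_mul_sub_integral_mul_eq (ha : 0 ≤ a) (hab : a ≤ b)
    (hf : ∀ t ∈ Set.Icc a b, HasDerivAt f (f' t) t) (hf' : ContinuousOn f' (Set.Icc a b))
    (hG : ∀ t ∈ Set.Icc a b, HasDerivAt G (g t) t) (hg : ContinuousOn g (Set.Icc a b)) :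
    ∑ k ∈ Finset.Ioc ⌊a⌋₊ ⌊b⌋₊, f k * c k - ∫ t in a..b, f t * g t =
      f b * (∑ k ∈ Finset.Icc 0 ⌊b⌋₊, c k - G b) - f a * (∑ k ∈ Finset.Icc 0 ⌊a⌋₊, c k - G a) -
        ∫ t in a..b, f' t * (∑ k ∈ Finset.Icc 0 ⌊t⌋₊, c k - G t) := by
  have huIcc : Set.uIcc a b = Set.Icc a b := Set.uIcc_of_le hab
  have hf'_int : IntervalIntegrable f' volume a b :=
    ContinuousOn.intervalIntegrable (huIcc ▸ hf')
  have hsum_int :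
      IntervalIntegrable (fun t ↦ f' t * ∑ k ∈ Finset.Icc 0 ⌊t⌋₊, c k) volume a b :=
    (intervalIntegrable_iff_integrableOn_Icc_of_le hab).2
      (integrableOn_mul_sum_Icc c ha hf'.integrableOn_Icc)
  have hG_int : IntervalIntegrable (fun t ↦ f' t * G t) volume a b :=
    hf'_int.mul_continuousOn (huIcc ▸ HasDerivAt.continuousOn hG)
  have habel : ∑ k ∈ Finset.Ioc ⌊a⌋₊ ⌊b⌋₊, f k * c k =
      f b * ∑ k ∈ Finset.Icc 0 ⌊b⌋₊, c k - f a * ∑ k ∈ Finset.Icc 0 ⌊a⌋₊, c k -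
        ∫ t in a..b, f' t * ∑ k ∈ Finset.Icc 0 ⌊t⌋₊, c k := by
    have hderiv : Set.EqOn f' (deriv f) (Set.Icc a b) := fun t ht ↦ (hf t ht).deriv.symm
    rw [sum_mul_eq_sub_sub_integral_mul c ha hab (fun t ht ↦ (hf t ht).differentiableAt)
      (hf'.integrableOn_Icc.congr_fun hderiv measurableSet_Icc),
      ← intervalIntegral.integral_of_le hab]
    congr 1
    exact intervalIntegral.integral_congr fun t ht ↦ by simp only [hderiv (huIcc ▸ ht)]
  have hparts : ∫ t in a..b, f t * g t = f b * G b - f a * G a - ∫ t in a..b, f' t * G t :=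
    intervalIntegral.integral_mul_deriv_eq_deriv_mul (huIcc ▸ hf) (huIcc ▸ hG) hf'_int
      (ContinuousOn.intervalIntegrable (huIcc ▸ hg))
  rw [habel, hparts]
  simp only [mul_sub]
  rw [intervalIntegral.integral_sub hsum_int hG_int]
  ring

theorem abs_sum_mul_sub_integral_mul_le {C : ℝ} (ha : 0 ≤ a) (hab : a ≤ b)
    (hf : ∀ t ∈ Set.Icc a b, HasDerivAt f (f' t) t) (hf' : ContinuousOn f' (Set.Icc a b))
    (hf'_nonpos : ∀ t ∈ Set.Icc a b, f' t ≤ 0) (hfb : 0 ≤ f b)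
    (hG : ∀ t ∈ Set.Icc a b, HasDerivAt G (g t) t) (hg : ContinuousOn g (Set.Icc a b))
    (hC : ∀ t ∈ Set.Icc a b, |∑ k ∈ Finset.Icc 0 ⌊t⌋₊, c k - G t| ≤ C) :
    |∑ k ∈ Finset.Ioc ⌊a⌋₊ ⌊b⌋₊, f k * c k - ∫ t in a..b, f t * g t| ≤ 2 * C * f a := by
  set E : ℝ → ℝ := fun t ↦ ∑ k ∈ Finset.Icc 0 ⌊t⌋₊, c k - G t
  have hf'_int : IntervalIntegrable f' volume a b :=
    ContinuousOn.intervalIntegrable (Set.uIcc_of_le hab ▸ hf')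
  have hf'_integral : ∫ t in a..b, f' t = f b - f a :=
    intervalIntegral.integral_eq_sub_of_hasDerivAt (Set.uIcc_of_le hab ▸ hf) hf'_int
  have hfba : f b ≤ f a := by
    have : 0 ≤ ∫ t in a..b, -f' t :=
      intervalIntegral.integral_nonneg hab fun t ht ↦ neg_nonneg.2 (hf'_nonpos t ht)
    rw [intervalIntegral.integral_neg, hf'_integral] at this
    linarith
  have hintegral : |∫ t in a..b, f' t * E t| ≤ (f a - f b) * C := by
    calc |∫ t in a..b, f' t * E t| ≤ ∫ t in a..b, -f' t * C := by
          rw [← norm_eq_abs]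
          refine intervalIntegral.norm_integral_le_of_norm_le (g := fun t ↦ -f' t * C) hab
            (.of_forall fun t ht ↦ ?_) (hf'_int.neg.mul_const C)
          have ht' := Set.Ioc_subset_Icc_self ht
          rw [norm_mul, norm_of_nonpos (hf'_nonpos t ht')]
          exact mul_le_mul_of_nonneg_left (hC t ht') (neg_nonneg.2 (hf'_nonpos t ht'))
      _ = (f a - f b) * C := by
          rw [intervalIntegral.integral_mul_const, intervalIntegral.integral_neg, hf'_integral,
            neg_sub]
  have hE {t : ℝ} (ht : t ∈ Set.Icc a b) (hft : 0 ≤ f t) : |f t * E t| ≤ f t * C := by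
    rw [abs_mul, abs_of_nonneg hft]
    exact mul_le_mul_of_nonneg_left (hC t ht) hft
  rw [sum_mul_sub_integral_mul_eq ha hab hf hf' hG hg]
  calc |f b * E b - f a * E a - ∫ t in a..b, f' t * E t|
      ≤ |f b * E b| + |f a * E a| + |∫ t in a..b, f' t * E t| :=
        (abs_sub _ _).trans (add_le_add_left (abs_sub _ _) _)
    _ ≤ f b * C + f a * C + (f a - f b) * C := by
        gcongr
        · exact hE (Set.right_mem_Icc.2 hab) hfb
        · exact hE (Set.left_mem_Icc.2 hab) (hfb.trans hfba)
    _ = 2 * C * f a := by ring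

end PartialSummation

lemma hasDerivAt_one_div_log {t : ℝ} (ht : 1 < t) :
    HasDerivAt (fun t ↦ 1 / log t) (-(1 / (t * log t ^ 2))) t := by
  have hlog : log t ≠ 0 := (log_pos ht).ne'
  have ht0 : t ≠ 0 := by positivity
  simp only [one_div]
  exact ((hasDerivAt_log ht0).inv hlog).congr_deriv (by field_simp)

lemma integral_one_div_log_mul_inv {a b : ℝ} (ha : 1 < a) (hab : a ≤ b) :
    ∫ t in a..b, 1 / log t * t⁻¹ = log (log b) - log (log a) := by
  have hlog {t : ℝ} (ht : t ∈ Set.uIcc a b) : t ≠ 0 ∧ log t ≠ 0 := by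
    rw [Set.uIcc_of_le hab] at ht
    have ht1 : 1 < t := ha.trans_le ht.1
    exact ⟨by positivity, (log_pos ht1).ne'⟩
  refine intervalIntegral.integral_eq_sub_of_hasDerivAt (f := fun t ↦ log (log t))
    (fun t ht ↦ ?_) ?_
  · obtain ⟨ht0, hlog⟩ := hlog ht
    exact ((hasDerivAt_log ht0).log hlog).congr_deriv (by field_simp)
  · refine ContinuousOn.intervalIntegrable fun t ht ↦ ?_
    obtain ⟨ht0, hlog⟩ := hlog ht
    fun_prop (disch := assumption)

/-- Mertens' second theorem. -/
theorem exists_abs_sum_one_div_prime_sub_log_log_le :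
    ∃ C, ∀ a b : ℝ, 1 < a → a ≤ b →
      |∑ p ∈ Finset.Ioc ⌊a⌋₊ ⌊b⌋₊ with p.Prime, (1 : ℝ) / p - (log (log b) - log (log a))|
        ≤ C / log a := by
  obtain ⟨C, hC⟩ := exists_abs_sum_primesLE_log_div_sub_log_le
  refine ⟨2 * C, fun a b ha hab ↦ ?_⟩
  have one_lt {t : ℝ} (ht : t ∈ Set.Icc a b) : 1 < t := ha.trans_le ht.1
  have hsum : ∑ p ∈ Finset.Ioc ⌊a⌋₊ ⌊b⌋₊ with p.Prime, (1 : ℝ) / p =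
      ∑ k ∈ Finset.Ioc ⌊a⌋₊ ⌊b⌋₊, 1 / log k * (if k.Prime then log k / k else 0) := by
    rw [Finset.sum_filter]
    refine Finset.sum_congr rfl fun k _ ↦ ?_
    split_ifs with hk
    · have : log k ≠ 0 := (log_pos (mod_cast hk.one_lt)).ne'
      field_simp
    · rw [mul_zero]
  rw [hsum, ← integral_one_div_log_mul_inv ha hab, ← mul_one_div]
  refine abs_sum_mul_sub_integral_mul_le (by linarith) hab
    (fun t ht ↦ hasDerivAt_one_div_log (one_lt ht)) (fun t ht ↦ ?_) (fun t ht ↦ ?_)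
    (one_div_nonneg.2 (log_nonneg (ha.le.trans hab)))
    (fun t ht ↦ hasDerivAt_log (by linarith [one_lt ht])) (fun t ht ↦ ?_) (fun t ht ↦ ?_)
  · have ht0 : t ≠ 0 := by linarith [one_lt ht]
    have hlog := log_pos (one_lt ht)
    have : t * log t ^ 2 ≠ 0 := by positivity
    fun_prop (disch := assumption)
  · have := one_lt ht
    exact neg_nonpos.2 (by positivity)
  · have ht0 : t ≠ 0 := by linarith [one_lt ht]
    fun_prop (disch := assumption)
  · rw [← Finset.sum_filter, ← Nat.primesLE_eq_filter_Icc_zero]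
    exact hC t (one_lt ht).le

lemma log_log_sub_log_log_rpow {x α : ℝ} (hx : 1 < x) (hα : 0 < α) :
    log (log x) - log (log (x ^ α)) = -log α := by
  rw [log_rpow (by positivity), log_mul hα.ne' (log_pos hx).ne']
  ring

theorem tendsto_sum_one_div_prime_Ioc_rpow {α : ℝ} (hα : 0 < α) (hα1 : α ≤ 1) :
    Tendsto (fun x : ℝ ↦ ∑ p ∈ Finset.Ioc ⌊x ^ α⌋₊ ⌊x⌋₊ with p.Prime, (1 : ℝ) / p) atTop
      (nhds (-log α)) := by
  obtain ⟨C, hC⟩ := exists_abs_sum_one_div_prime_sub_log_log_le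
  have herror : Tendsto (fun x : ℝ ↦ C / log (x ^ α)) atTop (nhds 0) :=
    (tendsto_log_atTop.comp (tendsto_rpow_atTop hα)).const_div_atTop C
  rw [tendsto_iff_dist_tendsto_zero]
  refine squeeze_zero' (.of_forall fun _ ↦ dist_nonneg) ?_ herror
  filter_upwards [eventually_gt_atTop 1] with x hx
  rw [dist_eq, ← log_log_sub_log_log_rpow hx hα]
  exact hC _ _ (one_lt_rpow hx hα) (rpow_le_self_of_one_le hx.le hα1)

lemma primesBelow_succ_sdiff_primesBelow_succ (N y : ℕ) :
    (N + 1).primesBelow \ (y + 1).primesBelow = {p ∈ Finset.Ioc y N | p.Prime} := by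
  ext p
  simp only [Finset.mem_sdiff, Nat.mem_primesBelow, Finset.mem_filter, Finset.mem_Ioc]
  grind

-- Two distinct primes above `y` cannot both divide a number below `(y + 1) ^ 2`, so the sets of
-- multiples of these primes are disjoint.
theorem card_roughNumbersUpTo_succ_eq_sum {N y : ℕ} (hN : N < (y + 1) ^ 2) :
    (N.roughNumbersUpTo (y + 1)).card = ∑ p ∈ Finset.Ioc y N with p.Prime, N / p := by
  rw [Nat.roughNumbersUpTo_eq_biUnion, primesBelow_succ_sdiff_primesBelow_succ,
    Finset.card_biUnion]
  · exact Finset.sum_congr rfl fun p _ ↦ Nat.card_multiples' N p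
  · intro p hp q hq hpq
    simp only [Finset.mem_coe, Finset.mem_filter, Finset.mem_Ioc] at hp hq
    refine Finset.disjoint_left.2 fun n hnp hnq ↦ ?_
    simp only [Finset.mem_filter, Finset.mem_range] at hnp hnq
    have hdvd : p * q ∣ n :=
      ((Nat.coprime_primes hp.2 hq.2).2 hpq).mul_dvd_of_dvd_of_dvd hnp.2.2 hnq.2.2
    have hle : p * q ≤ n := Nat.le_of_dvd (by lia) hdvd
    have hlt : (y + 1) * (y + 1) ≤ p * q := Nat.mul_le_mul hp.1.1 hq.1.1
    nlinarith

lemma abs_card_roughNumbersUpTo_sub_le {N y : ℕ} (hN : N < (y + 1) ^ 2) :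
    |((N.roughNumbersUpTo (y + 1)).card : ℝ)
      - N * ∑ p ∈ Finset.Ioc y N with p.Prime, (1 : ℝ) / p| ≤ N.primeCounting := by
  have hterm (p : ℕ) : |((N / p : ℕ) : ℝ) - N * (1 / p)| ≤ 1 := by
    rw [mul_one_div, abs_sub_le_iff]
    have hle : ((N / p : ℕ) : ℝ) ≤ N / p := Nat.cast_div_le
    constructor <;> linarith [div_sub_one_lt_natCast_div N p]
  have hsubset : {p ∈ Finset.Ioc y N | p.Prime} ⊆ N.primesLE := fun p hp ↦ by
    simp only [Finset.mem_filter, Finset.mem_Ioc] at hp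
    exact Nat.mem_primesLE.2 ⟨hp.1.2, hp.2⟩
  rw [card_roughNumbersUpTo_succ_eq_sum hN, Nat.cast_sum, Finset.mul_sum,
    ← Finset.sum_sub_distrib, ← Nat.primesLE_card_eq_primeCounting]
  calc |∑ p ∈ Finset.Ioc y N with p.Prime, (((N / p : ℕ) : ℝ) - N * (1 / p))|
      ≤ ∑ p ∈ Finset.Ioc y N with p.Prime, |((N / p : ℕ) : ℝ) - N * (1 / p)| :=
        Finset.abs_sum_le_sum_abs _ _
    _ ≤ ∑ p ∈ Finset.Ioc y N with p.Prime, (1 : ℝ) := Finset.sum_le_sum fun p _ ↦ hterm p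
    _ = ({p ∈ Finset.Ioc y N | p.Prime}.card : ℝ) := by rw [Finset.cast_card]
    _ ≤ N.primesLE.card := mod_cast Finset.card_le_card hsubset

lemma tendsto_primeCounting_div_self_atTop :
    Tendsto (fun N : ℕ ↦ (N.primeCounting : ℝ) / N) atTop (nhds 0) := by
  have hbound : Tendsto (fun N : ℕ ↦ (log 4 + 1) / log N) atTop (nhds 0) :=
    (tendsto_log_atTop.comp tendsto_natCast_atTop_atTop).const_div_atTop _
  refine squeeze_zero' (.of_forall fun N ↦ by positivity) ?_ hbound
  filter_upwards [tendsto_natCast_atTop_atTop.eventually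
    (Chebyshev.eventually_primeCounting_le one_pos), eventually_gt_atTop 0] with N hpi hN
  rw [Nat.floor_natCast] at hpi
  rw [div_le_iff₀ (by positivity)]
  exact hpi.trans_eq (by ring)

lemma floor_lt_floor_rpow_add_one_sq {x α : ℝ} (hx : 1 ≤ x) (hα : 1 / 2 ≤ α) :
    ⌊x⌋₊ < (⌊x ^ α⌋₊ + 1) ^ 2 := by
  have hx0 : 0 ≤ x := by linarith
  have hlt : x < ((⌊x ^ α⌋₊ + 1 : ℕ) : ℝ) ^ 2 :=
    calc x = (x ^ (1 / 2 : ℝ)) ^ 2 := by rw [← sqrt_eq_rpow, sq_sqrt hx0]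
      _ ≤ (x ^ α) ^ 2 := by gcongr
      _ < ((⌊x ^ α⌋₊ + 1 : ℕ) : ℝ) ^ 2 := by
        gcongr
        exact mod_cast Nat.lt_floor_add_one (x ^ α)
  exact (Nat.floor_lt hx0).2 (mod_cast hlt)

theorem tendsto_card_roughNumbersUpTo_rpow_div {α : ℝ} (hα : 1 / 2 ≤ α) (hα1 : α ≤ 1) :
    Tendsto (fun x : ℝ ↦ ((⌊x⌋₊.roughNumbersUpTo (⌊x ^ α⌋₊ + 1)).card : ℝ) / ⌊x⌋₊) atTop
      (nhds (-log α)) := by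
  have hsum := tendsto_sum_one_div_prime_Ioc_rpow (by linarith) hα1
  have hpi := tendsto_primeCounting_div_self_atTop.comp (tendsto_nat_floor_atTop (α := ℝ))
  refine hsum.congr_dist (squeeze_zero' (.of_forall fun _ ↦ dist_nonneg) ?_ hpi)
  filter_upwards [eventually_ge_atTop 1] with x hx
  have hfloor : (0 : ℝ) < ⌊x⌋₊ := mod_cast Nat.floor_pos.2 hx
  rw [dist_comm, dist_eq, Function.comp_apply, le_div_iff₀ hfloor, ← abs_of_pos hfloor, ← abs_mul,
    abs_of_pos hfloor, sub_mul, div_mul_cancel₀ _ hfloor.ne', mul_comm (∑ _ ∈ _, _)]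
  exact abs_card_roughNumbersUpTo_sub_le (floor_lt_floor_rpow_add_one_sq hx hα)

lemma getElem_le_iff_lt_countP_of_sortedLE {α : Type*} [LinearOrder α] {l : List α}
    (hl : l.SortedLE) {k : ℕ} (hk : k < l.length) (y : α) :
    l[k] ≤ y ↔ k < l.countP (· ≤ y) := by
  induction l generalizing k with
  | nil => simp at hk
  | cons a l ih =>
    by_cases ha : a ≤ y
    · cases k with
      | zero => simp [ha]
      | succ k => simpa [ha] using ih hl.pairwise.of_cons.sortedLE (by simpa using hk)
    · have hgt : ∀ b ∈ a :: l, ¬ b ≤ y := fun b hb hby ↦ ha (by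
        rcases List.mem_cons.1 hb with rfl | hb
        · exact hby
        · exact (List.rel_of_pairwise_cons hl.pairwise hb).trans hby)
      have hcount : (a :: l).countP (· ≤ y) = 0 :=
        List.countP_eq_zero.2 fun b hb ↦ by simpa using hgt b hb
      rw [hcount]
      exact iff_of_false (hgt _ (List.getElem_mem hk)) (Nat.not_lt_zero k)

lemma largestPrimeFactor_le_iff_mem_smoothNumbers {n y : ℕ} (hn : n ≠ 0) (hy : y ≠ 0) :
    largestPrimeFactor n ≤ y ↔ n ∈ Nat.smoothNumbers (y + 1) := by
  rw [largestPrimeFactor, Nat.mem_smoothNumbers']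
  split_ifs with hn1
  · obtain rfl : n = 1 := by lia
    have hy1 : 1 ≤ y := by lia
    simpa [hy1] using fun p hp hp1 ↦ absurd hp1 hp.ne_one
  · simp only [Finset.sup_le_iff, Nat.mem_primeFactors, id, Nat.lt_succ_iff]
    exact ⟨fun h p hp hdvd ↦ h p ⟨hp, hdvd, hn⟩, fun h p ⟨hp, hdvd, _⟩ ↦ h p hp hdvd⟩

lemma filter_largestPrimeFactor_le_eq_smoothNumbersUpTo (N : ℕ) {y : ℕ} (hy : y ≠ 0) :
    {n ∈ Finset.Icc 1 N | largestPrimeFactor n ≤ y} = N.smoothNumbersUpTo (y + 1) := by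
  ext n
  rw [Finset.mem_filter, Finset.mem_Icc, Nat.mem_smoothNumbersUpTo]
  constructor
  · rintro ⟨⟨hn, hnN⟩, hle⟩
    exact ⟨hnN, (largestPrimeFactor_le_iff_mem_smoothNumbers (by lia) hy).1 hle⟩
  · rintro ⟨hnN, hsmooth⟩
    have hn := Nat.ne_zero_of_mem_smoothNumbers hsmooth
    exact ⟨⟨by lia, hnN⟩, (largestPrimeFactor_le_iff_mem_smoothNumbers hn hy).2 hsmooth⟩

theorem medianLPF_le_iff {x : ℝ} (hx : 1 ≤ x) {y : ℕ} (hy : y ≠ 0) :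
    medianLPF x ≤ y ↔ 2 * (⌊x⌋₊.roughNumbersUpTo (y + 1)).card ≤ ⌊x⌋₊ := by
  have hfloor : 0 < ⌊x⌋₊ := Nat.floor_pos.2 hx
  have hcount : (((Finset.Icc 1 ⌊x⌋₊).val.map largestPrimeFactor).sort (· ≤ ·)).countP (· ≤ y)
      = (⌊x⌋₊.smoothNumbersUpTo (y + 1)).card := by
    rw [← Multiset.coe_countP, Multiset.sort_eq, Multiset.countP_map,
      ← filter_largestPrimeFactor_le_eq_smoothNumbersUpTo _ hy]
    rfl
  have hindex : (⌊x⌋₊ + 1) / 2 - 1 <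
      (((Finset.Icc 1 ⌊x⌋₊).val.map largestPrimeFactor).sort (· ≤ ·)).length := by
    simp only [Multiset.length_sort, Multiset.card_map, Finset.card_val, Nat.card_Icc]
    lia
  rw [medianLPF, List.getD_eq_getElem _ _ hindex, getElem_le_iff_lt_countP_of_sortedLE
    (Multiset.pairwise_sort _ _).sortedLE hindex, hcount]
  have := Nat.smoothNumbersUpTo_card_add_roughNumbersUpTo_card ⌊x⌋₊ (y + 1)
  lia

lemma medianLPF_le_rpow_iff {x α : ℝ} (hx : 1 ≤ x) (hα : 0 ≤ α) :
    medianLPF x ≤ x ^ α ↔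
      ((⌊x⌋₊.roughNumbersUpTo (⌊x ^ α⌋₊ + 1)).card : ℝ) / ⌊x⌋₊ ≤ 1 / 2 := by
  have hfloor : (0 : ℝ) < ⌊x⌋₊ := mod_cast Nat.floor_pos.2 hx
  have hrpow : ⌊x ^ α⌋₊ ≠ 0 := (Nat.floor_pos.2 (one_le_rpow hx hα)).ne'
  rw [← Nat.le_floor_iff (by positivity), medianLPF_le_iff hx hrpow, div_le_iff₀ hfloor,
    one_div_mul_eq_div, le_div_iff₀' two_pos]
  exact_mod_cast Iff.rfl

theorem eventually_rpow_lt_medianLPF {α : ℝ} (hα : 1 / 2 ≤ α) (hα' : α < exp (-1 / 2)) :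
    ∀ᶠ x : ℝ in atTop, x ^ α < medianLPF x := by
  have hα0 : 0 < α := by linarith
  have hα1 : α ≤ 1 := (hα'.trans_le (exp_le_one_iff.2 (by norm_num))).le
  have hlog : 1 / 2 < -log α := by linarith [(log_lt_iff_lt_exp hα0).2 hα']
  filter_upwards [eventually_ge_atTop 1,
    (tendsto_card_roughNumbersUpTo_rpow_div hα hα1).eventually_const_lt hlog] with x hx1 hx
  exact not_le.1 (mt (medianLPF_le_rpow_iff hx1 hα0.le).1 hx.not_ge)

theorem eventually_medianLPF_le_rpow {α : ℝ} (hα : exp (-1 / 2) < α) (hα1 : α ≤ 1) :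
    ∀ᶠ x : ℝ in atTop, medianLPF x ≤ x ^ α := by
  have hα0 : 0 < α := (exp_pos _).trans hα
  have hhalf : 1 / 2 ≤ α := by linarith [add_one_le_exp (-1 / 2 : ℝ)]
  have hlog : -log α < 1 / 2 := by linarith [(lt_log_iff_exp_lt hα0).2 hα]
  filter_upwards [eventually_ge_atTop 1,
    (tendsto_card_roughNumbersUpTo_rpow_div hhalf hα1).eventually_lt_const hlog] with x hx1 hx
  exact (medianLPF_le_rpow_iff hx1 hα0.le).2 hx.le

lemma tendsto_log_div_log_of_rpow_bounds {f : ℝ → ℝ} {L : ℝ}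
    (hlower : ∀ᶠ α in nhdsWithin L (Set.Iio L), ∀ᶠ x : ℝ in atTop, x ^ α ≤ f x)
    (hupper : ∀ᶠ α in nhdsWithin L (Set.Ioi L), ∀ᶠ x : ℝ in atTop, f x ≤ x ^ α) :
    Tendsto (fun x : ℝ ↦ log (f x) / log x) atTop (nhds L) := by
  have hpos : ∀ᶠ x : ℝ in atTop, 0 < f x := by
    obtain ⟨α, hα⟩ := hlower.exists
    filter_upwards [hα, eventually_gt_atTop 0] with x hx hx0
    exact (rpow_pos_of_pos hx0 α).trans_le hx
  rw [tendsto_order]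
  constructor
  · intro c hc
    obtain ⟨α, hα, hcα⟩ := (hlower.and (Ioo_mem_nhdsLT hc)).exists
    filter_upwards [hα, eventually_gt_atTop 1] with x hx hx1
    have hx0 : 0 < x := by positivity
    refine hcα.1.trans_le ?_
    rw [le_div_iff₀ (log_pos hx1), ← log_rpow hx0]
    exact log_le_log (by positivity) hx
  · intro c hc
    obtain ⟨α, hα, hcα⟩ := (hupper.and (Ioo_mem_nhdsGT hc)).exists
    filter_upwards [hα, hpos, eventually_gt_atTop 1] with x hx hfx hx1
    refine lt_of_le_of_lt ?_ hcα.2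
    rw [div_le_iff₀ (log_pos hx1), ← log_rpow (by positivity)]
    exact log_le_log hfx hx

theorem median_largest_prime_factor_exponent :
    Filter.Tendsto (fun x : ℝ => Real.log (medianLPF x) / Real.log x) atTop
      (nhds (1 / Real.sqrt (Real.exp 1))) := by
  have hlimit : 1 / √(exp 1) = exp (-1 / 2) := by
    rw [← exp_half, one_div, ← exp_neg, neg_div]
  have hhalf : 1 / 2 < exp (-1 / 2) := by
    linarith [add_one_lt_exp (x := (-1 / 2 : ℝ)) (by norm_num)]
  have hone : exp (-1 / 2) < 1 := exp_lt_one_iff.2 (by norm_num)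
  rw [hlimit]
  apply tendsto_log_div_log_of_rpow_bounds
  · filter_upwards [Ioo_mem_nhdsLT hhalf] with α hα
    exact (eventually_rpow_lt_medianLPF hα.1.le hα.2).mono fun _ h ↦ h.le
  · filter_upwards [Ioo_mem_nhdsGT hone] with α hα
    exact eventually_medianLPF_le_rpow hα.1 hα.2.le
end

section
/- Σ_{p ≤ x} {x/p} = (1-γ)·x/log x + O(x/(log x)²) as x → ∞, where the sum is over primes p ≤ x and γ is the Euler–Mascheroni constant. -/
open Filter Real
open scoped Classical

/-!
Multiply the sum by `log x = log p + (log x - log p)`. The second term contributes at most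
`π(x) log x - θ(x) = O(x / log x)`, so it suffices to show
`∑_{p ≤ x} log p {x/p} = (1 - γ) x + O(x / log x)` and to divide by `log x`.

On `[y, x]` the function `t ↦ {x/t}` has variation at most `2x/y`. Partial summation with
`y = x / log x` and `θ(x) = x + O(x / log² x)` therefore replaces the primes weighted by `log p` by
all integers at a cost of `O(x / log x)`. Dirichlet's hyperbola method then gives
`∑_{n ≤ x} {x/n} = (1 - γ) x + O(√x)`.

The estimate for `θ` comes without contour shifts. The 3-4-1 inequality makes `1/ζ`, hence every
derivative of `-ζ′/ζ - ζ`, grow more slowly than any power of `|t|` on `Re s ≥ 1`. Mellin inversion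
on `Re s = 1 + 1 / (1 + log x)` then bounds the Cesàro sums of `log^k n (Λ(n) - 1)` by `O(x²)`.
Removing the smoothing costs half of the `k` logarithms, and partial summation strips off the
weight, so any power of `log x` can be saved.
-/

/-! ### Growth of `ζ` and `ζ′` near the line `Re s = 1` -/

/-- `(s - 1) n⁻ˢ - ∫ u in n..n+1, (s - 1) u⁻ˢ`, the error made on `[n, n + 1]` when the Dirichlet
series of `(s - 1) ζ(s)` is replaced by an integral. Summing it over `n ≥ N` continues
`(s - 1) ζ(s)` to `0 < re s`. -/
noncomputable def zetaRemainder (n : ℕ) (s : ℂ) : ℂ :=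
  (s - 1) * (n : ℂ) ^ (-s) + ((n : ℂ) + 1) ^ (1 - s) - (n : ℂ) ^ (1 - s)

lemma hasDerivAt_ofReal_cpow_of_pos {u : ℝ} (hu : 0 < u) (w : ℂ) :
    HasDerivAt (fun u : ℝ ↦ (u : ℂ) ^ w) (w * (u : ℂ) ^ (w - 1)) u := by
  simpa using ((hasDerivAt_id (u : ℂ)).cpow_const (c := w)
    (Or.inl (by simpa using hu))).comp_ofReal

lemma norm_ofReal_cpow_sub_cpow_le {a b : ℝ} (ha : 0 < a) (hab : a ≤ b) {w : ℂ} (hw : w.re ≤ 1) :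
    ‖(b : ℂ) ^ w - (a : ℂ) ^ w‖ ≤ ‖w‖ * a ^ (w.re - 1) * (b - a) := by
  have deriv_le (u : ℝ) (hu : u ∈ Set.Icc a b) :
      ‖w * (u : ℂ) ^ (w - 1)‖ ≤ ‖w‖ * a ^ (w.re - 1) := by
    rw [norm_mul, Complex.norm_cpow_eq_rpow_re_of_pos (ha.trans_le hu.1), Complex.sub_re,
      Complex.one_re]
    gcongr ?_ * ?_
    exact Real.rpow_le_rpow_of_nonpos ha hu.1 (by linarith)
  have := (convex_Icc a b).norm_image_sub_le_of_norm_hasDerivWithin_le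
    (fun u hu ↦ (hasDerivAt_ofReal_cpow_of_pos (ha.trans_le hu.1) w).hasDerivWithinAt)
    deriv_le (Set.left_mem_Icc.2 hab) (Set.right_mem_Icc.2 hab)
  rwa [Real.norm_of_nonneg (sub_nonneg.2 hab)] at this

lemma norm_zetaRemainder_le {n : ℕ} (hn : 1 ≤ n) {s : ℂ} (hs : 0 < s.re) :
    ‖zetaRemainder n s‖ ≤ ‖s - 1‖ * ‖s‖ * (n : ℝ) ^ (-s.re - 1) := by
  have hn0 : (0 : ℝ) < n := by exact_mod_cast hn
  have hasDerivAt_primitive (u : ℝ) (hu : 0 < u) :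
      HasDerivAt (fun u : ℝ ↦ (u : ℂ) ^ (1 - s) + (s - 1) * (n : ℂ) ^ (-s) * u)
        (-(s - 1) * ((u : ℂ) ^ (-s) - (n : ℂ) ^ (-s))) u := by
    refine ((hasDerivAt_ofReal_cpow_of_pos hu (1 - s)).add
      ((hasDerivAt_id u).ofReal_comp.const_mul ((s - 1) * (n : ℂ) ^ (-s)))).congr_deriv ?_
    rw [show 1 - s - 1 = -s by ring]
    push_cast
    ring
  have deriv_le (u : ℝ) (hu : u ∈ Set.Icc (n : ℝ) (n + 1)) :
      ‖-(s - 1) * ((u : ℂ) ^ (-s) - (n : ℂ) ^ (-s))‖ ≤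
        ‖s - 1‖ * (‖s‖ * (n : ℝ) ^ (-s.re - 1)) := by
    rw [norm_mul, norm_neg]
    gcongr
    have := norm_ofReal_cpow_sub_cpow_le hn0 hu.1 (w := -s) (by rw [Complex.neg_re]; linarith)
    rw [norm_neg, Complex.neg_re, Complex.ofReal_natCast] at this
    exact this.trans (mul_le_of_le_one_right (by positivity) (by linarith [hu.2]))
  have := (convex_Icc (n : ℝ) (n + 1)).norm_image_sub_le_of_norm_hasDerivWithin_le
    (fun u hu ↦ (hasDerivAt_primitive u (hn0.trans_le hu.1)).hasDerivWithinAt) deriv_le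
    (Set.left_mem_Icc.2 (by linarith)) (Set.right_mem_Icc.2 (by linarith))
  rw [add_sub_cancel_left, norm_one, mul_one, ← mul_assoc] at this
  refine le_of_eq_of_le (congrArg norm ?_) this
  rw [zetaRemainder]
  push_cast
  ring

lemma differentiable_zetaRemainder {n : ℕ} (hn : 1 ≤ n) : Differentiable ℂ (zetaRemainder n) := by
  have hn0 : (n : ℂ) ≠ 0 := by exact_mod_cast (by lia : n ≠ 0)
  have hn1 : (n : ℂ) + 1 ≠ 0 := by exact_mod_cast n.succ_ne_zero
  intro s
  have hpow {c : ℂ} (hc : c ≠ 0) : DifferentiableAt ℂ (fun s ↦ c ^ (1 - s)) s :=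
    DifferentiableAt.const_cpow (by fun_prop) (Or.inl hc)
  exact (((differentiableAt_id.sub_const 1).mul
    (differentiableAt_id.neg.const_cpow (Or.inl hn0))).add (hpow hn1)).sub (hpow hn0)

lemma summable_zetaRemainder {N : ℕ} (hN : 1 ≤ N) {s : ℂ} (hs : 0 < s.re) :
    Summable fun n ↦ zetaRemainder (n + N) s :=
  .of_norm_bounded
    (((summable_nat_add_iff N).2 (Real.summable_nat_rpow.2 (by linarith))).mul_left _)
    fun n ↦ norm_zetaRemainder_le (by lia) hs

lemma sum_range_zetaRemainder (N : ℕ) (s : ℂ) (M : ℕ) :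
    ∑ n ∈ Finset.range M, zetaRemainder (n + N) s =
      (s - 1) * ∑ n ∈ Finset.range M, ((n + N : ℕ) : ℂ) ^ (-s) + ((M + N : ℕ) : ℂ) ^ (1 - s) -
        (N : ℂ) ^ (1 - s) := by
  induction M with
  | zero => simp
  | succ M ih =>
    rw [Finset.sum_range_succ, ih, Finset.sum_range_succ, zetaRemainder, Nat.add_right_comm M 1 N]
    push_cast
    ring

lemma hasSum_natCast_cpow_neg {s : ℂ} (hs : 1 < s.re) :
    HasSum (fun n : ℕ ↦ (n : ℂ) ^ (-s)) (riemannZeta s) := by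
  simp only [zeta_eq_tsum_one_div_nat_cpow hs, one_div, Complex.cpow_neg]
  simpa only [one_div] using (Complex.summable_one_div_nat_cpow.2 hs).hasSum

lemma tendsto_natCast_cpow_atTop_zero {w : ℂ} (hw : w.re < 0) :
    Tendsto (fun n : ℕ ↦ (n : ℂ) ^ w) atTop (nhds 0) := by
  rw [tendsto_zero_iff_norm_tendsto_zero]
  refine ((tendsto_rpow_neg_atTop (neg_pos.2 hw)).comp tendsto_natCast_atTop_atTop).congr' ?_
  filter_upwards [eventually_gt_atTop 0] with n hn
  rw [Function.comp_apply, neg_neg, Complex.norm_natCast_cpow_of_pos hn]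

lemma riemannZeta₁_eq_of_one_lt_re {N : ℕ} (hN : 1 ≤ N) {s : ℂ} (hs : 1 < s.re) :
    riemannZeta₁ s = (s - 1) * ∑ n ∈ Finset.range N, (n : ℂ) ^ (-s) + (N : ℂ) ^ (1 - s) +
      ∑' n, zetaRemainder (n + N) s := by
  have hs1 : s ≠ 1 := by rintro rfl; simp at hs
  have tail := ((hasSum_nat_add_iff' N).2 (hasSum_natCast_cpow_neg hs)).tendsto_sum_nat
  have boundary : Tendsto (fun M : ℕ ↦ ((M + N : ℕ) : ℂ) ^ (1 - s)) atTop (nhds 0) :=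
    (tendsto_natCast_cpow_atTop_zero (by simpa using hs)).comp (tendsto_add_atTop_nat N)
  have := tendsto_nhds_unique
    (summable_zetaRemainder hN (by linarith : 0 < s.re)).hasSum.tendsto_sum_nat
    ((((tail.const_mul (s - 1)).add boundary).sub_const ((N : ℂ) ^ (1 - s))).congr
      fun M ↦ (sum_range_zetaRemainder N s M).symm)
  rw [this, riemannZeta_eq_inv_sub_mul hs1]
  field [sub_ne_zero_of_ne hs1]

lemma isOpen_setOf_lt_re (a : ℝ) : IsOpen {s : ℂ | a < s.re} :=
  isOpen_lt continuous_const Complex.continuous_re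

lemma differentiableAt_tsum_zetaRemainder {N : ℕ} (hN : 1 ≤ N) {s : ℂ} (hs : 0 < s.re) :
    DifferentiableAt ℂ (fun s ↦ ∑' n, zetaRemainder (n + N) s) s := by
  set U : Set ℂ := {z | s.re / 2 < z.re} ∩ Metric.ball 0 (‖s‖ + 1)
  have hU : IsOpen U := (isOpen_setOf_lt_re _).inter Metric.isOpen_ball
  have hsU : s ∈ U := ⟨half_lt_self hs, by simp⟩
  refine DifferentiableOn.differentiableAt
    (Complex.differentiableOn_tsum_of_summable_norm
      (u := fun n : ℕ ↦ (‖s‖ + 2) * (‖s‖ + 1) * ((n + N : ℕ) : ℝ) ^ (-(s.re / 2) - 1))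
      ?_ (fun n ↦ (differentiable_zetaRemainder (by lia)).differentiableOn) hU ?_)
    (hU.mem_nhds hsU)
  · exact ((summable_nat_add_iff N).2 (Real.summable_nat_rpow.2 (by linarith))).mul_left _
  · rintro n z ⟨hzre : s.re / 2 < z.re, hz⟩
    rw [mem_ball_zero_iff] at hz
    refine (norm_zetaRemainder_le (by lia) (by linarith)).trans ?_
    have : ‖z - 1‖ ≤ ‖s‖ + 2 := (norm_sub_le _ _).trans (by rw [norm_one]; linarith)
    gcongr
    exact_mod_cast (by lia : 1 ≤ n + N)

lemma riemannZeta₁_eq_of_re_pos {N : ℕ} (hN : 1 ≤ N) {s : ℂ} (hs : 0 < s.re) :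
    riemannZeta₁ s = (s - 1) * ∑ n ∈ Finset.range N, (n : ℂ) ^ (-s) + (N : ℂ) ^ (1 - s) +
      ∑' n, zetaRemainder (n + N) s := by
  have hdiff : DifferentiableOn ℂ (fun s ↦ (s - 1) * ∑ n ∈ Finset.range N, (n : ℂ) ^ (-s) +
      (N : ℂ) ^ (1 - s) + ∑' n, zetaRemainder (n + N) s) {s | 0 < s.re} := by
    intro z (hz : 0 < z.re)
    have hz0 : -z ≠ 0 := neg_ne_zero.2 (by rintro rfl; simp at hz)
    have hN0 : (N : ℂ) ≠ 0 := by exact_mod_cast (by lia : N ≠ 0)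
    refine DifferentiableAt.differentiableWithinAt (.add (.add (.mul (by fun_prop)
      (.fun_sum fun n _ ↦ ?_)) (.const_cpow (by fun_prop) (.inl hN0)))
      (differentiableAt_tsum_zetaRemainder hN hz))
    exact .const_cpow (by fun_prop) (.inr hz0)
  refine (differentiable_riemannZeta₁.differentiableOn.analyticOnNhd
    (isOpen_setOf_lt_re 0)).eqOn_of_preconnected_of_eventuallyEq
    (hdiff.analyticOnNhd (isOpen_setOf_lt_re 0)) (convex_halfSpace_re_gt 0).isPreconnected
    (z₀ := 2) (by simp) ?_ hs
  filter_upwards [(isOpen_setOf_lt_re 1).mem_nhds (show (2 : ℂ) ∈ _ by simp)] with z hz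
  exact riemannZeta₁_eq_of_one_lt_re hN hz

lemma norm_natCast_cpow_le {n : ℕ} {w : ℂ} {r : ℝ} (hn : 1 ≤ n) (hw : w.re ≤ r) :
    ‖(n : ℂ) ^ w‖ ≤ (n : ℝ) ^ r := by
  rw [Complex.norm_natCast_cpow_of_pos hn]
  exact Real.rpow_le_rpow_of_exponent_le (by exact_mod_cast hn) hw

lemma summable_natCast_rpow_neg_one_sub_half {δ : ℝ} (hδ : 0 < δ) :
    Summable fun n : ℕ ↦ (n : ℝ) ^ (-1 - δ / 2) :=
  Real.summable_nat_rpow.2 (by linarith)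

lemma norm_sum_range_cpow_neg_le {δ : ℝ} (hδ : 0 < δ) (N : ℕ) {s : ℂ} (hs0 : s ≠ 0)
    (hs : 1 - δ / 2 ≤ s.re) :
    ‖∑ n ∈ Finset.range N, (n : ℂ) ^ (-s)‖ ≤ (∑' n : ℕ, (n : ℝ) ^ (-1 - δ / 2)) * (N : ℝ) ^ δ := by
  have term_le (n : ℕ) (hn : n ∈ Finset.range N) :
      ‖(n : ℂ) ^ (-s)‖ ≤ (n : ℝ) ^ (-1 - δ / 2) * (N : ℝ) ^ δ := by
    rcases n.eq_zero_or_pos with rfl | hn0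
    · rw [Nat.cast_zero, Complex.zero_cpow (neg_ne_zero.2 hs0), norm_zero]
      positivity
    calc ‖(n : ℂ) ^ (-s)‖ ≤ (n : ℝ) ^ (-1 - δ / 2 + δ) :=
          norm_natCast_cpow_le hn0 (by rw [Complex.neg_re]; linarith)
      _ = (n : ℝ) ^ (-1 - δ / 2) * (n : ℝ) ^ δ := Real.rpow_add (by exact_mod_cast hn0) _ _
      _ ≤ _ := by gcongr; exact (Finset.mem_range.1 hn).le
  refine (norm_sum_le_of_le _ term_le).trans ?_
  rw [← Finset.sum_mul]
  gcongr
  exact (summable_natCast_rpow_neg_one_sub_half hδ).sum_le_tsum _ fun n _ ↦ by positivity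

lemma norm_tsum_zetaRemainder_le {δ : ℝ} (hδ : 0 < δ) (hδ1 : δ ≤ 1) {N : ℕ} (hN : 1 ≤ N) {s : ℂ}
    (hs : 1 - δ / 2 ≤ s.re) :
    ‖∑' n, zetaRemainder (n + N) s‖ ≤
      ‖s - 1‖ * ‖s‖ * (N : ℝ) ^ (δ - 1) * ∑' n : ℕ, (n : ℝ) ^ (-1 - δ / 2) := by
  have hsum := summable_natCast_rpow_neg_one_sub_half hδ
  have term_le (n : ℕ) : ‖zetaRemainder (n + N) s‖ ≤
      ‖s - 1‖ * ‖s‖ * (N : ℝ) ^ (δ - 1) * ((n + N : ℕ) : ℝ) ^ (-1 - δ / 2) := by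
    refine (norm_zetaRemainder_le (by lia) (by linarith)).trans ?_
    rw [mul_assoc (‖s - 1‖ * ‖s‖)]
    gcongr
    calc ((n + N : ℕ) : ℝ) ^ (-s.re - 1) ≤ ((n + N : ℕ) : ℝ) ^ (δ - 1 + (-1 - δ / 2)) :=
          Real.rpow_le_rpow_of_exponent_le (by exact_mod_cast (by lia : 1 ≤ n + N)) (by linarith)
      _ = ((n + N : ℕ) : ℝ) ^ (δ - 1) * ((n + N : ℕ) : ℝ) ^ (-1 - δ / 2) :=
          Real.rpow_add (by exact_mod_cast (by lia : 0 < n + N)) _ _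
      _ ≤ _ := mul_le_mul_of_nonneg_right (Real.rpow_le_rpow_of_nonpos (by exact_mod_cast hN)
          (by exact_mod_cast Nat.le_add_left N n) (by linarith)) (by positivity)
  refine (tsum_of_norm_bounded (((summable_nat_add_iff N).2 hsum).hasSum.mul_left _)
    term_le).trans (mul_le_mul_of_nonneg_left ?_ (by positivity))
  rw [← hsum.sum_add_tsum_nat_add N, le_add_iff_nonneg_left]
  exact Finset.sum_nonneg fun n _ ↦ by positivity

lemma rpow_le_two_mul_rpow {a b δ : ℝ} (ha : 0 ≤ a) (hb : 0 ≤ b) (hab : a ≤ 2 * b) (hδ : 0 ≤ δ)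
    (hδ1 : δ ≤ 1) : a ^ δ ≤ 2 * b ^ δ :=
  calc a ^ δ ≤ (2 * b) ^ δ := by gcongr
    _ = 2 ^ δ * b ^ δ := Real.mul_rpow two_pos.le hb
    _ ≤ 2 * b ^ δ := by
      gcongr
      simpa using Real.rpow_le_rpow_of_exponent_le one_le_two hδ1

lemma ne_one_of_one_le_abs_im {s : ℂ} (hs : 1 ≤ |s.im|) : s ≠ 1 := by
  rintro rfl
  norm_num at hs

lemma norm_riemannZeta_le {δ : ℝ} (hδ : 0 < δ) (hδ1 : δ ≤ 1) {N : ℕ} (hN : 1 ≤ N) {s : ℂ}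
    (hre : 1 - δ / 2 ≤ s.re) (him : 1 ≤ |s.im|) :
    ‖riemannZeta s‖ ≤ (1 + (1 + ‖s‖ / N) * ∑' n : ℕ, (n : ℝ) ^ (-1 - δ / 2)) * (N : ℝ) ^ δ := by
  set K := ∑' n : ℕ, (n : ℝ) ^ (-1 - δ / 2)
  have hs0 : s ≠ 0 := by rintro rfl; norm_num at him
  have one_le_norm : 1 ≤ ‖s - 1‖ := him.trans (by simpa using Complex.abs_im_le_norm (s - 1))
  have boundary_le : ‖(N : ℂ) ^ (1 - s)‖ ≤ ‖s - 1‖ * (N : ℝ) ^ δ :=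
    (norm_natCast_cpow_le hN (r := δ) (by rw [Complex.sub_re, Complex.one_re]; linarith)).trans
      (le_mul_of_one_le_left (by positivity) one_le_norm)
  rw [riemannZeta_eq_inv_sub_mul (ne_one_of_one_le_abs_im him), norm_mul, norm_inv,
    inv_mul_le_iff₀ (by linarith), riemannZeta₁_eq_of_re_pos hN (by linarith)]
  calc _ ≤ ‖s - 1‖ * (K * (N : ℝ) ^ δ) + ‖s - 1‖ * (N : ℝ) ^ δ +
        ‖s - 1‖ * ‖s‖ * (N : ℝ) ^ (δ - 1) * K := by
        refine norm_add₃_le.trans (add_le_add_three ?_ boundary_le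
          (norm_tsum_zetaRemainder_le hδ hδ1 hN hre))
        rw [norm_mul]
        gcongr
        exact norm_sum_range_cpow_neg_le hδ N hs0 hre
    _ = _ := by
        rw [Real.rpow_sub_one (by positivity)]
        ring

lemma exists_norm_riemannZeta_le {δ : ℝ} (hδ : 0 < δ) (hδ1 : δ ≤ 1) (b : ℝ) :
    ∃ C > 0, ∀ s : ℂ, 1 - δ / 2 ≤ s.re → s.re ≤ b → 1 ≤ |s.im| →
      ‖riemannZeta s‖ ≤ C * |s.im| ^ δ := by
  set K := ∑' n : ℕ, (n : ℝ) ^ (-1 - δ / 2)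
  have : 0 ≤ K := tsum_nonneg fun n ↦ by positivity
  refine ⟨(1 + (1 + (|b| + 1)) * K) * 2, by positivity, fun s hre hreb him ↦ ?_⟩
  set N := ⌈|s.im|⌉₊
  have him_le : |s.im| ≤ N := Nat.le_ceil _
  have hN : (1 : ℝ) ≤ N := him.trans him_le
  have norm_le : ‖s‖ / N ≤ |b| + 1 := by
    have := Complex.norm_le_abs_re_add_abs_im s
    rw [abs_of_pos (by linarith : 0 < s.re)] at this
    rw [div_le_iff₀ (by linarith)]
    nlinarith [le_abs_self b, abs_nonneg b]
  have rpow_le : (N : ℝ) ^ δ ≤ 2 * |s.im| ^ δ :=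
    rpow_le_two_mul_rpow (by positivity) (abs_nonneg _)
      (by linarith [Nat.ceil_lt_add_one (abs_nonneg s.im)]) hδ.le hδ1
  calc ‖riemannZeta s‖ ≤ (1 + (1 + ‖s‖ / N) * K) * (N : ℝ) ^ δ :=
        norm_riemannZeta_le hδ hδ1 (by exact_mod_cast hN) hre him
    _ ≤ (1 + (1 + (|b| + 1)) * K) * (2 * |s.im| ^ δ) := by gcongr
    _ = _ := by ring

lemma abs_re_sub_re_le {s z : ℂ} {r : ℝ} (hz : z ∈ Metric.closedBall s r) : |z.re - s.re| ≤ r :=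
  (Complex.abs_re_le_norm (z - s)).trans (mem_closedBall_iff_norm.1 hz)

lemma abs_abs_im_sub_abs_im_le {s z : ℂ} {r : ℝ} (hz : z ∈ Metric.closedBall s r) :
    |(|z.im| - |s.im|)| ≤ r :=
  (abs_abs_sub_abs_le_abs_sub _ _).trans
    ((Complex.abs_im_le_norm (z - s)).trans (mem_closedBall_iff_norm.1 hz))

lemma exists_norm_deriv_riemannZeta_le {δ : ℝ} (hδ : 0 < δ) (hδ1 : δ ≤ 1) (b : ℝ) :
    ∃ C > 0, ∀ s : ℂ, 1 - δ / 4 ≤ s.re → s.re ≤ b → 2 ≤ |s.im| →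
      ‖deriv riemannZeta s‖ ≤ C * |s.im| ^ δ := by
  obtain ⟨C, hC, hζ⟩ := exists_norm_riemannZeta_le hδ hδ1 (b + 1)
  refine ⟨C * 2 / (δ / 4), by positivity, fun s hre hreb him ↦ ?_⟩
  have ball_im (z : ℂ) (hz : z ∈ Metric.closedBall s (δ / 4)) :
      1 ≤ |z.im| ∧ |z.im| ≤ 2 * |s.im| := by
    have := abs_le.1 (abs_abs_im_sub_abs_im_le hz)
    constructor <;> linarith
  have diff : DiffContOnCl ℂ riemannZeta (Metric.ball s (δ / 4)) := by
    refine DifferentiableOn.diffContOnCl fun z hz ↦ ?_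
    rw [closure_ball _ (by positivity)] at hz
    exact (differentiableAt_riemannZeta
      (ne_one_of_one_le_abs_im (ball_im z hz).1)).differentiableWithinAt
  calc ‖deriv riemannZeta s‖ ≤ C * (2 * |s.im| ^ δ) / (δ / 4) := by
        refine Complex.norm_deriv_le_of_forall_mem_sphere_norm_le (by positivity) diff fun z hz ↦ ?_
        replace hz := Metric.sphere_subset_closedBall hz
        have hzre := abs_le.1 (abs_re_sub_re_le hz)
        refine (hζ z (by linarith) (by linarith) (ball_im z hz).1).trans ?_
        gcongr
        exact rpow_le_two_mul_rpow (abs_nonneg _) (abs_nonneg _) (ball_im z hz).2 hδ.le hδ1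
    _ = _ := by ring

/-! ### Quantitative non-vanishing of `ζ` -/

lemma one_le_norm_riemannZeta_product {x : ℝ} (hx : 0 < x) (y : ℝ) :
    1 ≤ ‖riemannZeta (1 + x)‖ ^ 3 * ‖riemannZeta (1 + x + Complex.I * y)‖ ^ 4 *
      ‖riemannZeta (1 + x + 2 * Complex.I * y)‖ := by
  simpa [DirichletCharacter.LFunctionTrivChar, DirichletCharacter.LFunction_modOne_eq] using
    DirichletCharacter.norm_LFunction_product_ge_one (N := 1) 1 hx y

lemma exists_norm_riemannZeta_one_add_le (b : ℝ) :
    ∃ C > 0, ∀ x : ℝ, 0 < x → x ≤ b → ‖riemannZeta (1 + x)‖ ≤ C / x := by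
  obtain ⟨C, hC⟩ := (isCompact_Icc (a := 0) (b := b)).exists_bound_of_continuousOn
    (f := fun x : ℝ ↦ riemannZeta₁ (1 + x))
    (differentiable_riemannZeta₁.continuous.comp (by fun_prop)).continuousOn
  refine ⟨|C| + 1, by positivity, fun x hx hxb ↦ ?_⟩
  have hne : (1 + x : ℂ) ≠ 1 := by simpa using hx.ne'
  rw [riemannZeta_eq_inv_sub_mul hne, norm_mul, add_sub_cancel_left, norm_inv, Complex.norm_real,
    Real.norm_of_nonneg hx.le, div_eq_inv_mul]
  gcongr
  linarith [hC x ⟨hx.le, hxb⟩, le_abs_self C]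

lemma exists_re_sub_one_pow_three_le {δ : ℝ} (hδ : 0 < δ) (hδ1 : δ ≤ 1) (b : ℝ) :
    ∃ A ≥ 1, ∀ s : ℂ, 1 < s.re → s.re ≤ b → 1 ≤ |s.im| →
      (s.re - 1) ^ 3 ≤ A * |s.im| ^ δ * ‖riemannZeta s‖ ^ 4 := by
  obtain ⟨C, hC, hζ⟩ := exists_norm_riemannZeta_le hδ hδ1 b
  obtain ⟨R, hR, hζ_real⟩ := exists_norm_riemannZeta_one_add_le (b - 1)
  refine ⟨R ^ 3 * (C * 2) + 1, by simp only [ge_iff_le, le_add_iff_nonneg_left]; positivity,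
    fun s hre hreb him ↦ ?_⟩
  set x := s.re - 1 with hx
  have hx0 : 0 < x := by linarith
  have hs : 1 + x + Complex.I * s.im = s := by apply Complex.ext <;> simp [hx]
  have double_le : ‖riemannZeta (1 + x + 2 * Complex.I * s.im)‖ ≤ C * (2 * |s.im| ^ δ) := by
    have him_double : |(1 + x + 2 * Complex.I * s.im : ℂ).im| = 2 * |s.im| := by simp [abs_mul]
    refine (hζ _ (by simp; linarith) (by simp; linarith) (by linarith)).trans ?_
    rw [him_double]
    gcongr
    exact rpow_le_two_mul_rpow (by positivity) (abs_nonneg _) le_rfl hδ.le hδ1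
  have key := one_le_norm_riemannZeta_product hx0 s.im
  rw [hs] at key
  calc x ^ 3 ≤ x ^ 3 * ((R / x) ^ 3 * ‖riemannZeta s‖ ^ 4 * (C * (2 * |s.im| ^ δ))) := by
        refine le_mul_of_one_le_right (by positivity) (key.trans ?_)
        gcongr
        exact hζ_real x hx0 (by linarith)
    _ = R ^ 3 * (C * 2) * |s.im| ^ δ * ‖riemannZeta s‖ ^ 4 := by field
    _ ≤ _ := by gcongr; linarith

lemma exists_norm_riemannZeta_sub_le {δ : ℝ} (hδ : 0 < δ) (hδ1 : δ ≤ 1) (b : ℝ) :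
    ∃ D > 0, ∀ s z : ℂ, z.im = s.im → 2 ≤ |s.im| → s.re ∈ Set.Icc (1 - δ / 4) b →
      z.re ∈ Set.Icc (1 - δ / 4) b →
        ‖riemannZeta z - riemannZeta s‖ ≤ D * |s.im| ^ δ * |z.re - s.re| := by
  obtain ⟨D, hD, hζ'⟩ := exists_norm_deriv_riemannZeta_le hδ hδ1 b
  refine ⟨D, hD, fun s z him him2 hs hz ↦ ?_⟩
  have hline : Convex ℝ (Set.Icc (1 - δ / 4) b ×ℂ {s.im}) :=
    ((convex_Icc _ _).linear_preimage Complex.reLm).inter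
      ((convex_singleton _).linear_preimage Complex.imLm)
  have norm_sub : ‖z - s‖ = |z.re - s.re| := by
    rw [← Complex.abs_re_eq_norm.2 (by simp [him]), Complex.sub_re]
  rw [← norm_sub]
  refine hline.norm_image_sub_le_of_norm_deriv_le (fun w hw ↦ ?_) (fun w hw ↦ ?_) ⟨hs, rfl⟩
    ⟨hz, him⟩
  · have hw_im : w.im = s.im := hw.2
    exact differentiableAt_riemannZeta (ne_one_of_one_le_abs_im (by rw [hw_im]; linarith))
  · have hw_im : w.im = s.im := hw.2
    simpa only [hw_im] using hζ' w hw.1.1 hw.1.2 (by rwa [hw_im])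

lemma div_le_mul_pow_four_of_pow_three_le {A β τ x Z : ℝ} (hA : 1 ≤ A) (hβ : 0 < β) (hτ : 0 < τ)
    (hZ : 0 ≤ Z) (hx : β ^ 4 / τ ^ 5 ≤ x) (h : x ^ 3 ≤ A * τ * Z ^ 4) : β ^ 3 / A ≤ Z * τ ^ 4 := by
  refine le_of_pow_le_pow_left₀ four_ne_zero (by positivity) ?_
  calc (β ^ 3 / A) ^ 4 = (β ^ 4 / τ ^ 5) ^ 3 * τ ^ 15 / A ^ 4 := by field
    _ ≤ (β ^ 4 / τ ^ 5) ^ 3 * τ ^ 15 / A := by gcongr; exact le_self_pow₀ hA four_ne_zero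
    _ ≤ A * τ * Z ^ 4 * τ ^ 15 / A := by
      gcongr
      exact (pow_le_pow_left₀ (by positivity) hx 3).trans h
    _ = (Z * τ ^ 4) ^ 4 := by field

lemma div_two_mul_le_mul_pow_four {A β D τ Y Z : ℝ} (hA : 0 < A) (hβ : 0 < β) (hτ : 0 < τ)
    (hβAD : β * (4 * A * D) ≤ 1) (hY : β ^ 3 / A ≤ Y * τ ^ 4)
    (hYZ : Y ≤ Z + D * τ * (2 * (β ^ 4 / τ ^ 5))) : β ^ 3 / (2 * A) ≤ Z * τ ^ 4 :=
  calc β ^ 3 / (2 * A) = β ^ 3 / A - β ^ 3 * 1 / (2 * A) := by field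
    _ ≤ β ^ 3 / A - β ^ 3 * (β * (4 * A * D)) / (2 * A) := by gcongr
    _ = β ^ 3 / A - D * τ * (2 * (β ^ 4 / τ ^ 5)) * τ ^ 4 := by field
    _ ≤ Y * τ ^ 4 - D * τ * (2 * (β ^ 4 / τ ^ 5)) * τ ^ 4 := by gcongr
    _ = (Y - D * τ * (2 * (β ^ 4 / τ ^ 5))) * τ ^ 4 := by ring
    _ ≤ Z * τ ^ 4 := by gcongr; linarith

/- To the right of `1 + β⁴ / τ⁵` the bound comes from the 3-4-1 inequality. The Lipschitz bound
carries it to the left of the line `re s = 1` with a loss of order `D β⁴ / τ⁴`, which is smaller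
than `β³ / (A τ⁴)` once `β` is small compared to `1 / (A D)`. -/
lemma exists_le_norm_riemannZeta_mul {δ : ℝ} (hδ : 0 < δ) (hδ1 : δ ≤ 1) :
    ∃ c₁ > 0, ∃ c₂ > 0, c₁ ≤ δ / 4 ∧ ∀ s : ℂ, 2 ≤ |s.im| → 1 - c₁ / (|s.im| ^ δ) ^ 5 ≤ s.re →
      s.re ≤ 3 → c₂ ≤ ‖riemannZeta s‖ * (|s.im| ^ δ) ^ 4 := by
  obtain ⟨A, hA, h341⟩ := exists_re_sub_one_pow_three_le hδ hδ1 3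
  obtain ⟨D, hD, hLip⟩ := exists_norm_riemannZeta_sub_le hδ hδ1 3
  set β := min (δ / 4) (1 / (4 * A * D))
  have hβ : 0 < β := by positivity
  have hβδ : β ≤ δ / 4 := min_le_left _ _
  have hβAD : β * (4 * A * D) ≤ 1 := (le_div_iff₀ (by positivity)).1 (min_le_right _ _)
  have hβ4 : β ^ 4 ≤ δ / 4 :=
    (pow_le_of_le_one hβ.le (by linarith) four_ne_zero).trans hβδ
  refine ⟨β ^ 4, by positivity, β ^ 3 / (2 * A), by positivity, hβ4, fun s him hre hre3 ↦ ?_⟩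
  set τ := |s.im| ^ δ
  have hτ : 1 ≤ τ := Real.one_le_rpow (by linarith) hδ.le
  set η := β ^ 4 / τ ^ 5
  have hη0 : 0 < η := by positivity
  have hηδ : η ≤ δ / 4 := (div_le_self (by positivity) (one_le_pow₀ hτ)).trans hβ4
  have right_le (z : ℂ) (hz : z.im = s.im) (hzre : 1 + η ≤ z.re) (hzre3 : z.re ≤ 3) :
      β ^ 3 / A ≤ ‖riemannZeta z‖ * τ ^ 4 :=
    div_le_mul_pow_four_of_pow_three_le hA hβ (by linarith) (norm_nonneg _) (x := z.re - 1)
      (by linarith) (by simpa only [hz] using h341 z (by linarith) hzre3 (by rw [hz]; linarith))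
  rcases le_total (1 + η) s.re with hright | hleft
  · exact (by gcongr; linarith : β ^ 3 / (2 * A) ≤ β ^ 3 / A).trans (right_le s rfl hright hre3)
  refine div_two_mul_le_mul_pow_four (by linarith) hβ (by linarith) hβAD
    (right_le ⟨1 + η, s.im⟩ rfl le_rfl (show 1 + η ≤ 3 by linarith)) ?_
  refine (norm_le_norm_add_norm_sub' _ (riemannZeta s)).trans ?_
  gcongr
  refine (hLip s ⟨1 + η, s.im⟩ rfl him ⟨by linarith, hre3⟩
    ⟨by change _ ≤ 1 + η; linarith, by change 1 + η ≤ 3; linarith⟩).trans ?_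
  gcongr
  exact abs_le.2 ⟨by linarith, by linarith⟩

/-! ### Derivatives of `-ζ′/ζ - ζ` -/

/-- The function `-ζ′/ζ - ζ` with its removable singularity at `1` filled in: the analytic
continuation of the L-series of `Λ - 1` to the complement of the zeros of `ζ`. -/
noncomputable def vonMangoldtSubOneLFunction (s : ℂ) : ℂ :=
  -(deriv riemannZeta₁ s / riemannZeta₁ s) - riemannZeta₀ s

lemma riemannZeta₁_ne_zero_of_riemannZeta_ne_zero {s : ℂ} (hs : s ≠ 1) (hζ : riemannZeta s ≠ 0) :
    riemannZeta₁ s ≠ 0 := by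
  rw [riemannZeta_eq_inv_sub_mul hs] at hζ
  exact right_ne_zero_of_mul hζ

lemma riemannZeta₁_ne_zero_of_one_le_re {s : ℂ} (hs : 1 ≤ s.re) : riemannZeta₁ s ≠ 0 := by
  rcases eq_or_ne s 1 with rfl | hs1
  · simp
  · exact riemannZeta₁_ne_zero_of_riemannZeta_ne_zero hs1 (riemannZeta_ne_zero_of_one_le_re hs)

lemma vonMangoldtSubOneLFunction_eq {s : ℂ} (hs : s ≠ 1) (hζ : riemannZeta s ≠ 0) :
    vonMangoldtSubOneLFunction s = -(deriv riemannZeta s / riemannZeta s) - riemannZeta s := by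
  have hs0 : s - 1 ≠ 0 := sub_ne_zero_of_ne hs
  have zeta₁_eq : riemannZeta₁ s = (s - 1) * riemannZeta s := by
    rw [riemannZeta_eq_inv_sub_mul hs, mul_inv_cancel_left₀ hs0]
  have zeta₀_eq : riemannZeta₀ s = riemannZeta s - (s - 1)⁻¹ := by
    rw [riemannZeta_eq_inv_sub_add hs, add_sub_cancel_left]
  have deriv_eq : deriv riemannZeta₁ s = (s - 1) * deriv riemannZeta s + riemannZeta s := by
    rw [deriv_riemannZeta_eq_neg_inv_sub_sq_mul_add hs, zeta₁_eq]
    field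
  rw [vonMangoldtSubOneLFunction, deriv_eq, zeta₁_eq, zeta₀_eq]
  field

lemma differentiableAt_vonMangoldtSubOneLFunction {s : ℂ} (hs : riemannZeta₁ s ≠ 0) :
    DifferentiableAt ℂ vonMangoldtSubOneLFunction s :=
  ((differentiable_riemannZeta₁.deriv s).div (differentiable_riemannZeta₁ s) hs).neg.sub
    (differentiable_riemannZeta₀ s)

lemma analyticOnNhd_vonMangoldtSubOneLFunction :
    AnalyticOnNhd ℂ vonMangoldtSubOneLFunction {s | riemannZeta₁ s ≠ 0} :=
  DifferentiableOn.analyticOnNhd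
    (fun _ hs ↦ (differentiableAt_vonMangoldtSubOneLFunction hs).differentiableWithinAt)
    (isOpen_ne_fun differentiable_riemannZeta₁.continuous continuous_const)

lemma exists_norm_vonMangoldtSubOneLFunction_le {ε : ℝ} (hε : 0 < ε) (hε1 : ε ≤ 1) :
    ∃ c > 0, c ≤ 1 ∧ ∃ E > 0, ∀ s : ℂ, 2 ≤ |s.im| → 1 - c / |s.im| ^ ε ≤ s.re → s.re ≤ 3 →
      riemannZeta₁ s ≠ 0 ∧ ‖vonMangoldtSubOneLFunction s‖ ≤ E * |s.im| ^ ε := by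
  obtain ⟨δ, rfl⟩ : ∃ δ, ε = δ * (5 : ℕ) := ⟨ε / 5, by push_cast; ring⟩
  push_cast at hε hε1
  have hδ : 0 < δ := by linarith
  have hδ1 : δ ≤ 1 := by linarith
  obtain ⟨c₁, hc₁, c₂, hc₂, hcδ, lower⟩ := exists_le_norm_riemannZeta_mul hδ hδ1
  obtain ⟨C, hC, upper⟩ := exists_norm_riemannZeta_le hδ hδ1 3
  obtain ⟨D, hD, deriv_upper⟩ := exists_norm_deriv_riemannZeta_le hδ hδ1 3
  refine ⟨c₁, hc₁, by linarith, D / c₂ + C, by positivity, fun s him hre hre3 ↦ ?_⟩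
  rw [Real.rpow_mul (abs_nonneg _), Real.rpow_natCast] at hre ⊢
  set τ := |s.im| ^ δ
  have hτ : 1 ≤ τ := Real.one_le_rpow (by linarith) hδ.le
  have hre' : 1 - δ / 4 ≤ s.re := by
    linarith [div_le_self hc₁.le (one_le_pow₀ (n := 5) hτ)]
  have hlower := lower s him hre hre3
  have hs1 : s ≠ 1 := ne_one_of_one_le_abs_im (by linarith)
  have hζ : riemannZeta s ≠ 0 := by
    intro h0
    rw [h0, norm_zero, zero_mul] at hlower
    linarith
  refine ⟨riemannZeta₁_ne_zero_of_riemannZeta_ne_zero hs1 hζ, ?_⟩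
  have logDeriv_le : ‖deriv riemannZeta s / riemannZeta s‖ ≤ D / c₂ * τ ^ 5 := by
    rw [norm_div, div_le_iff₀ (norm_pos_iff.2 hζ)]
    calc ‖deriv riemannZeta s‖ ≤ D * τ := deriv_upper s hre' hre3 him
      _ = D / c₂ * τ * c₂ := by field
      _ ≤ D / c₂ * τ * (‖riemannZeta s‖ * τ ^ 4) := by gcongr
      _ = D / c₂ * τ ^ 5 * ‖riemannZeta s‖ := by ring
  have zeta_le : ‖riemannZeta s‖ ≤ C * τ ^ 5 :=
    (upper s (by linarith) hre3 (by linarith)).trans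
      (by gcongr; exact le_self_pow₀ hτ (by norm_num))
  rw [vonMangoldtSubOneLFunction_eq hs1 hζ, add_mul]
  exact (norm_sub_le _ _).trans (by rw [norm_neg]; gcongr)

lemma exists_norm_iteratedDeriv_vonMangoldtSubOneLFunction_le_of_three_le (k : ℕ) {ε : ℝ}
    (hε : 0 < ε) (hε1 : ε ≤ 1) :
    ∃ C > 0, ∀ s : ℂ, 1 ≤ s.re → s.re ≤ 2 → 3 ≤ |s.im| →
      ‖iteratedDeriv k vonMangoldtSubOneLFunction s‖ ≤ C * (|s.im| ^ ε) ^ (k + 1) := by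
  obtain ⟨c, hc, hc1, E, hE, hbound⟩ := exists_norm_vonMangoldtSubOneLFunction_le hε hε1
  refine ⟨k.factorial * (E * 2) * 2 ^ k / c ^ k, by positivity, fun s hre hre2 him ↦ ?_⟩
  set τ := |s.im| ^ ε
  have hτ : 1 ≤ τ := Real.one_le_rpow (by linarith) hε.le
  set r := c / (2 * τ)
  have hr : 0 < r := by positivity
  have hr1 : r ≤ 1 := by
    rw [div_le_one (by positivity)]
    linarith
  have on_ball (z : ℂ) (hz : z ∈ Metric.closedBall s r) :
      riemannZeta₁ z ≠ 0 ∧ ‖vonMangoldtSubOneLFunction z‖ ≤ E * 2 * τ := by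
    obtain ⟨hre_ge, hre_le⟩ := abs_le.1 (abs_re_sub_re_le hz)
    obtain ⟨him_ge, him_le⟩ := abs_le.1 (abs_abs_im_sub_abs_im_le hz)
    have hτz : |z.im| ^ ε ≤ 2 * τ :=
      rpow_le_two_mul_rpow (abs_nonneg _) (abs_nonneg _) (by linarith) hε.le hε1
    have hzim : 0 < |z.im| := by linarith
    have hrz : r ≤ c / |z.im| ^ ε := by unfold r; gcongr
    obtain ⟨hne, hle⟩ := hbound z (by linarith) (by linarith) (by linarith)
    exact ⟨hne, hle.trans (by rw [mul_assoc]; gcongr)⟩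
  have cauchy : ‖iteratedDeriv k vonMangoldtSubOneLFunction s‖ ≤
      k.factorial * (E * 2 * τ) / r ^ k := by
    refine Complex.norm_iteratedDeriv_le_of_forall_mem_sphere_norm_le k hr
      (DifferentiableOn.diffContOnCl fun z hz ↦ ?_)
      fun z hz ↦ (on_ball z (Metric.sphere_subset_closedBall hz)).2
    rw [closure_ball _ hr.ne'] at hz
    exact (differentiableAt_vonMangoldtSubOneLFunction (on_ball z hz).1).differentiableWithinAt
  refine cauchy.trans_eq ?_
  simp only [r, div_pow, mul_pow, pow_succ]
  field

lemma exists_norm_iteratedDeriv_vonMangoldtSubOneLFunction_le (k : ℕ) {θ : ℝ}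
    (hθ : 0 < θ) (hθ1 : θ ≤ 1) :
    ∃ C > 0, ∀ s : ℂ, 1 ≤ s.re → s.re ≤ 2 →
      ‖iteratedDeriv k vonMangoldtSubOneLFunction s‖ ≤ C * (1 + |s.im|) ^ θ := by
  have hcompact : IsCompact (Set.Icc (1 : ℝ) 2 ×ℂ Set.Icc (-3 : ℝ) 3) :=
    isCompact_Icc.reProdIm isCompact_Icc
  have hcont : ContinuousOn (iteratedDeriv k vonMangoldtSubOneLFunction)
      (Set.Icc (1 : ℝ) 2 ×ℂ Set.Icc (-3 : ℝ) 3) := by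
    rw [iteratedDeriv_eq_iterate]
    exact (analyticOnNhd_vonMangoldtSubOneLFunction.iterated_deriv k).continuousOn.mono
      fun s hs ↦ riemannZeta₁_ne_zero_of_one_le_re hs.1.1
  obtain ⟨B, hB⟩ := hcompact.exists_bound_of_continuousOn hcont
  obtain ⟨A, hA, hlarge⟩ := exists_norm_iteratedDeriv_vonMangoldtSubOneLFunction_le_of_three_le k
    (ε := θ / (k + 1)) (by positivity) ((div_le_self hθ.le (by simp)).trans hθ1)
  refine ⟨|B| + A, by positivity, fun s hre hre2 ↦ ?_⟩
  have one_le : 1 ≤ (1 + |s.im|) ^ θ := Real.one_le_rpow (by simp) hθ.le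
  rcases le_total |s.im| 3 with him | him
  · calc ‖iteratedDeriv k vonMangoldtSubOneLFunction s‖ ≤ |B| :=
          (hB s ⟨⟨hre, hre2⟩, abs_le.1 him⟩).trans (le_abs_self B)
      _ ≤ |B| + A := by linarith
      _ ≤ (|B| + A) * (1 + |s.im|) ^ θ := le_mul_of_one_le_right (by positivity) one_le
  · have pow_eq : (|s.im| ^ (θ / (k + 1))) ^ (k + 1) = |s.im| ^ θ := by
      rw [← Real.rpow_natCast, ← Real.rpow_mul (abs_nonneg _), Nat.cast_add_one,
        div_mul_cancel₀ _ (by positivity)]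
    calc ‖iteratedDeriv k vonMangoldtSubOneLFunction s‖ ≤ A * |s.im| ^ θ :=
          pow_eq ▸ hlarge s hre hre2 him
      _ ≤ (|B| + A) * (1 + |s.im|) ^ θ := by
          gcongr
          · linarith [abs_nonneg B]
          · linarith

lemma LSeriesSummable_vonMangoldt_sub_one {s : ℂ} (hs : 1 < s.re) :
    LSeriesSummable (fun n ↦ (ArithmeticFunction.vonMangoldt n : ℂ) - 1) s :=
  (ArithmeticFunction.LSeriesSummable_vonMangoldt hs).sub (LSeriesSummable_one_iff.2 hs)

lemma LSeries_vonMangoldt_sub_one {s : ℂ} (hs : 1 < s.re) :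
    LSeries (fun n ↦ (ArithmeticFunction.vonMangoldt n : ℂ) - 1) s =
      vonMangoldtSubOneLFunction s := by
  have hs1 : s ≠ 1 := by
    rintro rfl
    simp at hs
  have hsub := LSeries_sub (ArithmeticFunction.LSeriesSummable_vonMangoldt hs)
    (LSeriesSummable_one_iff.2 hs)
  rw [ArithmeticFunction.LSeries_vonMangoldt_eq_deriv_riemannZeta_div hs,
    LSeries_one_eq_riemannZeta hs, neg_div] at hsub
  exact hsub.trans (vonMangoldtSubOneLFunction_eq hs1 (riemannZeta_ne_zero_of_one_lt_re hs)).symm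

lemma abscissaOfAbsConv_vonMangoldt_sub_one_le :
    LSeries.abscissaOfAbsConv (fun n ↦ (ArithmeticFunction.vonMangoldt n : ℂ) - 1) ≤ 1 :=
  LSeries.abscissaOfAbsConv_le_of_forall_lt_LSeriesSummable' fun y hy ↦
    LSeriesSummable_vonMangoldt_sub_one (by exact_mod_cast hy)

lemma iterate_logMul_apply (f : ℕ → ℂ) (k n : ℕ) :
    LSeries.logMul^[k] f n = (Real.log n : ℂ) ^ k * f n := by
  induction k with
  | zero => simp
  | succ k ih =>
    rw [Function.iterate_succ_apply', LSeries.logMul, ih, Complex.natCast_log, pow_succ', mul_assoc]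

lemma LSeriesSummable_log_pow_mul_vonMangoldt_sub_one (k : ℕ) {s : ℂ} (hs : 1 < s.re) :
    LSeriesSummable
      (fun n ↦ (Real.log n : ℂ) ^ k * ((ArithmeticFunction.vonMangoldt n : ℂ) - 1)) s := by
  simp only [← iterate_logMul_apply fun n ↦ (ArithmeticFunction.vonMangoldt n : ℂ) - 1]
  refine LSeriesSummable_of_abscissaOfAbsConv_lt_re ?_
  rw [LSeries.absicssaOfAbsConv_logPowMul]
  exact abscissaOfAbsConv_vonMangoldt_sub_one_le.trans_lt (by exact_mod_cast hs)

lemma LSeries_log_pow_mul_vonMangoldt_sub_one (k : ℕ) {s : ℂ} (hs : 1 < s.re) :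
    LSeries (fun n ↦ (Real.log n : ℂ) ^ k * ((ArithmeticFunction.vonMangoldt n : ℂ) - 1)) s =
      (-1) ^ k * iteratedDeriv k vonMangoldtSubOneLFunction s := by
  have heq : LSeries (fun n ↦ (ArithmeticFunction.vonMangoldt n : ℂ) - 1) =ᶠ[nhds s]
      vonMangoldtSubOneLFunction := by
    filter_upwards [(isOpen_setOf_lt_re 1).mem_nhds hs] with z hz
    exact LSeries_vonMangoldt_sub_one hz
  simp only [← iterate_logMul_apply fun n ↦ (ArithmeticFunction.vonMangoldt n : ℂ) - 1]
  rw [← heq.iteratedDeriv_eq k, LSeries_iteratedDeriv k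
    (abscissaOfAbsConv_vonMangoldt_sub_one_le.trans_lt (by exact_mod_cast hs)), ← mul_assoc,
    ← mul_pow, neg_one_mul, neg_neg, one_pow, one_mul]

/-! ### Mellin inversion for Cesàro sums -/

/-- The Mellin transform of `t ↦ max (1 - t) 0`. Unlike the kernel `1 / s` of Perron's formula it is
integrable on vertical lines, and it detects the sums `∑_{n ≤ x} f n (1 - n / x)`. -/
noncomputable def cesaroKernel (s : ℂ) : ℂ := 1 / s - 1 / (s + 1)

lemma norm_cesaroKernel_le {s : ℂ} (hs : 1 ≤ s.re) :
    ‖cesaroKernel s‖ ≤ 2 * (1 + |s.im|) ^ (-2 : ℝ) := by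
  have hs0 : s ≠ 0 := Complex.ne_zero_of_re_pos (by linarith)
  have hs1 : s + 1 ≠ 0 := Complex.ne_zero_of_re_pos (by simp; linarith)
  have kernel_eq : cesaroKernel s = (s * (s + 1))⁻¹ := by
    rw [cesaroKernel]
    field
  have norm_sq : ‖s‖ ^ 2 = s.re ^ 2 + s.im ^ 2 := by
    rw [Complex.sq_norm, Complex.normSq_apply]
    ring
  have norm_le : ‖s‖ ≤ ‖s + 1‖ := by
    refine (sq_le_sq₀ (norm_nonneg _) (norm_nonneg _)).1 ?_
    simp only [Complex.sq_norm, Complex.normSq_apply, Complex.add_re, Complex.add_im,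
      Complex.one_re, Complex.one_im]
    nlinarith
  rw [kernel_eq, norm_inv, norm_mul, Real.rpow_neg (by positivity), Real.rpow_ofNat,
    ← div_eq_mul_inv, inv_le_iff_one_le_mul₀ (by positivity), div_mul_eq_mul_div,
    one_le_div (by positivity)]
  calc (1 + |s.im|) ^ 2 ≤ 2 * ‖s‖ ^ 2 := by nlinarith [sq_abs s.im, sq_nonneg (1 - |s.im|)]
    _ = 2 * (‖s‖ * ‖s‖) := by ring
    _ ≤ 2 * (‖s‖ * ‖s + 1‖) := by gcongr

lemma continuous_cesaroKernel_vertical {σ : ℝ} (hσ : 1 ≤ σ) :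
    Continuous fun y : ℝ ↦ cesaroKernel (σ + y * Complex.I) := by
  have hne (y : ℝ) : (σ + y * Complex.I : ℂ) ≠ 0 :=
    Complex.ne_zero_of_re_pos (by simp; linarith)
  have hne' (y : ℝ) : (σ + y * Complex.I + 1 : ℂ) ≠ 0 :=
    Complex.ne_zero_of_re_pos (by simp; linarith)
  unfold cesaroKernel
  fun_prop (disch := assumption)

lemma integrable_cesaroKernel_vertical {σ : ℝ} (hσ : 1 ≤ σ) :
    MeasureTheory.Integrable fun y : ℝ ↦ cesaroKernel (σ + y * Complex.I) := by
  have hint : MeasureTheory.Integrable fun y : ℝ ↦ 2 * (1 + ‖y‖) ^ (-2 : ℝ) :=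
    (integrable_one_add_norm (by simp)).const_mul 2
  refine hint.mono' (continuous_cesaroKernel_vertical hσ).aestronglyMeasurable
    (Eventually.of_forall fun y ↦ ?_)
  simpa using norm_cesaroKernel_le (s := σ + y * Complex.I) (by simpa using hσ)

lemma hasMellin_congr {f g : ℝ → ℂ} (hfg : Set.EqOn f g (Set.Ioi 0)) {s m : ℂ}
    (hf : HasMellin f s m) : HasMellin g s m := by
  have hsmul : Set.EqOn (fun t : ℝ ↦ (t : ℂ) ^ (s - 1) • f t) (fun t ↦ (t : ℂ) ^ (s - 1) • g t)
      (Set.Ioi 0) := fun t ht ↦ by simp only [hfg ht]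
  exact ⟨(MeasureTheory.integrableOn_congr_fun hsmul measurableSet_Ioi).1 hf.1,
    (MeasureTheory.setIntegral_congr_fun measurableSet_Ioi hsmul).symm.trans hf.2⟩

lemma hasMellin_max_one_sub {s : ℂ} (hs : 0 < s.re) :
    HasMellin (fun t : ℝ ↦ ((max (1 - t) 0 : ℝ) : ℂ)) s (cesaroKernel s) := by
  have h_one := hasMellin_one_Ioc hs
  have h_id := hasMellin_cpow_Ioc 1 (s := s) (by simp; linarith)
  have h_sub := hasMellin_sub h_one.1 h_id.1
  rw [h_one.2, h_id.2] at h_sub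
  refine hasMellin_congr (fun t ht ↦ ?_) h_sub
  by_cases ht1 : t ≤ 1
  · have hmem : t ∈ Set.Ioc (0 : ℝ) 1 := ⟨ht, ht1⟩
    simp [Set.indicator_of_mem hmem, ht1]
  · have hmem : t ∉ Set.Ioc (0 : ℝ) 1 := fun h ↦ ht1 h.2
    simp [Set.indicator_of_notMem hmem, (not_le.1 ht1).le]

lemma integral_cpow_neg_mul_cesaroKernel {σ : ℝ} (hσ : 1 ≤ σ) {u : ℝ} (hu : 0 < u) :
    ∫ y : ℝ, (u : ℂ) ^ (-(σ + y * Complex.I)) * cesaroKernel (σ + y * Complex.I) =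
      2 * π * ((max (1 - u) 0 : ℝ) : ℂ) := by
  have mellin_eq (y : ℝ) : mellin (fun t : ℝ ↦ ((max (1 - t) 0 : ℝ) : ℂ)) (σ + y * Complex.I) =
      cesaroKernel (σ + y * Complex.I) :=
    (hasMellin_max_one_sub (by simp; linarith)).2
  have hvertical : Complex.VerticalIntegrable
      (mellin fun t : ℝ ↦ ((max (1 - t) 0 : ℝ) : ℂ)) σ := by
    simpa only [Complex.VerticalIntegrable, mellin_eq] using integrable_cesaroKernel_vertical hσ
  have inversion := mellinInv_mellin_eq σ _ hu
    (hasMellin_max_one_sub (by simp; linarith)).1 hvertical (by fun_prop)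
  simp only [mellinInv, mellin_eq, smul_eq_mul] at inversion
  rw [← inversion, Complex.real_smul]
  push_cast
  field [Complex.ofReal_ne_zero.2 Real.pi_ne_zero]

section CesaroSum

variable {f : ℕ → ℂ} {x : ℝ}

lemma term_mul_cpow (hf0 : f 0 = 0) (hx : 0 < x) (n : ℕ) (s : ℂ) :
    LSeries.term f s n * (x : ℂ) ^ s = f n * ((n / x : ℝ) : ℂ) ^ (-s) := by
  rcases eq_or_ne n 0 with rfl | hn
  · simp [hf0]
  rw [LSeries.term_of_ne_zero hn, Complex.ofReal_div,
    Complex.div_cpow_ofReal_nonneg (by positivity) hx.le, Complex.cpow_neg, Complex.cpow_neg,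
    Complex.ofReal_natCast, inv_div_inv, div_mul_eq_mul_div, mul_div_assoc]

lemma hasSum_mul_max_one_sub_div (hf0 : f 0 = 0) (hx : 0 < x) {σ : ℝ} (hσ : 1 ≤ σ)
    (hf : LSeriesSummable f σ) :
    HasSum (fun n : ℕ ↦ 2 * π * (f n * (max (1 - n / x) 0 : ℝ)))
      (∫ y : ℝ, LSeries f (σ + y * Complex.I) *
        ((x : ℂ) ^ (σ + y * Complex.I) * cesaroKernel (σ + y * Complex.I))) := by
  set F : ℕ → ℝ → ℂ := fun n y ↦ LSeries.term f (σ + y * Complex.I) n *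
    ((x : ℂ) ^ (σ + y * Complex.I) * cesaroKernel (σ + y * Complex.I))
  have F_eq (n : ℕ) (y : ℝ) : F n y = f n * (((n / x : ℝ) : ℂ) ^ (-(σ + y * Complex.I)) *
      cesaroKernel (σ + y * Complex.I)) := by
    simp only [F, ← mul_assoc, term_mul_cpow hf0 hx]
  have norm_F (n : ℕ) (y : ℝ) : ‖F n y‖ =
      ‖LSeries.term f σ n‖ * (x ^ σ * ‖cesaroKernel (σ + y * Complex.I)‖) := by
    simp [F, LSeries.norm_term_eq, Complex.norm_cpow_eq_rpow_re_of_pos hx]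
  have integrable_F (n : ℕ) : MeasureTheory.Integrable (F n) := by
    refine ((integrable_cesaroKernel_vertical hσ).norm.const_mul _).const_mul _ |>.mono' ?_
      (Eventually.of_forall fun y ↦ (norm_F n y).le)
    rcases eq_or_ne n 0 with rfl | hn
    · simpa [F] using MeasureTheory.aestronglyMeasurable_const
    rw [funext (F_eq n)]
    refine Continuous.aestronglyMeasurable (continuous_const.mul (Continuous.mul
      (Continuous.const_cpow (by fun_prop) (Or.inl ?_)) (continuous_cesaroKernel_vertical hσ)))
    exact Complex.ofReal_ne_zero.2 (by positivity)
  have summable_F : Summable fun n ↦ ∫ y, ‖F n y‖ := by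
    simp only [norm_F, MeasureTheory.integral_const_mul]
    exact hf.norm.mul_right _
  convert! MeasureTheory.hasSum_integral_of_summable_integral_norm integrable_F summable_F using 1
  · funext n
    rcases eq_or_ne n 0 with rfl | hn
    · simp [F, hf0]
    · simp only [F_eq]
      rw [MeasureTheory.integral_const_mul, integral_cpow_neg_mul_cesaroKernel hσ (by positivity)]
      ring
  · simp only [F, tsum_mul_right, LSeries]

lemma two_pi_mul_sum_mul_sub_div_eq_integral (hf0 : f 0 = 0) (hx : 0 < x) {σ : ℝ} (hσ : 1 ≤ σ)
    (hf : LSeriesSummable f σ) :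
    2 * π * ((∑ n ∈ Finset.Ioc 0 ⌊x⌋₊, f n * (x - n)) / x) =
      ∫ y : ℝ, LSeries f (σ + y * Complex.I) *
        ((x : ℂ) ^ (σ + y * Complex.I) * cesaroKernel (σ + y * Complex.I)) := by
  refine HasSum.unique ?_ (hasSum_mul_max_one_sub_div hf0 hx hσ hf)
  rw [Finset.sum_div, Finset.mul_sum]
  have term_eq (n : ℕ) (hn : n ∈ Finset.Ioc 0 ⌊x⌋₊) : 2 * π * (f n * (x - n) / x) =
      2 * π * (f n * (max (1 - n / x) 0 : ℝ)) := by
    have hnx : (n : ℝ) ≤ x := (Nat.le_floor_iff hx.le).1 (Finset.mem_Ioc.1 hn).2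
    have hx0 : (x : ℂ) ≠ 0 := Complex.ofReal_ne_zero.2 hx.ne'
    rw [max_eq_left (sub_nonneg.2 ((div_le_one hx).2 hnx))]
    push_cast
    field
  rw [Finset.sum_congr rfl term_eq]
  refine hasSum_sum_of_ne_finset_zero fun n hn ↦ ?_
  rcases eq_or_ne n 0 with rfl | hn0
  · simp [hf0]
  have hxn : x < n := Nat.lt_of_floor_lt (by simpa [Nat.pos_of_ne_zero hn0] using hn)
  rw [max_eq_right (sub_nonpos.2 ((one_le_div hx).2 hxn.le))]
  simp

end CesaroSum

lemma rpow_one_add_inv_one_add_log_le {x : ℝ} (hx : 1 ≤ x) :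
    x ^ (1 + (1 + Real.log x)⁻¹) ≤ Real.exp 1 * x := by
  have hlog : 0 ≤ Real.log x := Real.log_nonneg hx
  rw [Real.rpow_add (by linarith), Real.rpow_one, mul_comm, Real.rpow_def_of_pos (by linarith)]
  gcongr
  rw [← div_eq_mul_inv, div_le_one (by linarith)]
  linarith

lemma exists_norm_sum_mul_sub_le {f : ℕ → ℂ} (hf0 : f 0 = 0)
    (hf : ∀ s : ℂ, 1 < s.re → LSeriesSummable f s) {C θ : ℝ} (hθ : θ < 1)
    (hbound : ∀ s : ℂ, 1 < s.re → s.re ≤ 2 → ‖LSeries f s‖ ≤ C * (1 + |s.im|) ^ θ) :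
    ∃ A, ∀ x : ℝ, 1 ≤ x → ‖∑ n ∈ Finset.Ioc 0 ⌊x⌋₊, f n * (x - n)‖ ≤ A * x ^ 2 := by
  have hC : 0 ≤ C := by simpa using (norm_nonneg _).trans (hbound 2 (by simp) (by simp))
  have hint : MeasureTheory.Integrable fun y : ℝ ↦ (1 + ‖y‖) ^ (-(2 - θ)) :=
    integrable_one_add_norm (by simp; linarith)
  refine ⟨C * 2 * Real.exp 1 * (∫ y : ℝ, (1 + ‖y‖) ^ (-(2 - θ))) / (2 * π), fun x hx ↦ ?_⟩
  have hlog : 0 ≤ Real.log x := Real.log_nonneg hx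
  set σ := 1 + (1 + Real.log x)⁻¹
  have hσ : 1 < σ := lt_add_of_pos_right _ (by positivity)
  have hσ2 : σ ≤ 2 := by linarith [inv_le_one_of_one_le₀ (by linarith : 1 ≤ 1 + Real.log x)]
  have integrand_le (y : ℝ) : ‖LSeries f (σ + y * Complex.I) *
      ((x : ℂ) ^ (σ + y * Complex.I) * cesaroKernel (σ + y * Complex.I))‖ ≤
      C * 2 * (Real.exp 1 * x) * (1 + ‖y‖) ^ (-(2 - θ)) := by
    have hL := hbound (σ + y * Complex.I) (by simpa using hσ) (by simpa using hσ2)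
    have hk := norm_cesaroKernel_le (s := σ + y * Complex.I) (by simpa using hσ.le)
    have hpow : ‖(x : ℂ) ^ (σ + y * Complex.I)‖ ≤ Real.exp 1 * x := by
      rw [Complex.norm_cpow_eq_rpow_re_of_pos (by linarith)]
      simpa using rpow_one_add_inv_one_add_log_le hx
    have him : |(σ + y * Complex.I : ℂ).im| = ‖y‖ := by simp
    rw [him] at hL hk
    rw [norm_mul, norm_mul, neg_sub, sub_eq_add_neg, Real.rpow_add (by positivity)]
    calc _ ≤ C * (1 + ‖y‖) ^ θ * (Real.exp 1 * x * (2 * (1 + ‖y‖) ^ (-2 : ℝ))) := by gcongr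
      _ = _ := by ring
  have integral_le := MeasureTheory.norm_integral_le_of_norm_le (hint.const_mul _)
    (Eventually.of_forall integrand_le)
  rw [← two_pi_mul_sum_mul_sub_div_eq_integral hf0 (by linarith) hσ.le
    (hf σ (by simpa using hσ)), MeasureTheory.integral_const_mul] at integral_le
  have two_pi_norm : ‖(2 * π : ℂ)‖ = 2 * π := by
    exact_mod_cast Complex.norm_of_nonneg Real.two_pi_pos.le
  rw [norm_mul, norm_div, Complex.norm_of_nonneg (by linarith : 0 ≤ x), two_pi_norm] at integral_le
  calc ‖∑ n ∈ Finset.Ioc 0 ⌊x⌋₊, f n * (x - n)‖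
      = 2 * π * (‖∑ n ∈ Finset.Ioc 0 ⌊x⌋₊, f n * (x - n)‖ / x) * (x / (2 * π)) := by field
    _ ≤ C * 2 * (Real.exp 1 * x) * (∫ y : ℝ, (1 + ‖y‖) ^ (-(2 - θ))) * (x / (2 * π)) := by gcongr
    _ = _ := by ring

/-! ### Unsmoothing -/

/-- The Cesàro sum `∑_{n ≤ N} f n (N - n)`, which is also `∑_{M < N} ∑_{n ≤ M} f n`. -/
def cesaroSum (f : ℕ → ℝ) (N : ℕ) : ℝ := ∑ n ∈ Finset.Ioc 0 N, f n * (N - n)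

lemma exists_abs_cesaroSum_log_pow_mul_vonMangoldt_sub_one_le {k : ℕ} (hk : k ≠ 0) :
    ∃ A > 0, ∀ N : ℕ, |cesaroSum
      (fun n ↦ Real.log n ^ k * (ArithmeticFunction.vonMangoldt n - 1)) N| ≤ A * N ^ 2 := by
  obtain ⟨C, -, hC⟩ :=
    exists_norm_iteratedDeriv_vonMangoldtSubOneLFunction_le k one_half_pos one_half_lt_one.le
  obtain ⟨A, hA⟩ := exists_norm_sum_mul_sub_le (by simp [hk])
    (fun s hs ↦ LSeriesSummable_log_pow_mul_vonMangoldt_sub_one k hs) one_half_lt_one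
    fun s hs hs2 ↦ by
      rw [LSeries_log_pow_mul_vonMangoldt_sub_one k hs, norm_mul, norm_pow, norm_neg, norm_one,
        one_pow, one_mul]
      exact hC s hs.le hs2
  refine ⟨|A| + 1, by positivity, fun N ↦ ?_⟩
  rcases N.eq_zero_or_pos with rfl | hN
  · simp [cesaroSum]
  have hAN := hA N (by exact_mod_cast hN)
  rw [Nat.floor_natCast, Complex.ofReal_natCast] at hAN
  rw [cesaroSum, ← Real.norm_eq_abs, ← Complex.norm_real]
  push_cast at hAN ⊢
  refine hAN.trans ?_
  gcongr
  linarith [le_abs_self A]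

section Unsmoothing

variable {f : ℕ → ℝ} {K h : ℕ} {w : ℝ}

lemma cesaroSum_add_sub_cesaroSum (f : ℕ → ℝ) (K h : ℕ) :
    cesaroSum f (K + h) - cesaroSum f K =
      h * ∑ n ∈ Finset.Ioc 0 K, f n + ∑ n ∈ Finset.Ioc K (K + h), f n * ((K + h : ℕ) - n) := by
  rw [cesaroSum, cesaroSum, ← Finset.sum_Ioc_consecutive _ K.zero_le (K.le_add_right h),
    Finset.mul_sum, add_sub_right_comm, ← Finset.sum_sub_distrib]
  congr 1
  exact Finset.sum_congr rfl fun n _ ↦ by push_cast; ring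

lemma neg_sq_mul_le_sum_Ioc_mul {g : ℕ → ℝ} (hw : 0 ≤ w)
    (hf : ∀ n ∈ Finset.Ioc K (K + h), -w ≤ f n)
    (hg : ∀ n ∈ Finset.Ioc K (K + h), g n ∈ Set.Icc (0 : ℝ) h) :
    -(h ^ 2 * w) ≤ ∑ n ∈ Finset.Ioc K (K + h), f n * g n :=
  calc -(h ^ 2 * w) = ∑ _n ∈ Finset.Ioc K (K + h), -(w * h) := by
        rw [Finset.sum_const, Nat.card_Ioc, Nat.add_sub_cancel_left, nsmul_eq_mul]
        ring
    _ ≤ ∑ n ∈ Finset.Ioc K (K + h), f n * g n := Finset.sum_le_sum fun _ hn ↦ by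
        nlinarith [hf _ hn, (hg _ hn).1, (hg _ hn).2]

lemma mul_sum_Ioc_le_cesaroSum_sub_add (hw : 0 ≤ w)
    (hf : ∀ n ∈ Finset.Ioc K (K + h), -w ≤ f n) :
    h * ∑ n ∈ Finset.Ioc 0 K, f n ≤ cesaroSum f (K + h) - cesaroSum f K + h ^ 2 * w := by
  have htail : -(h ^ 2 * w) ≤ ∑ n ∈ Finset.Ioc K (K + h), f n * ((K + h : ℕ) - n) := by
    refine neg_sq_mul_le_sum_Ioc_mul hw hf fun n hn ↦ ?_
    have hKn : (K : ℝ) ≤ n := by exact_mod_cast (Finset.mem_Ioc.1 hn).1.le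
    have hnK : (n : ℝ) ≤ (K + h : ℕ) := by exact_mod_cast (Finset.mem_Ioc.1 hn).2
    push_cast at hnK ⊢
    constructor <;> linarith
  rw [cesaroSum_add_sub_cesaroSum]
  linarith

lemma cesaroSum_sub_le_mul_sum_Ioc_add (hw : 0 ≤ w)
    (hf : ∀ n ∈ Finset.Ioc K (K + h), -w ≤ f n) :
    cesaroSum f (K + h) - cesaroSum f K ≤ h * ∑ n ∈ Finset.Ioc 0 (K + h), f n + h ^ 2 * w := by
  have htail : -(h ^ 2 * w) ≤ ∑ n ∈ Finset.Ioc K (K + h), f n * (n - K) := by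
    refine neg_sq_mul_le_sum_Ioc_mul hw hf fun n hn ↦ ?_
    have hKn : (K : ℝ) ≤ n := by exact_mod_cast (Finset.mem_Ioc.1 hn).1.le
    have hnK : (n : ℝ) ≤ (K + h : ℕ) := by exact_mod_cast (Finset.mem_Ioc.1 hn).2
    push_cast at hnK
    constructor <;> linarith
  have split : ∑ n ∈ Finset.Ioc K (K + h), f n * ((K + h : ℕ) - n) =
      h * ∑ n ∈ Finset.Ioc K (K + h), f n - ∑ n ∈ Finset.Ioc K (K + h), f n * (n - K) := by
    rw [Finset.mul_sum, ← Finset.sum_sub_distrib]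
    exact Finset.sum_congr rfl fun n _ ↦ by push_cast; ring
  rw [cesaroSum_add_sub_cesaroSum, split,
    ← Finset.sum_Ioc_consecutive f K.zero_le (K.le_add_right h)]
  linarith

lemma abs_sum_Ioc_le_of_abs_cesaroSum_le {N : ℕ} {E : ℝ} (hh : 0 < h) (hhN : h ≤ N) (hw : 0 ≤ w)
    (hf : ∀ n ≤ N + h, -w ≤ f n) (hE : ∀ M ≤ N + h, |cesaroSum f M| ≤ E) :
    |∑ n ∈ Finset.Ioc 0 N, f n| ≤ 2 * E / h + h * w := by
  have hh' : (0 : ℝ) < h := by exact_mod_cast hh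
  obtain ⟨K, rfl⟩ := Nat.exists_eq_add_of_le' hhN
  have upper := mul_sum_Ioc_le_cesaroSum_sub_add (K := K + h) (h := h) hw
    fun n hn ↦ hf n (Finset.mem_Ioc.1 hn).2
  have lower := cesaroSum_sub_le_mul_sum_Ioc_add (K := K) (h := h) hw
    fun n hn ↦ hf n (by linarith [(Finset.mem_Ioc.1 hn).2])
  have hE₂ := abs_le.1 (hE (K + h + h) le_rfl)
  have hE₁ := abs_le.1 (hE (K + h) (by omega))
  have hE₀ := abs_le.1 (hE K (by omega))
  refine le_of_mul_le_mul_left ?_ hh'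
  rw [← abs_of_pos hh', ← abs_mul, abs_of_pos hh', mul_add, mul_div_cancel₀ _ hh'.ne', abs_le]
  constructor <;> nlinarith

end Unsmoothing

lemma neg_log_pow_le_log_pow_mul_vonMangoldt_sub_one (k : ℕ) {n M : ℕ} (hnM : n ≤ M) :
    -Real.log M ^ k ≤ Real.log n ^ k * (ArithmeticFunction.vonMangoldt n - 1) := by
  have hlog0 : 0 ≤ Real.log n := Real.log_natCast_nonneg n
  have hlog : Real.log n ≤ Real.log M := by
    rcases n.eq_zero_or_pos with rfl | hn
    · simpa using Real.log_natCast_nonneg M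
    · gcongr
  have hpow : Real.log n ^ k ≤ Real.log M ^ k := by gcongr
  have hΛ : 0 ≤ Real.log n ^ k * ArithmeticFunction.vonMangoldt n :=
    mul_nonneg (by positivity) ArithmeticFunction.vonMangoldt_nonneg
  linarith

lemma one_le_log_natCast {N : ℕ} (hN : 3 ≤ N) : 1 ≤ Real.log N := by
  have hN' : (3 : ℝ) ≤ N := by exact_mod_cast hN
  rw [Real.le_log_iff_exp_le (by linarith)]
  linarith [Real.exp_one_lt_d9]

lemma eventually_log_natCast_pow_le (m : ℕ) : ∀ᶠ N : ℕ in atTop, Real.log N ^ m ≤ N := by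
  filter_upwards [tendsto_natCast_atTop_atTop.eventually
    ((isLittleO_pow_log_id_atTop (n := m)).bound one_pos)] with N hN
  simpa [abs_of_nonneg (Real.log_natCast_nonneg N)] using hN

/- The unsmoothing step is `h ≈ N / (log N) ^ m`, which balances `N ^ 2 / h` against
`h (log N) ^ (2 * m)`. -/
lemma isBigO_sum_log_pow_mul_vonMangoldt_sub_one {m : ℕ} (hm : m ≠ 0) :
    (fun N : ℕ ↦ ∑ n ∈ Finset.Ioc 0 N,
      Real.log n ^ (2 * m) * (ArithmeticFunction.vonMangoldt n - 1)) =O[atTop]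
        fun N ↦ N * Real.log N ^ m := by
  obtain ⟨A, hA, hcesaro⟩ :=
    exists_abs_cesaroSum_log_pow_mul_vonMangoldt_sub_one_le (k := 2 * m) (by simpa using hm)
  refine Asymptotics.IsBigO.of_bound (8 * A + 2 * 2 ^ (2 * m)) ?_
  filter_upwards [eventually_ge_atTop 3, eventually_log_natCast_pow_le m] with N hN hlog_le
  have hL : 1 ≤ Real.log N := one_le_log_natCast hN
  set L := Real.log N
  set h := ⌈N / L ^ m⌉₊
  have one_le_quot : 1 ≤ N / L ^ m := (one_le_div (by positivity)).2 hlog_le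
  have le_h : N / L ^ m ≤ h := Nat.le_ceil _
  have h_le : h ≤ 2 * (N / L ^ m) := by linarith [Nat.ceil_lt_add_one (by linarith : 0 ≤ N / L ^ m)]
  have h_le_N : h ≤ N := Nat.ceil_le.2 (div_le_self (by positivity) (one_le_pow₀ hL))
  have log_le : Real.log (N + h : ℕ) ≤ 2 * L := by
    rw [← Nat.cast_two, ← Real.log_pow]
    gcongr
    exact_mod_cast (by nlinarith : N + h ≤ N ^ 2)
  have hunsmooth := abs_sum_Ioc_le_of_abs_cesaroSum_le (w := (2 * L) ^ (2 * m))
    (E := A * (2 * N) ^ 2) (by exact_mod_cast (by linarith : (0 : ℝ) < h)) h_le_N (by positivity)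
    (fun n hn ↦ (neg_le_neg (by gcongr)).trans
      (neg_log_pow_le_log_pow_mul_vonMangoldt_sub_one (2 * m) hn))
    (fun M hM ↦ (hcesaro M).trans (by gcongr; exact_mod_cast (by omega : M ≤ 2 * N)))
  rw [Real.norm_eq_abs, Real.norm_of_nonneg (by positivity)]
  calc _ ≤ 2 * (A * (2 * N) ^ 2) / h + h * (2 * L) ^ (2 * m) := hunsmooth
    _ ≤ 2 * (A * (2 * N) ^ 2) / (N / L ^ m) + 2 * (N / L ^ m) * (2 * L) ^ (2 * m) := by gcongr
    _ = (8 * A + 2 * 2 ^ (2 * m)) * (N * L ^ m) := by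
      rw [mul_pow 2 L, two_mul m, pow_add L]
      field

/-! ### The prime number theorem with error term -/

lemma sum_Ioc_mul_eq_sum_mul_add_sum_Ico {R : Type*} [Ring R] (b w : ℕ → R) {M N : ℕ}
    (hMN : M ≤ N) :
    ∑ n ∈ Finset.Ioc M N, b n * w n = (∑ n ∈ Finset.Ioc M N, b n) * w N +
      ∑ n ∈ Finset.Ico M N, (∑ k ∈ Finset.Ioc M n, b k) * (w n - w (n + 1)) := by
  induction N, hMN using Nat.le_induction with
  | base => simp
  | succ N hMN ih =>
    rw [Finset.sum_Ioc_succ_top hMN, Finset.sum_Ioc_succ_top hMN, Finset.sum_Ico_succ_top hMN, ih]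
    noncomm_ring

lemma abs_sum_Ioc_mul_le {b w : ℕ → ℝ} {M N : ℕ} {K : ℝ} (hMN : M ≤ N)
    (hK : ∀ n ∈ Set.Icc M N, |∑ k ∈ Finset.Ioc M n, b k| ≤ K) :
    |∑ n ∈ Finset.Ioc M N, b n * w n| ≤
      K * (|w N| + ∑ n ∈ Finset.Ico M N, |w n - w (n + 1)|) := by
  rw [sum_Ioc_mul_eq_sum_mul_add_sum_Ico b w hMN, mul_add, Finset.mul_sum]
  refine (abs_add_le _ _).trans (add_le_add ?_ ((Finset.abs_sum_le_sum_abs _ _).trans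
    (Finset.sum_le_sum fun n hn ↦ ?_)))
  · rw [abs_mul]
    gcongr
    exact hK N ⟨hMN, le_rfl⟩
  · rw [abs_mul]
    gcongr
    exact hK n ⟨(Finset.mem_Ico.1 hn).1, (Finset.mem_Ico.1 hn).2.le⟩

lemma abs_sum_Ioc_mul_le_of_antitoneOn {b w : ℕ → ℝ} {M N : ℕ} {K : ℝ} (hMN : M ≤ N)
    (hK : ∀ n ∈ Set.Icc M N, |∑ k ∈ Finset.Ioc M n, b k| ≤ K)
    (hw : AntitoneOn w (Set.Icc M N)) (hwN : 0 ≤ w N) :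
    |∑ n ∈ Finset.Ioc M N, b n * w n| ≤ K * w M := by
  have variation_eq : ∑ n ∈ Finset.Ico M N, |w n - w (n + 1)| = w M - w N := by
    rw [← neg_sub (w N), ← Finset.sum_Ico_sub w hMN, ← Finset.sum_neg_distrib]
    refine Finset.sum_congr rfl fun n hn ↦ ?_
    obtain ⟨hMn, hnN⟩ := Finset.mem_Ico.1 hn
    rw [neg_sub, abs_of_nonneg (sub_nonneg.2 (hw ⟨hMn, hnN.le⟩ ⟨by lia, hnN⟩ n.le_succ))]
  refine (abs_sum_Ioc_mul_le hMN hK).trans_eq ?_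
  rw [variation_eq, abs_of_nonneg hwN, add_sub_cancel]

lemma isBigO_sqrt_div_log_pow (m : ℕ) : Real.sqrt =O[atTop] fun x ↦ x / Real.log x ^ m := by
  refine .of_bound 1 ?_
  filter_upwards [(isLittleO_log_rpow_rpow_atTop m one_half_pos).bound one_pos,
    eventually_gt_atTop 1] with x hx hx1
  have log_pos : 0 < Real.log x := Real.log_pos hx1
  rw [Real.rpow_natCast, ← Real.sqrt_eq_rpow, one_mul, norm_of_nonneg (by positivity),
    norm_of_nonneg (by positivity)] at hx
  rw [one_mul, norm_of_nonneg (by positivity), norm_of_nonneg (by positivity),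
    le_div_iff₀ (by positivity)]
  calc √x * Real.log x ^ m ≤ √x * √x := by gcongr
    _ = x := Real.mul_self_sqrt (by positivity)

lemma psi_natCast_sub_natCast (N : ℕ) :
    Chebyshev.psi N - N = ∑ n ∈ Finset.Ioc 0 N, (ArithmeticFunction.vonMangoldt n - 1) := by
  simp [Chebyshev.psi]

lemma abs_psi_sub_self_le {x : ℝ} (hx : 0 ≤ x) : |Chebyshev.psi x - x| ≤ (Real.log 4 + 4) * x := by
  have log_pos : 0 < Real.log 4 := Real.log_pos (by norm_num)
  have psi_le := Chebyshev.psi_le_const_mul_self hx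
  rw [abs_le]
  constructor <;> nlinarith [Chebyshev.psi_nonneg x]

lemma log_natCast_le_four_mul_log_sqrt {N : ℕ} (hN : 2 ≤ N.sqrt) :
    Real.log N ≤ 4 * Real.log N.sqrt := by
  have le_pow : N ≤ N.sqrt ^ 4 := by
    calc N ≤ (N.sqrt + 1) ^ 2 := (sq (N.sqrt + 1) ▸ N.lt_succ_sqrt).le
      _ ≤ (N.sqrt ^ 2) ^ 2 := by
        gcongr
        nlinarith
      _ = N.sqrt ^ 4 := by ring
  have N_pos : 0 < N := by
    have := N.sqrt_le_self
    lia
  rw [← Nat.cast_ofNat (n := 4), ← Real.log_pow]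
  exact Real.log_le_log (by exact_mod_cast N_pos) (by exact_mod_cast le_pow)

lemma abs_sum_Ioc_le_of_abs_sum_Ioc_log_pow_mul_le {b : ℕ → ℝ} {M N k : ℕ} {K : ℝ} (hM : 2 ≤ M)
    (hMN : M ≤ N)
    (hK : ∀ n ∈ Set.Icc M N, |∑ j ∈ Finset.Ioc M n, Real.log j ^ k * b j| ≤ K) :
    |∑ n ∈ Finset.Ioc M N, b n| ≤ K / Real.log M ^ k := by
  have log_pos {n : ℕ} (hn : M ≤ n) : 0 < Real.log n :=
    Real.log_pos (by exact_mod_cast hM.trans hn)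
  have weight_antitone : AntitoneOn (fun n : ℕ ↦ (Real.log n ^ k)⁻¹) (Set.Icc M N) := by
    intro a ha b _ hab
    have log_pos_a := log_pos ha.1
    have a_pos : 0 < a := by grind
    dsimp only
    gcongr
  have weight_nonneg : 0 ≤ (Real.log N ^ k)⁻¹ := by
    have := log_pos hMN
    positivity
  rw [div_eq_mul_inv]
  refine (congrArg abs (Finset.sum_congr rfl fun n hn ↦ ?_)).trans_le
    (abs_sum_Ioc_mul_le_of_antitoneOn hMN hK weight_antitone weight_nonneg)
  have := (log_pos (Finset.mem_Ioc.1 hn).1.le).ne'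
  field_simp

lemma tendsto_natSqrt_atTop : Tendsto Nat.sqrt atTop atTop :=
  tendsto_atTop_atTop.2 fun b ↦ ⟨b * b, fun _ ha ↦ Nat.le_sqrt.2 ha⟩

lemma sum_Ioc_eq_sum_Ioc_sub_sum_Ioc (f : ℕ → ℝ) {M N : ℕ} (hMN : M ≤ N) :
    ∑ n ∈ Finset.Ioc M N, f n = ∑ n ∈ Finset.Ioc 0 N, f n - ∑ n ∈ Finset.Ioc 0 M, f n := by
  rw [eq_sub_iff_add_eq', Finset.sum_Ioc_consecutive f M.zero_le hMN]

lemma abs_sum_Ioc_natSqrt_vonMangoldt_sub_one_le {m N : ℕ} {C : ℝ} (hC0 : 0 ≤ C) (hN : 3 ≤ N.sqrt)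
    (hC : ∀ n, N.sqrt ≤ n → |∑ k ∈ Finset.Ioc 0 n,
      Real.log k ^ (2 * m) * (ArithmeticFunction.vonMangoldt k - 1)| ≤ C * (n * Real.log n ^ m)) :
    |∑ n ∈ Finset.Ioc N.sqrt N, (ArithmeticFunction.vonMangoldt n - 1)| ≤
      2 * C * 16 ^ m * (N / Real.log N ^ m) := by
  have sqrt_le := N.sqrt_le_self
  have log_le := log_natCast_le_four_mul_log_sqrt (by lia : 2 ≤ N.sqrt)
  have one_le_log := one_le_log_natCast (hN.trans sqrt_le)
  have partial_sum_le (n) (hn : n ∈ Set.Icc N.sqrt N) :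
      |∑ k ∈ Finset.Ioc N.sqrt n, Real.log k ^ (2 * m) * (ArithmeticFunction.vonMangoldt k - 1)| ≤
        2 * C * (N * Real.log N ^ m) := by
    have le_top {j : ℕ} (hj : N.sqrt ≤ j) (hjN : j ≤ N) :
        C * (j * Real.log j ^ m) ≤ C * (N * Real.log N ^ m) := by
      have := one_le_log_natCast (hN.trans hj)
      have : (0 : ℝ) < j := by norm_cast; lia
      gcongr
    rw [sum_Ioc_eq_sum_Ioc_sub_sum_Ioc _ hn.1]
    linarith [abs_sub (∑ k ∈ Finset.Ioc 0 n,
      Real.log k ^ (2 * m) * (ArithmeticFunction.vonMangoldt k - 1)) (∑ k ∈ Finset.Ioc 0 N.sqrt,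
      Real.log k ^ (2 * m) * (ArithmeticFunction.vonMangoldt k - 1)), hC n hn.1, hC _ le_rfl,
      le_top hn.1 hn.2, le_top le_rfl sqrt_le]
  refine (abs_sum_Ioc_le_of_abs_sum_Ioc_log_pow_mul_le (by lia) sqrt_le partial_sum_le).trans ?_
  calc 2 * C * (N * Real.log N ^ m) / Real.log N.sqrt ^ (2 * m)
      ≤ 2 * C * (N * Real.log N ^ m) / (Real.log N / 4) ^ (2 * m) := by
        gcongr
        linarith
    _ = 2 * C * 16 ^ m * (N / Real.log N ^ m) := by
        rw [div_pow, pow_mul 4, mul_comm 2 m, pow_mul (Real.log N)]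
        norm_num
        field_simp

theorem isBigO_psi_sub_natCast {m : ℕ} (hm : m ≠ 0) :
    (fun N : ℕ ↦ Chebyshev.psi N - N) =O[atTop] fun N : ℕ ↦ N / Real.log N ^ m := by
  have psi_split (N : ℕ) : Chebyshev.psi N - N = (Chebyshev.psi N.sqrt - N.sqrt) +
      ∑ n ∈ Finset.Ioc N.sqrt N, (ArithmeticFunction.vonMangoldt n - 1) := by
    rw [psi_natCast_sub_natCast, psi_natCast_sub_natCast,
      Finset.sum_Ioc_consecutive _ (Nat.zero_le _) N.sqrt_le_self]
  refine .congr_left (.add ?_ ?_) fun N ↦ (psi_split N).symm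
  · refine .trans (.of_bound (Real.log 4 + 4) (Eventually.of_forall fun N ↦ ?_))
      ((isBigO_sqrt_div_log_pow m).comp_tendsto tendsto_natCast_atTop_atTop)
    rw [Function.comp_apply, norm_of_nonneg (Real.sqrt_nonneg _)]
    refine (abs_psi_sub_self_le N.sqrt.cast_nonneg).trans ?_
    gcongr
    exact Real.nat_sqrt_le_real_sqrt
  · obtain ⟨C, hC0, hC⟩ := (isBigO_sum_log_pow_mul_vonMangoldt_sub_one hm).exists_nonneg
    obtain ⟨n₀, hn₀⟩ := eventually_atTop.1 hC.bound
    refine .of_bound (2 * C * 16 ^ m) ?_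
    filter_upwards [tendsto_natSqrt_atTop.eventually_ge_atTop (max 3 n₀)] with N hN
    rw [norm_of_nonneg (by positivity : 0 ≤ N / Real.log N ^ m)]
    refine abs_sum_Ioc_natSqrt_vonMangoldt_sub_one_le hC0 (by lia) fun n hn ↦ ?_
    exact (hn₀ n (by lia)).trans_eq (by rw [norm_of_nonneg (by positivity)])

theorem isBigO_theta_sub_natCast {m : ℕ} (hm : m ≠ 0) :
    (fun N : ℕ ↦ Chebyshev.theta N - N) =O[atTop] fun N : ℕ ↦ N / Real.log N ^ m := by
  have psi_sub_theta := (Chebyshev.isBigO_psi_sub_theta_sqrt.trans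
    (isBigO_sqrt_div_log_pow m)).comp_tendsto tendsto_natCast_atTop_atTop
  refine ((isBigO_psi_sub_natCast hm).sub psi_sub_theta).congr_left fun N ↦ ?_
  simp only [Function.comp_apply, Pi.sub_apply]
  ring

/-! ### Replacing primes by integers -/

lemma abs_fract_sub_fract_le {a b : ℝ} (hba : b ≤ a) :
    |Int.fract a - Int.fract b| ≤ (a + ⌊a⌋) - (b + ⌊b⌋) := by
  have floor_le : (⌊b⌋ : ℝ) ≤ ⌊a⌋ := by exact_mod_cast Int.floor_le_floor hba
  rw [abs_le, Int.fract, Int.fract]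
  constructor <;> linarith

lemma sum_Ico_abs_fract_sub_fract_le {g : ℕ → ℝ} {M N : ℕ} (hMN : M ≤ N)
    (hg : AntitoneOn g (Set.Icc M N)) (hgN : 0 ≤ g N) :
    ∑ n ∈ Finset.Ico M N, |Int.fract (g n) - Int.fract (g (n + 1))| ≤ 2 * g M := by
  have floor_nonneg : (0 : ℝ) ≤ ⌊g N⌋ := by exact_mod_cast Int.floor_nonneg.2 hgN
  calc ∑ n ∈ Finset.Ico M N, |Int.fract (g n) - Int.fract (g (n + 1))|
      ≤ ∑ n ∈ Finset.Ico M N, (-(g (n + 1) + ⌊g (n + 1)⌋) - -(g n + ⌊g n⌋)) := by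
        refine Finset.sum_le_sum fun n hn ↦ ?_
        obtain ⟨hMn, hnN⟩ := Finset.mem_Ico.1 hn
        rw [neg_sub_neg]
        exact abs_fract_sub_fract_le (hg ⟨hMn, hnN.le⟩ ⟨by lia, hnN⟩ n.le_succ)
    _ = (g M + ⌊g M⌋) - (g N + ⌊g N⌋) := by
        rw [Finset.sum_Ico_sub (fun n ↦ -(g n + ⌊g n⌋)) hMN, neg_sub_neg]
    _ ≤ 2 * g M := by linarith [Int.floor_le (g M)]

lemma abs_sum_Ioc_mul_fract_div_le {b : ℕ → ℝ} {M N : ℕ} {x K : ℝ} (hx : 0 ≤ x) (hM : M ≠ 0)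
    (hMN : M ≤ N) (hK : ∀ n ∈ Set.Icc M N, |∑ k ∈ Finset.Ioc M n, b k| ≤ K) :
    |∑ n ∈ Finset.Ioc M N, b n * Int.fract (x / n)| ≤ K * (1 + 2 * (x / M)) := by
  have K_nonneg : 0 ≤ K := (abs_nonneg _).trans (hK M ⟨le_rfl, hMN⟩)
  have antitone_div : AntitoneOn (fun n : ℕ ↦ x / n) (Set.Icc M N) := by
    intro a ha b _ hab
    have a_pos : 0 < a := by grind
    dsimp only
    gcongr
  have fract_le_one : |Int.fract (x / N)| ≤ 1 := by
    rw [Int.abs_fract]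
    exact (Int.fract_lt_one _).le
  refine (abs_sum_Ioc_mul_le (w := fun n ↦ Int.fract (x / n)) hMN hK).trans ?_
  gcongr
  exact sum_Ico_abs_fract_sub_fract_le hMN antitone_div (by positivity)

/-- The weight `1_{n prime} log n - 1`, whose partial sums are `θ(N) - N`. -/
noncomputable def primeLogSubOne (n : ℕ) : ℝ := (if n.Prime then Real.log n else 0) - 1

lemma sum_Ioc_zero_primeLogSubOne (N : ℕ) :
    ∑ n ∈ Finset.Ioc 0 N, primeLogSubOne n = Chebyshev.theta N - N := by
  simp [primeLogSubOne, Chebyshev.theta, Finset.sum_filter]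

lemma abs_sum_Ioc_zero_primeLogSubOne_mul_le {w : ℕ → ℝ} (hw : ∀ n, |w n| ≤ 1) (N : ℕ) :
    |∑ n ∈ Finset.Ioc 0 N, primeLogSubOne n * w n| ≤ (Real.log 4 + 1) * N := by
  calc |∑ n ∈ Finset.Ioc 0 N, primeLogSubOne n * w n|
      ≤ ∑ n ∈ Finset.Ioc 0 N, |primeLogSubOne n * w n| := Finset.abs_sum_le_sum_abs _ _
    _ ≤ ∑ n ∈ Finset.Ioc 0 N, ((if n.Prime then Real.log n else 0) + 1) := by
        refine Finset.sum_le_sum fun n _ ↦ ?_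
        have ite_nonneg : 0 ≤ if n.Prime then Real.log n else 0 := by
          split_ifs
          exacts [Real.log_natCast_nonneg n, le_rfl]
        rw [abs_mul]
        refine (mul_le_of_le_one_right (abs_nonneg _) (hw n)).trans ?_
        rw [primeLogSubOne, abs_le]
        constructor <;> linarith
    _ = Chebyshev.theta N + N := by
        simp [Chebyshev.theta, Finset.sum_filter, Finset.sum_add_distrib]
    _ ≤ (Real.log 4 + 1) * N := by
        linarith [Chebyshev.theta_le_log4_mul_x (Nat.cast_nonneg (α := ℝ) N)]

section FloorDivLog

variable {x : ℝ}

lemma two_mul_sqrt_le_div_log (hlog : 1 ≤ Real.log x) (hsqrt : 2 * Real.log x ≤ √x) :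
    2 * √x ≤ x / Real.log x := by
  have sqrt_pos : 0 < √x := by linarith
  rw [le_div_iff₀ (by positivity)]
  nlinarith [Real.mul_self_sqrt (Real.sqrt_pos.1 sqrt_pos).le]

lemma div_log_le_two_mul_floor (hlog : 1 ≤ Real.log x) (hsqrt : 2 * Real.log x ≤ √x) :
    x / Real.log x ≤ 2 * ⌊x / Real.log x⌋₊ := by
  linarith [two_mul_sqrt_le_div_log hlog hsqrt, Nat.lt_floor_add_one (x / Real.log x)]

lemma log_le_two_mul_log_floor_div_log (hlog : 1 ≤ Real.log x) (hsqrt : 2 * Real.log x ≤ √x) :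
    Real.log x ≤ 2 * Real.log ⌊x / Real.log x⌋₊ := by
  have sqrt_pos : 0 < √x := by linarith
  have sqrt_le : √x ≤ ⌊x / Real.log x⌋₊ := by
    linarith [two_mul_sqrt_le_div_log hlog hsqrt, div_log_le_two_mul_floor hlog hsqrt]
  linarith [Real.log_sqrt (Real.sqrt_pos.1 sqrt_pos).le, Real.log_le_log sqrt_pos sqrt_le]

end FloorDivLog

lemma abs_sum_Ioc_primeLogSubOne_le {M N : ℕ} {C : ℝ} (hC0 : 0 ≤ C) (hM : 0 < Real.log M)
    (hMN : M ≤ N)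
    (hC : ∀ n : ℕ, M ≤ n → |Chebyshev.theta n - n| ≤ C * (n / Real.log n ^ 2)) :
    |∑ n ∈ Finset.Ioc M N, primeLogSubOne n| ≤ 2 * C * (N / Real.log M ^ 2) := by
  have theta_sub_le {n : ℕ} (hMn : M ≤ n) (hnN : n ≤ N) :
      |Chebyshev.theta n - n| ≤ C * (N / Real.log M ^ 2) := by
    have M_pos : 0 < (M : ℝ) := M.cast_nonneg.lt_of_ne fun h ↦ by simp [← h] at hM
    refine (hC n hMn).trans ?_
    gcongr
  rw [sum_Ioc_eq_sum_Ioc_sub_sum_Ioc _ hMN, sum_Ioc_zero_primeLogSubOne,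
    sum_Ioc_zero_primeLogSubOne]
  linarith [abs_sub (Chebyshev.theta N - N) (Chebyshev.theta M - M),
    theta_sub_le hMN le_rfl, theta_sub_le le_rfl hMN]

lemma abs_sum_Ioc_floor_div_log_primeLogSubOne_mul_fract_le {x C : ℝ} (hlog : 1 ≤ Real.log x)
    (hsqrt : 2 * Real.log x ≤ √x) (hC0 : 0 ≤ C)
    (hC : ∀ n : ℕ, ⌊x / Real.log x⌋₊ ≤ n → |Chebyshev.theta n - n| ≤ C * (n / Real.log n ^ 2)) :
    |∑ n ∈ Finset.Ioc ⌊x / Real.log x⌋₊ ⌊x⌋₊, primeLogSubOne n * Int.fract (x / n)| ≤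
      40 * C * (x / Real.log x) := by
  have x_pos : 0 < x := Real.sqrt_pos.1 (by linarith)
  have log_pos : 0 < Real.log x := by linarith
  have le_two_mul := div_log_le_two_mul_floor hlog hsqrt
  have log_le := log_le_two_mul_log_floor_div_log hlog hsqrt
  have floor_le_floor : ⌊x / Real.log x⌋₊ ≤ ⌊x⌋₊ := Nat.floor_le_floor (div_le_self x_pos.le hlog)
  set M := ⌊x / Real.log x⌋₊
  have M_pos : 0 < (M : ℝ) := by
    have : 0 < x / Real.log x := by positivity
    linarith
  have partial_sum_le (n) (hn : n ∈ Set.Icc M ⌊x⌋₊) :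
      |∑ k ∈ Finset.Ioc M n, primeLogSubOne k| ≤ 8 * C * (x / Real.log x ^ 2) := by
    have n_le : (n : ℝ) ≤ x := (Nat.le_floor_iff x_pos.le).1 hn.2
    calc |∑ k ∈ Finset.Ioc M n, primeLogSubOne k| ≤ 2 * C * (n / Real.log M ^ 2) :=
          abs_sum_Ioc_primeLogSubOne_le hC0 (by linarith) hn.1 hC
      _ ≤ 2 * C * (x / (Real.log x / 2) ^ 2) := by
          gcongr
          linarith
      _ = 8 * C * (x / Real.log x ^ 2) := by ring
  calc |∑ n ∈ Finset.Ioc M ⌊x⌋₊, primeLogSubOne n * Int.fract (x / n)|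
      ≤ 8 * C * (x / Real.log x ^ 2) * (1 + 2 * (x / M)) :=
        abs_sum_Ioc_mul_fract_div_le x_pos.le (by exact_mod_cast M_pos.ne') floor_le_floor
          partial_sum_le
    _ ≤ 8 * C * (x / Real.log x ^ 2) * (5 * Real.log x) := by
        have x_div_le : x / M ≤ 2 * Real.log x := by
          rw [div_le_iff₀ log_pos] at le_two_mul
          rw [div_le_iff₀ M_pos]
          linarith
        gcongr
        linarith
    _ = 40 * C * (x / Real.log x) := by
        field_simp
        ring

theorem isBigO_sum_primeLogSubOne_mul_fract :
    (fun x : ℝ ↦ ∑ n ∈ Finset.Ioc 0 ⌊x⌋₊, primeLogSubOne n * Int.fract (x / n)) =O[atTop]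
      fun x ↦ x / Real.log x := by
  obtain ⟨C, hC0, hC⟩ := (isBigO_theta_sub_natCast two_ne_zero).exists_nonneg
  obtain ⟨n₀, hn₀⟩ := eventually_atTop.1 hC.bound
  have eventually_two_mul_log_le_sqrt : ∀ᶠ x in atTop, 2 * Real.log x ≤ √x := by
    filter_upwards [(isLittleO_log_rpow_atTop one_half_pos).bound one_half_pos] with x hx
    rw [← Real.sqrt_eq_rpow, norm_of_nonneg (Real.sqrt_nonneg x)] at hx
    linarith [Real.le_norm_self (Real.log x)]
  refine .of_bound (Real.log 4 + 1 + 40 * C) ?_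
  filter_upwards [Real.tendsto_log_atTop.eventually_ge_atTop 1, eventually_two_mul_log_le_sqrt,
    eventually_ge_atTop ((n₀ : ℝ) ^ 2)] with x hlog hsqrt hx
  have x_pos : 0 < x := Real.sqrt_pos.1 (by linarith)
  have n₀_le : n₀ ≤ ⌊x / Real.log x⌋₊ := by
    refine Nat.le_floor ?_
    linarith [Real.le_sqrt_of_sq_le hx, two_mul_sqrt_le_div_log hlog hsqrt]
  have far := abs_sum_Ioc_floor_div_log_primeLogSubOne_mul_fract_le hlog hsqrt hC0
    fun n hn ↦ (hn₀ n (n₀_le.trans hn)).trans_eq (by rw [norm_of_nonneg (by positivity)])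
  have near := abs_sum_Ioc_zero_primeLogSubOne_mul_le (w := fun n ↦ Int.fract (x / n))
    (fun n ↦ by rw [Int.abs_fract]; exact (Int.fract_lt_one _).le) ⌊x / Real.log x⌋₊
  have floor_le : (⌊x / Real.log x⌋₊ : ℝ) ≤ x / Real.log x := Nat.floor_le (by positivity)
  rw [norm_of_nonneg (by positivity : 0 ≤ x / Real.log x), add_mul, Real.norm_eq_abs,
    ← Finset.sum_Ioc_consecutive _ (Nat.zero_le _)
      (Nat.floor_le_floor (div_le_self x_pos.le hlog))]
  refine (abs_add_le _ _).trans (add_le_add (near.trans ?_) far)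
  gcongr

/-! ### Dirichlet's divisor sum -/

lemma cast_harmonic_eq_sum_Ioc (n : ℕ) :
    (harmonic n : ℝ) = ∑ k ∈ Finset.Ioc 0 n, (k : ℝ)⁻¹ := by
  rw [harmonic_eq_sum_Icc]
  push_cast
  rfl

lemma log_natCast_add_one_sub_log_le (n : ℕ) : Real.log (n + 1) - Real.log n ≤ 1 / n := by
  rcases n.eq_zero_or_pos with rfl | hn
  · simp
  have n_pos : (0 : ℝ) < n := by exact_mod_cast hn
  rw [← Real.log_div (by positivity) n_pos.ne']
  refine (Real.log_le_sub_one_of_pos (by positivity)).trans_eq ?_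
  field_simp
  ring

lemma log_add_eulerMascheroniConstant_le_harmonic {n : ℕ} (hn : n ≠ 0) :
    Real.log n + Real.eulerMascheroniConstant ≤ harmonic n := by
  have := Real.eulerMascheroniConstant_lt_eulerMascheroniSeq' n
  rw [Real.eulerMascheroniSeq', if_neg hn] at this
  linarith

lemma harmonic_le_log_add_one_add_eulerMascheroniConstant (n : ℕ) :
    harmonic n ≤ Real.log (n + 1) + Real.eulerMascheroniConstant := by
  have := Real.eulerMascheroniSeq_lt_eulerMascheroniConstant n
  rw [Real.eulerMascheroniSeq] at this
  linarith

lemma sum_Ioc_sqrt_div_add_sqrt_mul_sqrt (N : ℕ) :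
    ∑ n ∈ Finset.Ioc N.sqrt N, N / n + N.sqrt * N.sqrt = ∑ n ∈ Finset.Ioc 0 N.sqrt, N / n := by
  have swap : ∑ a ∈ Finset.Ioc N.sqrt N, ∑ _b ∈ Finset.Ioc 0 (N / a), 1 =
      ∑ b ∈ Finset.Ioc 0 N.sqrt, ∑ _a ∈ Finset.Ioc N.sqrt (N / b), 1 := by
    refine Finset.sum_comm' fun a b ↦ ?_
    simp only [Finset.mem_Ioc]
    constructor
    · rintro ⟨⟨ha, -⟩, hb, hba⟩
      have mul_le := (Nat.le_div_iff_mul_le (by lia)).1 hba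
      refine ⟨⟨ha, (Nat.le_div_iff_mul_le hb).2 (by lia)⟩, hb, ?_⟩
      by_contra! hlt
      have := N.lt_succ_sqrt
      nlinarith
    · rintro ⟨⟨ha, hab⟩, hb, -⟩
      have mul_le := (Nat.le_div_iff_mul_le hb).1 hab
      exact ⟨⟨ha, by nlinarith⟩, hb, (Nat.le_div_iff_mul_le (by lia)).2 (by lia)⟩
  have sqrt_le_div {b : ℕ} (hb : b ∈ Finset.Ioc 0 N.sqrt) : N.sqrt ≤ N / b := by
    obtain ⟨hb0, hb⟩ := Finset.mem_Ioc.1 hb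
    exact (Nat.le_div_iff_mul_le hb0).2 ((Nat.mul_le_mul_left _ hb).trans N.sqrt_le)
  simp only [Finset.sum_const, Nat.card_Ioc, smul_eq_mul, mul_one, tsub_zero] at swap
  calc ∑ n ∈ Finset.Ioc N.sqrt N, N / n + N.sqrt * N.sqrt
      = ∑ n ∈ Finset.Ioc 0 N.sqrt, (N / n - N.sqrt + N.sqrt) := by
        simp [swap, Finset.sum_add_distrib]
    _ = ∑ n ∈ Finset.Ioc 0 N.sqrt, N / n :=
        Finset.sum_congr rfl fun n hn ↦ Nat.sub_add_cancel (sqrt_le_div hn)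

lemma sum_Ioc_div_add_sqrt_mul_sqrt (N : ℕ) :
    ∑ n ∈ Finset.Ioc 0 N, N / n + N.sqrt * N.sqrt = 2 * ∑ n ∈ Finset.Ioc 0 N.sqrt, N / n := by
  rw [← Finset.sum_Ioc_consecutive _ (Nat.zero_le _) N.sqrt_le_self, add_assoc,
    sum_Ioc_sqrt_div_add_sqrt_mul_sqrt, two_mul]

lemma fract_div_natCast_eq {x : ℝ} (hx : 0 ≤ x) (n : ℕ) :
    Int.fract (x / n) = x / n - (⌊x⌋₊ / n : ℕ) := by
  rw [← Nat.floor_div_natCast, natCast_floor_eq_intCast_floor (by positivity), Int.fract]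

lemma abs_sum_Ioc_div_sub_mul_harmonic_le (M N : ℕ) :
    |∑ n ∈ Finset.Ioc 0 M, ((N / n : ℕ) : ℝ) - N * harmonic M| ≤ M := by
  have mul_harmonic : N * (harmonic M : ℝ) = ∑ n ∈ Finset.Ioc 0 M, (N : ℝ) / n := by
    simp_rw [cast_harmonic_eq_sum_Ioc, Finset.mul_sum, div_eq_mul_inv]
  rw [mul_harmonic, ← Finset.sum_sub_distrib]
  refine (Finset.abs_sum_le_sum_abs _ _).trans ?_
  refine (Finset.sum_le_card_nsmul _ _ 1 fun n _ ↦ ?_).trans_eq (by simp)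
  have fract_eq := fract_div_natCast_eq (Nat.cast_nonneg (α := ℝ) N) n
  rw [Nat.floor_natCast] at fract_eq
  rw [abs_sub_comm, ← fract_eq, Int.abs_fract]
  exact (Int.fract_lt_one _).le

lemma abs_two_mul_harmonic_sqrt_sub_le {N : ℕ} (hN : N ≠ 0) :
    |2 * (harmonic N.sqrt : ℝ) - (Real.log N + 2 * Real.eulerMascheroniConstant)| ≤
      2 / N.sqrt := by
  have sqrt_pos : 0 < N.sqrt := Nat.sqrt_pos.2 (Nat.pos_of_ne_zero hN)
  have two_mul_log_sqrt_le : 2 * Real.log N.sqrt ≤ Real.log N := by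
    rw [← Nat.cast_ofNat (n := 2), ← Real.log_pow]
    exact Real.log_le_log (by positivity) (by exact_mod_cast N.sqrt_le')
  have log_le : Real.log N ≤ 2 * Real.log (N.sqrt + 1) := by
    rw [← Nat.cast_ofNat (n := 2), ← Real.log_pow]
    exact Real.log_le_log (by positivity) (by exact_mod_cast N.lt_succ_sqrt'.le)
  have log_sub_le := log_natCast_add_one_sub_log_le N.sqrt
  have le_harmonic := log_add_eulerMascheroniConstant_le_harmonic sqrt_pos.ne'
  have harmonic_le := harmonic_le_log_add_one_add_eulerMascheroniConstant N.sqrt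
  rw [show (2 : ℝ) / N.sqrt = 2 * (1 / N.sqrt) by ring, abs_le]
  constructor <;> linarith

theorem abs_sum_Ioc_div_sub_le {N : ℕ} (hN : N ≠ 0) :
    |∑ n ∈ Finset.Ioc 0 N, ((N / n : ℕ) : ℝ) -
      (N * Real.log N + (2 * Real.eulerMascheroniConstant - 1) * N)| ≤ 10 * √N := by
  set M := N.sqrt
  have one_le : (1 : ℝ) ≤ M := by exact_mod_cast Nat.sqrt_pos.2 (Nat.pos_of_ne_zero hN)
  have sq_le : (M * M : ℝ) ≤ N := by exact_mod_cast N.sqrt_le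
  have le_sq_add : (N : ℝ) ≤ M * M + M + M := by exact_mod_cast N.sqrt_le_add
  have hyperbola : ∑ n ∈ Finset.Ioc 0 N, ((N / n : ℕ) : ℝ) =
      2 * ∑ n ∈ Finset.Ioc 0 M, ((N / n : ℕ) : ℝ) - M * M :=
    eq_sub_of_add_eq (by exact_mod_cast sum_Ioc_div_add_sqrt_mul_sqrt N)
  have mul_harmonic_le : |N * (2 * (harmonic M : ℝ) -
      (Real.log N + 2 * Real.eulerMascheroniConstant))| ≤ 2 * M + 4 := by
    rw [abs_mul, Nat.abs_cast]
    calc N * |2 * (harmonic M : ℝ) - (Real.log N + 2 * Real.eulerMascheroniConstant)|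
        ≤ (M * M + M + M) * (2 / M) := by
          gcongr
          exact abs_two_mul_harmonic_sqrt_sub_le hN
      _ = 2 * M + 4 := by
          field_simp
          ring
  have sum_le := abs_sum_Ioc_div_sub_mul_harmonic_le M N
  have sqrt_le : (M : ℝ) ≤ √N := Real.nat_sqrt_le_real_sqrt
  rw [abs_le] at mul_harmonic_le sum_le ⊢
  rw [hyperbola]
  constructor <;> nlinarith

lemma sum_Ioc_floor_fract_div_eq {x : ℝ} (hx : 0 ≤ x) :
    ∑ n ∈ Finset.Ioc 0 ⌊x⌋₊, Int.fract (x / n) =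
      x * harmonic ⌊x⌋₊ - ∑ n ∈ Finset.Ioc 0 ⌊x⌋₊, ((⌊x⌋₊ / n : ℕ) : ℝ) := by
  simp_rw [fract_div_natCast_eq hx, cast_harmonic_eq_sum_Ioc, Finset.mul_sum, div_eq_mul_inv,
    Finset.sum_sub_distrib]

lemma harmonic_floor_le_two_mul_sqrt {x : ℝ} (hx : 1 ≤ x) : harmonic ⌊x⌋₊ ≤ 2 * √x := by
  have log_eq : Real.log x = 2 * Real.log √x := by
    rw [Real.log_sqrt (by linarith)]
    ring
  linarith [harmonic_floor_le_one_add_log x hx,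
    Real.log_le_sub_one_of_pos (Real.sqrt_pos.2 (by linarith : 0 < x))]

theorem abs_sum_Ioc_floor_fract_div_sub_le {x : ℝ} (hx : 1 ≤ x) :
    |∑ n ∈ Finset.Ioc 0 ⌊x⌋₊, Int.fract (x / n) - (1 - Real.eulerMascheroniConstant) * x| ≤
      13 * √x := by
  have floor_pos : 0 < ⌊x⌋₊ := Nat.floor_pos.2 hx
  have floor_le : (⌊x⌋₊ : ℝ) ≤ x := Nat.floor_le (by linarith)
  have lt_floor_add_one := Nat.lt_floor_add_one x
  have harmonic_le_sqrt := harmonic_floor_le_two_mul_sqrt hx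
  have one_le_sqrt : 1 ≤ √x := Real.one_le_sqrt.2 hx
  rw [sum_Ioc_floor_fract_div_eq (by linarith)]
  set N := ⌊x⌋₊
  have frac_part_le :
      |(x - N) * (harmonic N - (1 - Real.eulerMascheroniConstant))| ≤ 2 * √x := by
    have harmonic_nonneg : (0 : ℝ) ≤ harmonic N := by
      rw [cast_harmonic_eq_sum_Ioc]
      positivity
    rw [abs_mul, ← one_mul (2 * √x)]
    refine mul_le_mul (abs_le.2 ⟨by linarith, by linarith⟩) (abs_le.2 ⟨?_, ?_⟩)
      (abs_nonneg _) zero_le_one <;>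
    linarith [Real.one_half_lt_eulerMascheroniConstant, Real.eulerMascheroniConstant_lt_two_thirds]
  have harmonic_error_le :
      |N * (harmonic N - Real.log N - Real.eulerMascheroniConstant)| ≤ 1 := by
    have N_pos : (0 : ℝ) < N := by exact_mod_cast floor_pos
    have lower := log_add_eulerMascheroniConstant_le_harmonic floor_pos.ne'
    have upper := harmonic_le_log_add_one_add_eulerMascheroniConstant N
    rw [abs_of_nonneg (mul_nonneg N_pos.le (by linarith)), ← le_div_iff₀' N_pos]
    linarith [log_natCast_add_one_sub_log_le N]
  have divisor_sum_le := (abs_sum_Ioc_div_sub_le floor_pos.ne').trans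
    (mul_le_mul_of_nonneg_left (Real.sqrt_le_sqrt floor_le) (by norm_num))
  rw [abs_le] at frac_part_le harmonic_error_le divisor_sum_le ⊢
  constructor <;> linarith

/-! ### Fractional parts over primes -/

lemma sum_primesLE_log_mul_eq (w : ℕ → ℝ) (N : ℕ) :
    ∑ p ∈ Nat.primesLE N, Real.log p * w p =
      ∑ n ∈ Finset.Ioc 0 N, primeLogSubOne n * w n + ∑ n ∈ Finset.Ioc 0 N, w n := by
  rw [Nat.primesLE_eq_filter_Ioc_zero, Finset.sum_filter, ← Finset.sum_add_distrib]
  refine Finset.sum_congr rfl fun n _ ↦ ?_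
  rw [primeLogSubOne]
  split_ifs <;> ring

theorem isBigO_sum_primesLE_log_mul_fract_sub :
    (fun x : ℝ ↦ ∑ p ∈ Nat.primesLE ⌊x⌋₊, Real.log p * Int.fract (x / p) -
      (1 - Real.eulerMascheroniConstant) * x) =O[atTop] fun x ↦ x / Real.log x := by
  have fract_sum : (fun x : ℝ ↦ ∑ n ∈ Finset.Ioc 0 ⌊x⌋₊, Int.fract (x / n) -
      (1 - Real.eulerMascheroniConstant) * x) =O[atTop] Real.sqrt := by
    refine .of_bound 13 ?_
    filter_upwards [eventually_ge_atTop 1] with x hx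
    rw [norm_of_nonneg (Real.sqrt_nonneg x)]
    exact abs_sum_Ioc_floor_fract_div_sub_le hx
  have sqrt_isBigO : Real.sqrt =O[atTop] fun x ↦ x / Real.log x := by
    simpa only [pow_one] using isBigO_sqrt_div_log_pow 1
  refine (isBigO_sum_primeLogSubOne_mul_fract.add (fract_sum.trans sqrt_isBigO)).congr_left
    fun x ↦ ?_
  rw [sum_primesLE_log_mul_eq fun n ↦ Int.fract (x / n)]
  ring

lemma sum_primesLE_log_sub_log (x : ℝ) :
    ∑ p ∈ Nat.primesLE ⌊x⌋₊, (Real.log x - Real.log p) =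
      Nat.primeCounting ⌊x⌋₊ * Real.log x - Chebyshev.theta x := by
  rw [Finset.sum_sub_distrib, Finset.sum_const, nsmul_eq_mul, Nat.primesLE_card_eq_primeCounting,
    Chebyshev.theta_eq_sum_primesLE]

theorem isBigO_sum_primesLE_log_sub_log_mul_fract :
    (fun x : ℝ ↦ ∑ p ∈ Nat.primesLE ⌊x⌋₊, (Real.log x - Real.log p) * Int.fract (x / p))
      =O[atTop] fun x ↦ x / Real.log x := by
  have primeCounting_sub : (fun x : ℝ ↦ Nat.primeCounting ⌊x⌋₊ * Real.log x - Chebyshev.theta x)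
      =O[atTop] fun x ↦ x / Real.log x := by
    refine (Chebyshev.primeCounting_sub_theta_div_log_isBigO.mul
      (Asymptotics.isBigO_refl Real.log atTop)).congr' ?_ ?_ <;>
    filter_upwards [eventually_gt_atTop 1] with x hx <;>
    have log_pos := Real.log_pos hx
    · field_simp
    · field_simp
  refine .trans (.of_bound 1 ?_) primeCounting_sub
  filter_upwards [eventually_gt_atTop 0] with x hx
  have log_sub_nonneg {p : ℕ} (hp : p ∈ Nat.primesLE ⌊x⌋₊) : 0 ≤ Real.log x - Real.log p := by
    obtain ⟨hle, hp⟩ := Nat.mem_primesLE.1 hp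
    exact sub_nonneg.2 (Real.log_le_log (by exact_mod_cast hp.pos)
      ((Nat.le_floor_iff hx.le).1 hle))
  rw [one_mul, ← sum_primesLE_log_sub_log, norm_of_nonneg (Finset.sum_nonneg fun p hp ↦
    mul_nonneg (log_sub_nonneg hp) (Int.fract_nonneg _))]
  refine (Finset.sum_le_sum fun p hp ↦ ?_).trans (Real.le_norm_self _)
  exact mul_le_of_le_one_right (log_sub_nonneg hp) (Int.fract_lt_one _).le

theorem isBigO_sum_primesLE_fract_sub :
    (fun x : ℝ ↦ ∑ p ∈ Nat.primesLE ⌊x⌋₊, Int.fract (x / p) -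
      (1 - Real.eulerMascheroniConstant) * x / Real.log x) =O[atTop]
      fun x ↦ x / Real.log x ^ 2 := by
  refine ((isBigO_sum_primesLE_log_mul_fract_sub.add
    isBigO_sum_primesLE_log_sub_log_mul_fract).mul
      (Asymptotics.isBigO_refl (fun x ↦ (Real.log x)⁻¹) atTop)).congr' ?_ ?_ <;>
  filter_upwards [eventually_gt_atTop 1] with x hx <;>
  have log_pos := Real.log_pos hx
  · simp_rw [sub_mul, Finset.sum_sub_distrib, ← Finset.mul_sum]
    field_simp
    ring
  · field_simp

theorem sum_fract_x_div_p_asymptotic :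
    ∃ C > (0:ℝ), ∀ᶠ x : ℝ in atTop,
      |(∑ p ∈ (Finset.range (⌊x⌋₊ + 1)).filter Nat.Prime, Int.fract (x / p)) -
          (1 - Real.eulerMascheroniConstant) * x / Real.log x| ≤
        C * x / (Real.log x) ^ 2 := by
  obtain ⟨C, C_pos, hC⟩ := isBigO_sum_primesLE_fract_sub.exists_pos
  refine ⟨C, C_pos, ?_⟩
  filter_upwards [hC.bound, eventually_ge_atTop 0] with x hx x_nonneg
  rw [norm_of_nonneg (by positivity : 0 ≤ x / Real.log x ^ 2), ← mul_div_assoc,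
    Nat.primesLE_eq_filter_range] at hx
  exact hx
end

section
/- For every integer k ≥ 1, li_f(x) = c₀·x/log x + c₁·1!·x/(log x)² + ⋯ + c_{k-1}·(k-1)!·x/(log x)^k + O_k(x/(log x)^{k+1}) as x → ∞; that is, there is a constant C (depending on k) such that |li_f(x) − Σ_{n=0}^{k-1} c_n·n!·x/(log x)^{n+1}| ≤ C·x/(log x)^{k+1} for all sufficiently large x. -/
open Filter Real MeasureTheory
open scoped Classical

/-- `cconst n = (1/n!) ∫₁^∞ {u} (log u)^n / u² du`. -/
noncomputable def cconst (n : ℕ) : ℝ :=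
  (1 / (n.factorial : ℝ)) * ∫ u in Set.Ioi (1:ℝ), Int.fract u * (Real.log u) ^ n / u ^ 2

/-!
Substituting `t = x / u` turns `∫ₐˣ f (x / t) / log t dt` into
`x ∫ f u / u² · 1 / (log x - log u) du` over `1 < u < x / a`. With `L = log x` and `ℓ = log u`,
expand `1 / (L - ℓ)` geometrically as `∑ ℓⁿ / Lⁿ⁺¹`. For `ℓ < L - log a` the remainder is
controlled by `1 / (L - ℓ) ≤ (1 + ℓ / log a) / L`; otherwise `ℓ ≥ L / 2`, so the partial sum
itself is `O(ℓᵏ / Lᵏ⁺¹)`. The logarithmic moments of `f u / u²` being finite, both errors integrate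
to `O(1 / Lᵏ⁺¹)`.
-/

open Asymptotics Set

section GeometricExpansion

theorem inv_sub_sub_sum_range_pow_div_pow {K : Type*} [Field K] {L l : K} (hL : L ≠ 0)
    (hLl : L - l ≠ 0) (k : ℕ) :
    (L - l)⁻¹ - ∑ n ∈ Finset.range k, l ^ n / L ^ (n + 1) = l ^ k / (L ^ k * (L - l)) := by
  induction k with
  | zero => simp
  | succ k ih =>
    rw [Finset.sum_range_succ, ← sub_sub, ih]
    field_simp
    ring

variable {K : Type*} [Field K] [LinearOrder K] [IsStrictOrderedRing K] {b L l m : K}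

theorem sum_range_pow_div_pow_le (hL : 0 < L) (hl : 0 ≤ l) (hlm : l ≤ m) (hLm : L ≤ m) (k : ℕ) :
    ∑ n ∈ Finset.range k, l ^ n / L ^ (n + 1) ≤ k * m ^ k / L ^ (k + 1) := by
  have term_le : ∀ n ∈ Finset.range k, l ^ n / L ^ (n + 1) ≤ m ^ k / L ^ (k + 1) := by
    intro n hn
    calc l ^ n / L ^ (n + 1) ≤ m ^ n / L ^ (n + 1) := by gcongr
      _ = (m / L) ^ n / L := by rw [div_pow, div_div, pow_succ]
      _ ≤ (m / L) ^ k / L := by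
        gcongr
        · exact (one_le_div hL).2 hLm
        · exact (Finset.mem_range.1 hn).le
      _ = m ^ k / L ^ (k + 1) := by rw [div_pow, div_div, pow_succ]
  simpa [mul_div_assoc] using Finset.sum_le_card_nsmul _ _ _ term_le

theorem inv_sub_le_one_add_div_div (hb : 0 < b) (hl : 0 ≤ l) (hbL : b < L - l) :
    (L - l)⁻¹ ≤ (1 + l / b) / L := by
  have hLl : 0 < L - l := hb.trans hbL
  have hL : 0 < L := by linarith
  calc (L - l)⁻¹ = (1 + l / (L - l)) / L := by field_simp; ring
    _ ≤ (1 + l / b) / L := by gcongr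

end GeometricExpansion

/-- The reciprocal cut off at `b`, equal to `d⁻¹` for `d > b` and to `0` elsewhere. It encodes the
range of integration `u < x / a` in the kernel `1 / (log x - log u)`, with `b = log a` and
`d = log x - log u`. -/
noncomputable def truncInv (b : ℝ) : ℝ → ℝ := (Ioi b).indicator Inv.inv

theorem measurable_truncInv (b : ℝ) : Measurable (truncInv b) :=
  measurable_inv.indicator measurableSet_Ioi

theorem abs_truncInv_le {b : ℝ} (hb : 0 < b) (d : ℝ) : |truncInv b d| ≤ b⁻¹ := by
  by_cases hd : d ∈ Ioi b
  · rw [truncInv, indicator_of_mem hd, abs_of_pos (inv_pos.2 (hb.trans hd))]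
    exact inv_anti₀ hb (le_of_lt hd)
  · rw [truncInv, indicator_of_notMem hd, abs_zero]
    positivity

theorem abs_truncInv_sub_sum_le {b L l : ℝ} (hb : 0 < b) (hL : 2 * b ≤ L) (hl : 0 ≤ l) (k : ℕ) :
    |truncInv b (L - l) - ∑ n ∈ Finset.range k, l ^ n / L ^ (n + 1)| ≤
      ((k * 2 ^ k + 1) * l ^ k + b⁻¹ * l ^ (k + 1)) / L ^ (k + 1) := by
  have hL0 : 0 < L := by linarith
  by_cases hd : L - l ∈ Ioi b
  · have hLl : 0 < L - l := hb.trans hd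
    rw [truncInv, indicator_of_mem hd, inv_sub_sub_sum_range_pow_div_pow hL0.ne' hLl.ne',
      abs_of_nonneg (by positivity)]
    calc l ^ k / (L ^ k * (L - l)) = l ^ k / L ^ k * (L - l)⁻¹ := by rw [← div_div, div_eq_mul_inv]
      _ ≤ l ^ k / L ^ k * ((1 + l / b) / L) := by
        gcongr
        exact inv_sub_le_one_add_div_div hb hl hd
      _ = (1 * l ^ k + b⁻¹ * l ^ (k + 1)) / L ^ (k + 1) := by
        field_simp
        ring
      _ ≤ _ := by
        gcongr
        exact le_add_of_nonneg_left (by positivity)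
  · have hLl : L ≤ 2 * l := by linarith [notMem_Ioi.1 hd]
    rw [truncInv, indicator_of_notMem hd, zero_sub, abs_neg,
      abs_of_nonneg (Finset.sum_nonneg fun n _ ↦ by positivity)]
    calc ∑ n ∈ Finset.range k, l ^ n / L ^ (n + 1) ≤ k * (2 * l) ^ k / L ^ (k + 1) :=
          sum_range_pow_div_pow_le hL0 hl (by linarith) hLl k
      _ = (k * 2 ^ k * l ^ k) / L ^ (k + 1) := by ring
      _ ≤ _ := by
        rw [add_one_mul, add_assoc]
        gcongr
        exact le_add_of_nonneg_right (by positivity)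

section Moments

variable {α : Type*} [MeasurableSpace α] {μ : Measure α} {w ℓ : α → ℝ} {b : ℝ}

theorem integral_mul_truncInv_sub_sum_isBigO (hb : 0 < b) (hℓ : AEMeasurable ℓ μ)
    (hℓ0 : ∀ᵐ s ∂μ, 0 ≤ ℓ s) {k : ℕ} (hw : ∀ n ≤ k + 1, Integrable (fun s ↦ w s * ℓ s ^ n) μ) :
    (fun L ↦ (∫ s, w s * truncInv b (L - ℓ s) ∂μ) -
        ∑ n ∈ Finset.range k, (∫ s, w s * ℓ s ^ n ∂μ) / L ^ (n + 1)) =O[atTop]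
      fun L ↦ (L ^ (k + 1))⁻¹ := by
  let bound : α → ℝ := fun s ↦
    (k * 2 ^ k + 1) * |w s * ℓ s ^ k| + b⁻¹ * |w s * ℓ s ^ (k + 1)|
  have bound_integrable : Integrable bound μ :=
    ((hw k (by lia)).abs.const_mul _).add ((hw (k + 1) le_rfl).abs.const_mul _)
  refine IsBigO.of_bound (∫ s, bound s ∂μ) ?_
  filter_upwards [eventually_ge_atTop (2 * b)] with L hL
  have hL0 : 0 < L := by linarith
  have kernel_integrable : Integrable (fun s ↦ w s * truncInv b (L - ℓ s)) μ := by
    have hw0 : Integrable w μ := by simpa using hw 0 (by lia)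
    exact hw0.mul_bdd ((measurable_truncInv b).comp_aemeasurable
      (hℓ.const_sub L)).aestronglyMeasurable (ae_of_all _ fun s ↦ abs_truncInv_le hb _)
  have terms_integrable : ∀ n ∈ Finset.range k,
      Integrable (fun s ↦ w s * ℓ s ^ n / L ^ (n + 1)) μ := fun n hn ↦
    (hw n (by have := Finset.mem_range.1 hn; lia)).div_const _
  have norm_le : ∀ᵐ s ∂μ, ‖w s * truncInv b (L - ℓ s) -
      ∑ n ∈ Finset.range k, w s * ℓ s ^ n / L ^ (n + 1)‖ ≤ bound s / L ^ (k + 1) := by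
    filter_upwards [hℓ0] with s hs
    simp only [mul_div_assoc, ← Finset.mul_sum, ← mul_sub, norm_mul, norm_eq_abs]
    calc _ ≤ |w s| * (((k * 2 ^ k + 1) * ℓ s ^ k + b⁻¹ * ℓ s ^ (k + 1)) / L ^ (k + 1)) := by
          gcongr
          exact abs_truncInv_sub_sum_le hb hL hs k
      _ = bound s / L ^ (k + 1) := by
        simp only [bound, abs_mul, abs_of_nonneg (pow_nonneg hs _)]
        ring
  simp_rw [← integral_div]
  rw [← integral_finsetSum _ terms_integrable,
    ← integral_sub kernel_integrable (integrable_finsetSum _ terms_integrable),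
    norm_inv, norm_of_nonneg (pow_pos hL0 _).le, ← div_eq_mul_inv, ← integral_div]
  exact norm_integral_le_of_norm_le (bound_integrable.div_const _) norm_le

end Moments

section ChangeOfVariables

variable {a p q x : ℝ}

theorem image_const_div_Ioo_of_pos (hx : 0 < x) (hp : 0 < p) (hq : 0 < q) :
    (fun u ↦ x / u) '' Ioo p q = Ioo (x / q) (x / p) := by
  ext t
  constructor
  · rintro ⟨u, ⟨hpu, huq⟩, rfl⟩
    exact ⟨div_lt_div_of_pos_left hx (hp.trans hpu) huq, div_lt_div_of_pos_left hx hp hpu⟩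
  · rintro ⟨hqt, htp⟩
    have ht : 0 < t := (div_pos hx hq).trans hqt
    exact ⟨x / t, ⟨(lt_div_comm₀ ht hp).1 htp, (div_lt_comm₀ hq ht).1 hqt⟩,
      div_div_cancel₀ hx.ne'⟩

theorem setIntegral_Ioo_const_div {E : Type*} [NormedAddCommGroup E] [NormedSpace ℝ E]
    (hx : 0 < x) (hp : 0 < p) (hq : 0 < q) (g : ℝ → E) :
    ∫ t in Ioo (x / q) (x / p), g t = ∫ u in Ioo p q, (x / u ^ 2) • g (x / u) := by
  have pos_of_mem : ∀ u ∈ Ioo p q, 0 < u := fun u hu ↦ hp.trans hu.1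
  have deriv_const_div : ∀ u ∈ Ioo p q,
      HasDerivWithinAt (fun u ↦ x / u) (-(x / u ^ 2)) (Ioo p q) u := fun u hu ↦ by
    simpa [div_eq_mul_inv] using
      ((hasDerivAt_inv (pos_of_mem u hu).ne').const_mul x).hasDerivWithinAt
  have antitone_const_div : AntitoneOn (fun u ↦ x / u) (Ioo p q) := fun u hu v _ huv ↦
    div_le_div_of_nonneg_left hx.le (pos_of_mem u hu) huv
  simpa only [image_const_div_Ioo_of_pos hx hp hq, neg_neg] using
    integral_image_eq_integral_deriv_smul_of_antitoneOn measurableSet_Ioo deriv_const_div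
      antitone_const_div g

theorem truncInv_log_sub_log_eq_indicator (ha : 0 < a) (hx : 0 < x) {u : ℝ} (hu : 1 < u) :
    truncInv (log a) (log x - log u) =
      (Ioo 1 (x / a)).indicator (fun u ↦ (log (x / u))⁻¹) u := by
  have hu0 : 0 < u := by linarith
  have mem_iff : log x - log u ∈ Ioi (log a) ↔ u ∈ Ioo 1 (x / a) := by
    rw [← log_div hx.ne' hu0.ne', mem_Ioi, log_lt_log_iff ha (by positivity), lt_div_comm₀ ha hu0]
    exact (and_iff_right hu).symm
  simp only [truncInv, indicator_apply, mem_iff, log_div hx.ne' hu0.ne']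

theorem integral_comp_div_div_log (f : ℝ → ℝ) (ha : 0 < a) (hax : a ≤ x) :
    ∫ t in a..x, f (x / t) / log t =
      x * ∫ u in Ioi 1, f u / u ^ 2 * truncInv (log a) (log x - log u) := by
  have hx : 0 < x := ha.trans_le hax
  have kernel_eq : ∀ u ∈ Ioi (1 : ℝ), f u / u ^ 2 * truncInv (log a) (log x - log u) =
      (Ioo 1 (x / a)).indicator (fun u ↦ f u / u ^ 2 * (log (x / u))⁻¹) u := fun u hu ↦ by
    rw [truncInv_log_sub_log_eq_indicator ha hx hu, indicator_mul_right _ (fun u ↦ f u / u ^ 2)]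
  have change_variables := setIntegral_Ioo_const_div hx one_pos (div_pos hx ha)
    fun t ↦ f (x / t) / log t
  rw [div_div_cancel₀ hx.ne', div_one] at change_variables
  rw [intervalIntegral.integral_of_le hax, integral_Ioc_eq_integral_Ioo, change_variables,
    setIntegral_congr_fun measurableSet_Ioi kernel_eq, setIntegral_indicator measurableSet_Ioo,
    inter_eq_right.2 Ioo_subset_Ioi_self, ← integral_const_mul]
  congr! 2
  rw [div_div_cancel₀ hx.ne', smul_eq_mul]
  ring

end ChangeOfVariables

theorem integral_comp_div_div_log_sub_sum_isBigO {f : ℝ → ℝ} {a : ℝ} (ha : 1 < a) {k : ℕ}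
    (hf : ∀ n ≤ k + 1, IntegrableOn (fun u ↦ f u * log u ^ n / u ^ 2) (Ioi 1)) :
    (fun x ↦ (∫ t in a..x, f (x / t) / log t) -
        ∑ n ∈ Finset.range k, (∫ u in Ioi 1, f u * log u ^ n / u ^ 2) * x / log x ^ (n + 1))
      =O[atTop] fun x ↦ x / log x ^ (k + 1) := by
  simp only [← div_mul_eq_mul_div (f _)] at hf ⊢
  have log_nonneg_ae : ∀ᵐ u ∂volume.restrict (Ioi (1 : ℝ)), 0 ≤ log u :=
    ae_restrict_of_forall_mem measurableSet_Ioi fun u hu ↦ log_nonneg (le_of_lt hu)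
  have expansion := (integral_mul_truncInv_sub_sum_isBigO (log_pos ha) measurable_log.aemeasurable
    log_nonneg_ae hf).comp_tendsto tendsto_log_atTop
  refine ((isBigO_refl (fun x : ℝ ↦ x) atTop).mul expansion).congr' ?_ ?_
  · filter_upwards [eventually_ge_atTop a] with x hx
    rw [integral_comp_div_div_log f (by linarith) hx, Function.comp_apply, mul_sub, Finset.mul_sum]
    congr! 2 with n
    ring
  · exact Eventually.of_forall fun x ↦ (div_eq_mul_inv _ _).symm

theorem integrableOn_log_pow_mul_rpow (n : ℕ) {s : ℝ} (hs : s < -1) :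
    IntegrableOn (fun u ↦ log u ^ n * u ^ s) (Ioi 1) := by
  obtain ⟨r, hsr, hr⟩ := exists_between hs
  have continuousOn : ContinuousOn (fun u : ℝ ↦ log u ^ n * u ^ s) (Ici 1) := fun u hu ↦ by
    have hu0 : u ≠ 0 := (zero_lt_one.trans_le hu).ne'
    exact (((continuousAt_log hu0).pow n).mul
      (continuousAt_rpow_const u s (Or.inl hu0))).continuousWithinAt
  have isBigO_rpow : (fun u ↦ log u ^ n * u ^ s) =O[atTop] fun u ↦ u ^ r := by
    have log_pow_isBigO : (fun u ↦ log u ^ n) =O[atTop] fun u ↦ u ^ (r - s) := by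
      simpa using (isLittleO_log_rpow_rpow_atTop n (sub_pos.2 hsr)).isBigO
    refine (log_pow_isBigO.mul (isBigO_refl (fun u : ℝ ↦ u ^ s) atTop)).congr' .rfl ?_
    filter_upwards [eventually_gt_atTop 0] with u hu
    rw [← rpow_add hu, sub_add_cancel]
  exact ((continuousOn.locallyIntegrableOn measurableSet_Ici).integrableOn_of_isBigO_atTop
    isBigO_rpow (integrableAtFilter_rpow_atTop_iff.2 hr)).mono_set Ioi_subset_Ici_self

theorem integrableOn_fract_mul_log_pow_div_sq (n : ℕ) :
    IntegrableOn (fun u : ℝ ↦ Int.fract u * log u ^ n / u ^ 2) (Ioi 1) := by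
  have log_moment : IntegrableOn (fun u : ℝ ↦ log u ^ n / u ^ 2) (Ioi 1) :=
    (integrableOn_log_pow_mul_rpow n (s := -2) (by norm_num)).congr_fun
      (fun u hu ↦ by
        simp only [rpow_neg (zero_lt_one.trans hu).le, rpow_ofNat, div_eq_mul_inv])
      measurableSet_Ioi
  simpa only [IntegrableOn, mul_div_assoc] using log_moment.bdd_mul (c := 1)
    measurable_fract.aestronglyMeasurable
    (ae_of_all _ fun u ↦ by
      rw [norm_eq_abs, Int.abs_fract]
      exact (Int.fract_lt_one u).le)

theorem cconst_mul_factorial (n : ℕ) :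
    cconst n * n.factorial = ∫ u in Ioi (1 : ℝ), Int.fract u * log u ^ n / u ^ 2 := by
  rw [cconst]
  field_simp

theorem lif_asymptotic_expansion :
    ∀ k : ℕ, 1 ≤ k → ∃ C > (0:ℝ), ∀ᶠ x : ℝ in atTop,
      |lif x - ∑ n ∈ Finset.range k, cconst n * (n.factorial : ℝ) * x / (Real.log x) ^ (n + 1)| ≤
        C * x / (Real.log x) ^ (k + 1) := by
  intro k _
  obtain ⟨C, hC, expansion⟩ := (integral_comp_div_div_log_sub_sum_isBigO (k := k) one_lt_two
    fun n _ ↦ integrableOn_fract_mul_log_pow_div_sq n).exists_pos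
  refine ⟨C, hC, ?_⟩
  filter_upwards [expansion.bound, eventually_ge_atTop 1] with x hx hx1
  have error_nonneg : 0 ≤ x / log x ^ (k + 1) :=
    div_nonneg (by linarith) (pow_nonneg (log_nonneg hx1) _)
  simpa only [lif, cconst_mul_factorial, norm_eq_abs, abs_of_nonneg error_nonneg, mul_div_assoc]
    using hx
end

section
/- For every complex number z with Re(z) < 1 and z ≠ 0, the integral ∫₁^∞ {u}·u^{z-2} du converges and equals (1 − 1/z − ζ(1−z))/(1−z), where ζ is the Riemann zeta function; moreover, for every complex z with |z| < 1 and z ≠ 0, Σ_{n=0}^∞ c_n z^n = ∫₁^∞ {u}·u^{z-2} du. -/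
open Filter Real MeasureTheory
open scoped Classical

/-!
The integral `F z = ∫₁^∞ {u} u ^ (z - 2) du` is the complex moment generating function of `log u`
under the measure `{u} u⁻² du` on `(1, ∞)`, hence it is holomorphic on `Re z < 1` and its Taylor
coefficients at `0` are the moments of `log u` divided by factorials, that is the numbers `c_n`.

For `Re s > 1`, Abel summation gives `ζ(s) = s ∫₁^∞ ⌊u⌋ u ^ (-s - 1) du`. Writing `⌊u⌋ = u - {u}`
and subtracting the pole, this becomes `(1 - z) F z = 1 - (ζ(1 - z) + 1 / z)` for `Re z < 0`. The
singularity of the right-hand side at `z = 0` is removable, so the identity theorem extends the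
formula to the half-plane `Re z < 1`.
-/

open ProbabilityTheory

lemma hasSum_complexMGF_of_Ioo_subset_integrableExpSet {Ω : Type*} {mΩ : MeasurableSpace Ω}
    {μ : Measure Ω} {X : Ω → ℝ} {r : ℝ} (hr : Set.Ioo (-r) r ⊆ integrableExpSet X μ)
    {z : ℂ} (hz : ‖z‖ < r) :
    HasSum (fun n : ℕ ↦ ((1 / (n.factorial : ℝ) * ∫ ω, X ω ^ n ∂μ : ℝ) : ℂ) * z ^ n)
      (complexMGF X μ z) := by
  have h_interior : Set.Ioo (-r) r ⊆ interior (integrableExpSet X μ) :=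
    interior_maximal hr isOpen_Ioo
  have h_diff : DifferentiableOn ℂ (complexMGF X μ) (Metric.ball 0 r) :=
    differentiableOn_complexMGF.mono fun w hw ↦
      h_interior (abs_lt.mp ((Complex.abs_re_le_norm w).trans_lt (mem_ball_zero_iff.mp hw)))
  have h_zero : (0 : ℂ).re ∈ interior (integrableExpSet X μ) := by
    have := (norm_nonneg z).trans_lt hz
    exact h_interior (by simpa using this)
  convert! Complex.hasSum_taylorSeries_on_ball h_diff (mem_ball_zero_iff.mpr hz) using 2 with n
  have h_moment : iteratedDeriv n (complexMGF X μ) 0 = ((∫ ω, X ω ^ n ∂μ : ℝ) : ℂ) := by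
    rw [iteratedDeriv_complexMGF h_zero, ← integral_complex_ofReal]
    simp
  rw [h_moment, sub_zero, smul_eq_mul, smul_eq_mul]
  push_cast
  ring

lemma integrableOn_Ioi_fract_mul_cpow {s : ℂ} (hs : s.re < -1) {a : ℝ} (ha : 0 < a) :
    IntegrableOn (fun u : ℝ ↦ ((Int.fract u : ℝ) : ℂ) * (u : ℂ) ^ s) (Set.Ioi a) := by
  refine (integrableOn_Ioi_cpow_of_lt hs ha).bdd_mul (c := 1)
    (Complex.measurable_ofReal.comp measurable_fract).aestronglyMeasurable (.of_forall fun u ↦ ?_)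
  rw [Complex.norm_real, norm_of_nonneg (Int.fract_nonneg u)]
  exact (Int.fract_lt_one u).le

lemma riemannZeta_eq_mul_integral_floor {s : ℂ} (hs : 1 < s.re) :
    riemannZeta s = s * ∫ u in Set.Ioi (1 : ℝ), (⌊u⌋₊ : ℂ) * (u : ℂ) ^ (-(s + 1)) := by
  have h_partialSums : (fun n : ℕ ↦ ∑ k ∈ Finset.Icc 1 n, (1 : ℕ → ℂ) k)
      =O[atTop] fun n : ℕ ↦ (n : ℝ) ^ (1 : ℝ) :=
    Asymptotics.isBigO_of_le _ fun n ↦ by simp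
  rw [← LSeries_one_eq_riemannZeta hs,
    LSeries_eq_mul_integral 1 zero_le_one hs (LSeriesSummable_one_iff.mpr hs) h_partialSums]
  simp

lemma natFloor_mul_cpow_eq {u : ℝ} (hu : 0 < u) (s : ℂ) :
    (⌊u⌋₊ : ℂ) * (u : ℂ) ^ (-(s + 1)) =
      (u : ℂ) ^ (-s) - ((Int.fract u : ℝ) : ℂ) * (u : ℂ) ^ (-(s + 1)) := by
  have hu' : (u : ℂ) ≠ 0 := Complex.ofReal_ne_zero.mpr hu.ne'
  have h_floor : (⌊u⌋₊ : ℂ) = u - ((Int.fract u : ℝ) : ℂ) := by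
    rw [← Complex.ofReal_natCast, natCast_floor_eq_intCast_floor hu.le, ← Int.self_sub_fract,
      Complex.ofReal_sub]
  have h_cpow : (u : ℂ) ^ (-s) = u * (u : ℂ) ^ (-(s + 1)) := by
    rw [show -s = 1 + -(s + 1) by ring, Complex.cpow_add _ _ hu', Complex.cpow_one]
  rw [h_floor, h_cpow, sub_mul]

lemma riemannZeta_eq_sub_mul_integral_fract {s : ℂ} (hs : 1 < s.re) :
    riemannZeta s = s / (s - 1) -
      s * ∫ u in Set.Ioi (1 : ℝ), ((Int.fract u : ℝ) : ℂ) * (u : ℂ) ^ (-(s + 1)) := by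
  have h_integral_cpow : ∫ u in Set.Ioi (1 : ℝ), (u : ℂ) ^ (-s) = 1 / (s - 1) := by
    rw [integral_Ioi_cpow_of_lt (by simpa using hs) one_pos, Complex.ofReal_one,
      Complex.one_cpow, show -s + 1 = -(s - 1) by ring, neg_div_neg_eq]
  have h_re : (-(s + 1)).re < -1 := by
    rw [Complex.neg_re, Complex.add_re, Complex.one_re]
    linarith
  rw [riemannZeta_eq_mul_integral_floor hs,
    setIntegral_congr_fun measurableSet_Ioi fun u hu ↦
      natFloor_mul_cpow_eq (one_pos.trans hu) s,
    integral_sub (integrableOn_Ioi_cpow_of_lt (by simpa using hs) one_pos)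
      (integrableOn_Ioi_fract_mul_cpow h_re one_pos), h_integral_cpow]
  ring

/-- The measure `{u} u⁻² du` on `(1, ∞)`, against which `u ^ z` integrates to
`∫₁^∞ {u} u ^ (z - 2) du`. -/
noncomputable def fractMeasure : Measure ℝ :=
  (volume.restrict (Set.Ioi 1)).withDensity fun u ↦ ENNReal.ofReal (Int.fract u / u ^ 2)

section fractMeasure

variable {E : Type*} [NormedAddCommGroup E] [NormedSpace ℝ E]

lemma measurable_ofReal_fract_div_sq :
    Measurable fun u : ℝ ↦ ENNReal.ofReal (Int.fract u / u ^ 2) :=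
  (measurable_fract.div (measurable_id.pow_const 2)).ennreal_ofReal

lemma toReal_ofReal_fract_div_sq (u : ℝ) :
    (ENNReal.ofReal (Int.fract u / u ^ 2)).toReal = Int.fract u / u ^ 2 :=
  ENNReal.toReal_ofReal (div_nonneg (Int.fract_nonneg u) (sq_nonneg u))

lemma integrable_fractMeasure_iff {g : ℝ → E} :
    Integrable g fractMeasure ↔
      IntegrableOn (fun u ↦ (Int.fract u / u ^ 2) • g u) (Set.Ioi 1) := by
  rw [fractMeasure, integrable_withDensity_iff_integrable_smul' measurable_ofReal_fract_div_sq
    (.of_forall fun _ ↦ ENNReal.ofReal_lt_top)]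
  simp only [toReal_ofReal_fract_div_sq, IntegrableOn]

lemma integral_fractMeasure (g : ℝ → E) :
    ∫ u, g u ∂fractMeasure = ∫ u in Set.Ioi 1, (Int.fract u / u ^ 2) • g u := by
  rw [fractMeasure, integral_withDensity_eq_integral_toReal_smul measurable_ofReal_fract_div_sq
    (.of_forall fun _ ↦ ENNReal.ofReal_lt_top)]
  simp only [toReal_ofReal_fract_div_sq]

end fractMeasure

lemma fract_div_sq_smul_cexp_mul_log {u : ℝ} (hu : 0 < u) (z : ℂ) :
    (Int.fract u / u ^ 2) • Complex.exp (z * (log u : ℝ)) =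
      ((Int.fract u : ℝ) : ℂ) * (u : ℂ) ^ (z - 2) := by
  have hu' : (u : ℂ) ≠ 0 := Complex.ofReal_ne_zero.mpr hu.ne'
  rw [Complex.cpow_sub _ _ hu', Complex.cpow_ofNat, Complex.cpow_def_of_ne_zero hu',
    Complex.ofReal_log hu.le, Complex.real_smul, mul_comm z]
  push_cast
  ring

lemma complexMGF_log_fractMeasure (z : ℂ) :
    complexMGF log fractMeasure z =
      ∫ u in Set.Ioi (1 : ℝ), ((Int.fract u : ℝ) : ℂ) * (u : ℂ) ^ (z - 2) := by
  rw [complexMGF, integral_fractMeasure]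
  exact setIntegral_congr_fun measurableSet_Ioi fun u hu ↦
    fract_div_sq_smul_cexp_mul_log (one_pos.trans hu) z

lemma integrableOn_Ioi_fract_mul_cpow_sub_two {z : ℂ} (hz : z.re < 1) :
    IntegrableOn (fun u : ℝ ↦ ((Int.fract u : ℝ) : ℂ) * (u : ℂ) ^ (z - 2)) (Set.Ioi 1) := by
  refine integrableOn_Ioi_fract_mul_cpow ?_ one_pos
  rw [Complex.sub_re, Complex.re_ofNat]
  linarith

lemma Iio_one_subset_integrableExpSet_log_fractMeasure :
    Set.Iio 1 ⊆ integrableExpSet log fractMeasure := by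
  intro t (ht : t < 1)
  have h_complex : Integrable (fun u ↦ Complex.exp (t * (log u : ℝ))) fractMeasure := by
    rw [integrable_fractMeasure_iff]
    exact (integrableOn_Ioi_fract_mul_cpow_sub_two (Complex.ofReal_re t ▸ ht)).congr_fun
      (fun u hu ↦ (fract_div_sq_smul_cexp_mul_log (one_pos.trans hu) t).symm) measurableSet_Ioi
  simpa [integrableExpSet, Complex.norm_exp] using h_complex.norm

lemma analyticOnNhd_complexMGF_log_fractMeasure :
    AnalyticOnNhd ℂ (complexMGF log fractMeasure) {z | z.re < 1} :=
  analyticOnNhd_complexMGF.mono fun _ hz ↦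
    interior_maximal Iio_one_subset_integrableExpSet_log_fractMeasure isOpen_Iio hz

lemma one_sub_mul_complexMGF_log_fractMeasure_of_re_neg {z : ℂ} (hz : z.re < 0) :
    (1 - z) * complexMGF log fractMeasure z = 1 - riemannZeta₀ (1 - z) := by
  have hz₀ : z ≠ 0 := by
    rintro rfl
    simp at hz
  have h_re : 1 < (1 - z).re := by
    rw [Complex.sub_re, Complex.one_re]
    linarith
  have h_zeta := riemannZeta_eq_sub_mul_integral_fract h_re
  rw [riemannZeta_eq_inv_sub_add (by simpa using hz₀), show -(1 - z + 1) = z - 2 by ring,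
    ← complexMGF_log_fractMeasure, show 1 - z - 1 = -z by ring] at h_zeta
  have h_pole : (1 - z) / (-z) = (-z)⁻¹ + 1 := by
    field_simp
    ring
  linear_combination h_zeta + h_pole

lemma one_sub_mul_complexMGF_log_fractMeasure {z : ℂ} (hz : z.re < 1) :
    (1 - z) * complexMGF log fractMeasure z = 1 - riemannZeta₀ (1 - z) := by
  have h_lhs : AnalyticOnNhd ℂ (fun w ↦ (1 - w) * complexMGF log fractMeasure w)
      {w : ℂ | w.re < 1} :=
    fun w hw ↦ (by fun_prop : AnalyticAt ℂ (fun w : ℂ ↦ 1 - w) w).mul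
      (analyticOnNhd_complexMGF_log_fractMeasure w hw)
  have h_rhs : AnalyticOnNhd ℂ (fun w : ℂ ↦ 1 - riemannZeta₀ (1 - w)) {w : ℂ | w.re < 1} :=
    fun w _ ↦ Differentiable.analyticAt
      ((differentiable_riemannZeta₀.comp (differentiable_id.const_sub 1)).const_sub 1) w
  have h_left : ∀ᶠ w in nhds (-1 : ℂ),
      (1 - w) * complexMGF log fractMeasure w = 1 - riemannZeta₀ (1 - w) :=
    ((isOpen_Iio.preimage Complex.continuous_re).eventually_mem (by simp)).mono fun _ hw ↦
      one_sub_mul_complexMGF_log_fractMeasure_of_re_neg hw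
  exact h_lhs.eqOn_of_preconnected_of_eventuallyEq h_rhs
    (convex_halfSpace_re_lt 1).isPreconnected (by simp) h_left hz

lemma integral_fract_mul_cpow_eq_riemannZeta {z : ℂ} (hz : z.re < 1) (hz₀ : z ≠ 0) :
    ∫ u in Set.Ioi (1 : ℝ), ((Int.fract u : ℝ) : ℂ) * (u : ℂ) ^ (z - 2) =
      (1 - 1 / z - riemannZeta (1 - z)) / (1 - z) := by
  have hz₁ : 1 - z ≠ 0 := by
    rw [sub_ne_zero]
    rintro rfl
    simp at hz
  rw [eq_div_iff hz₁, mul_comm, ← complexMGF_log_fractMeasure,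
    one_sub_mul_complexMGF_log_fractMeasure hz, riemannZeta_eq_inv_sub_add (by simpa using hz₀),
    show 1 - z - 1 = -z by ring]
  ring

lemma cconst_eq_moment_log_fractMeasure (n : ℕ) :
    cconst n = 1 / (n.factorial : ℝ) * ∫ u, log u ^ n ∂fractMeasure := by
  simp only [cconst, integral_fractMeasure, smul_eq_mul, div_mul_eq_mul_div]

lemma hasSum_cconst_mul_pow {z : ℂ} (hz : ‖z‖ < 1) :
    HasSum (fun n : ℕ ↦ (cconst n : ℂ) * z ^ n)
      (∫ u in Set.Ioi (1 : ℝ), ((Int.fract u : ℝ) : ℂ) * (u : ℂ) ^ (z - 2)) := by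
  simp only [cconst_eq_moment_log_fractMeasure, ← complexMGF_log_fractMeasure]
  exact hasSum_complexMGF_of_Ioo_subset_integrableExpSet
    (Set.Ioo_subset_Iio_self.trans Iio_one_subset_integrableExpSet_log_fractMeasure) hz

theorem fract_integral_zeta :
    (∀ z : ℂ, z.re < 1 → z ≠ 0 →
        MeasureTheory.IntegrableOn (fun u : ℝ => ((Int.fract u : ℝ) : ℂ) * (u : ℂ) ^ (z - 2))
          (Set.Ioi (1:ℝ)) ∧
        (∫ u in Set.Ioi (1:ℝ), ((Int.fract u : ℝ) : ℂ) * (u : ℂ) ^ (z - 2)) =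
          (1 - 1 / z - riemannZeta (1 - z)) / (1 - z)) ∧
    (∀ z : ℂ, ‖z‖ < 1 → z ≠ 0 →
        HasSum (fun n : ℕ => (cconst n : ℂ) * z ^ n)
          (∫ u in Set.Ioi (1:ℝ), ((Int.fract u : ℝ) : ℂ) * (u : ℂ) ^ (z - 2))) := by
  exact ⟨fun z hz hz₀ ↦ ⟨integrableOn_Ioi_fract_mul_cpow_sub_two hz,
    integral_fract_mul_cpow_eq_riemannZeta hz hz₀⟩, fun z hz _ ↦ hasSum_cconst_mul_pow hz⟩
end

section
/- For every real x ≥ 2 and every integer B with 1 < B ≤ x, Σ_{x/B < p ≤ x} ⌊x/p⌋ = Σ_{n=1}^{B-1} (π(x/n) − π(x/B)), where the first sum is over primes p with x/B < p ≤ x and π(t) denotes the number of primes ≤ t. -/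
open Filter Real
open scoped Classical

/-- The prime counting function: the number of primes `p ≤ t`. -/
noncomputable def primePi (t : ℝ) : ℕ := ((Finset.range (⌊t⌋₊ + 1)).filter Nat.Prime).card

/-!
Give each integer `k` a weight `f k`, equal to the indicator of the primes in the application.
The factor `⌊x / k⌋` counts the integers `n ≥ 1` with `n * k ≤ x`, so the left-hand side is the
weighted count of the lattice points `(k, n)` under the hyperbola `n * k ≤ x` with `x / B < k`.
Such points automatically satisfy `n < B`. Counting them by `n` instead, the range of `k` is
`x / B < k ≤ x / n`, which yields a difference of two summatory functions of `f`.
-/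

theorem mem_Ioc_div_and_mem_Icc_div_iff {N B k n : ℕ} (hB : 0 < B) :
    k ∈ Finset.Ioc (N / B) N ∧ n ∈ Finset.Icc 1 (N / k) ↔
      k ∈ Finset.Ioc (N / B) (N / n) ∧ n ∈ Finset.Ico 1 B := by
  simp only [Finset.mem_Ioc, Finset.mem_Icc, Finset.mem_Ico]
  constructor
  · rintro ⟨⟨hBk, -⟩, hn, hnk⟩
    have hk : 0 < k := Nat.zero_lt_of_lt hBk
    have hmul : n * k ≤ N := (Nat.le_div_iff_mul_le hk).mp hnk
    have hlt : N < k * B := (Nat.div_lt_iff_lt_mul hB).mp hBk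
    have hnB : n < B := lt_of_mul_lt_mul_left (by linarith : k * n < k * B) hk.le
    exact ⟨⟨hBk, (Nat.le_div_iff_mul_le hn).mpr (by linarith)⟩, hn, hnB⟩
  · rintro ⟨⟨hBk, hkn⟩, hn, -⟩
    have hk : 0 < k := Nat.zero_lt_of_lt hBk
    have hmul : k * n ≤ N := (Nat.le_div_iff_mul_le hn).mp hkn
    exact ⟨⟨hBk, hkn.trans (Nat.div_le_self N n)⟩, hn,
      (Nat.le_div_iff_mul_le hk).mpr (by linarith)⟩

theorem sum_Ioc_div_nsmul_eq_sum_Ico_sum_Ioc_div {M : Type*} [AddCommMonoid M] (f : ℕ → M)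
    (N : ℕ) {B : ℕ} (hB : 0 < B) :
    ∑ k ∈ Finset.Ioc (N / B) N, (N / k) • f k =
      ∑ n ∈ Finset.Ico 1 B, ∑ k ∈ Finset.Ioc (N / B) (N / n), f k := by
  calc ∑ k ∈ Finset.Ioc (N / B) N, (N / k) • f k
      = ∑ k ∈ Finset.Ioc (N / B) N, ∑ _n ∈ Finset.Icc 1 (N / k), f k := by
        simp only [Finset.sum_const, Nat.card_Icc, Nat.add_sub_cancel]
    _ = ∑ n ∈ Finset.Ico 1 B, ∑ k ∈ Finset.Ioc (N / B) (N / n), f k :=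
        Finset.sum_comm' fun _ _ => mem_Ioc_div_and_mem_Icc_div_iff hB

theorem sum_Ioc_eq_sum_range_sub {M : Type*} [AddCommGroup M] (f : ℕ → M) {a b : ℕ}
    (hab : a ≤ b) :
    ∑ k ∈ Finset.Ioc a b, f k =
      ∑ k ∈ Finset.range (b + 1), f k - ∑ k ∈ Finset.range (a + 1), f k := by
  rw [← Finset.sum_Ico_eq_sub f (Nat.add_le_add_right hab 1), Finset.Ico_add_one_add_one_eq_Ioc]

theorem filter_lt_range_succ_eq_Ioc_floor {R : Type*} [Semiring R] [LinearOrder R]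
    [FloorSemiring R] {y : R} (hy : 0 ≤ y) (N : ℕ) :
    (Finset.range (N + 1)).filter (fun k : ℕ => y < k) = Finset.Ioc ⌊y⌋₊ N := by
  ext k
  simp only [Finset.mem_filter, Finset.mem_range, Finset.mem_Ioc, Nat.floor_lt hy,
    Nat.lt_succ_iff, and_comm]

section FloorField

variable {K : Type*} [Field K] [LinearOrder K] [IsStrictOrderedRing K] [FloorRing K] {x : K}

theorem floor_div_natCast_eq_natCast_floor_div (hx : 0 ≤ x) (k : ℕ) :
    ⌊x / k⌋ = ((⌊x⌋₊ / k : ℕ) : ℤ) := by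
  rw [← Nat.floor_div_natCast, Int.natCast_floor_eq_floor (by positivity)]

theorem hyperbola_method_general {M : Type*} [AddCommGroup M] (f : ℕ → M) (hx : 0 ≤ x) {B : ℕ}
    (hB : 0 < B) :
    ∑ k ∈ (Finset.range (⌊x⌋₊ + 1)).filter (fun k : ℕ => x / B < k), ⌊x / k⌋ • f k =
      ∑ n ∈ Finset.Icc 1 (B - 1),
        (∑ k ∈ Finset.range (⌊x / n⌋₊ + 1), f k - ∑ k ∈ Finset.range (⌊x / B⌋₊ + 1), f k) := by
  simp only [filter_lt_range_succ_eq_Ioc_floor (div_nonneg hx B.cast_nonneg),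
    floor_div_natCast_eq_natCast_floor_div hx, natCast_zsmul, Nat.floor_div_natCast]
  rw [sum_Ioc_div_nsmul_eq_sum_Ico_sum_Ioc_div f ⌊x⌋₊ hB,
    Finset.Icc_sub_one_right_eq_Ico_of_not_isMin (by simpa using hB.ne')]
  refine Finset.sum_congr rfl fun n hn => sum_Ioc_eq_sum_range_sub f ?_
  obtain ⟨hn_pos, hnB⟩ := Finset.mem_Ico.mp hn
  exact Nat.div_le_div_left hnB.le hn_pos

end FloorField

theorem hyperbola_method :
    ∀ x : ℝ, 2 ≤ x → ∀ B : ℕ, 1 < B → (B : ℝ) ≤ x →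
      (∑ p ∈ (Finset.range (⌊x⌋₊ + 1)).filter (fun p : ℕ => p.Prime ∧ x / B < (p : ℝ)),
          (⌊x / p⌋ : ℤ)) =
        ∑ n ∈ Finset.Icc 1 (B - 1), ((primePi (x / n) : ℤ) - (primePi (x / B) : ℤ)) := by
  intro x hx B hB _
  simpa [primePi, Finset.sum_filter, ← ite_and, and_comm] using
    hyperbola_method_general (fun p => if p.Prime then (1 : ℤ) else 0)
      (zero_le_two.trans hx) (zero_lt_one.trans hB)
end
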